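/- arXiv:1502.03365 — 2 statements merged into one kernel-verified Lean document; each statement's English description precedes it below -/
import Mathlib

section
/- Consider the labeled stochastic block model 𝒢(n, a/n, b/n, μ, ν) with true type assignment σ and a weight function w : 𝓛 → [−1,1]. Set α = (1/2)·Σ_ℓ w(ℓ)·(a·μ(ℓ) + b·ν(ℓ)) and β = (1/2)·Σ_ℓ w(ℓ)·(a·μ(ℓ) − b·ν(ℓ)). Let G' be obtained from G by removing all edges incident to vertices of degree larger than (3/2)·(a+b)/2, let W' be the weighted adjacency matrix of G', let D' = W' − (α/n)·J where J is the all-one matrix, and let x̂ be a maximizer of |xᵀ D' x| over unit vectors x ∈ ℝ^n. There exist constants C₀ and C (not depending on a, b, μ, ν) such that: if a > b > C₀ and β² > C·(a+b), then asymptotically almost surely Q(σ, sign(x̂)) > 0, where sign(x̂) ∈ {±1}^n takes the componentwise sign of x̂. -/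
open Finset Filter Real

namespace LSBM

/-- Ordered pairs `u < v` of vertices. -/
abbrev Pairs (n : ℕ) := {p : Fin n × Fin n // p.1 < p.2}

/-- A labeled-graph configuration: each pair `u < v` carries `none` (no edge)
or `some ℓ` (an edge with label `ℓ`). -/
abbrev EdgeConf (n : ℕ) (L : Type*) := Pairs n → Option L

variable {L : Type*}

/-- The label (if any) on the edge between `u` and `v`. -/
def getLabel {n : ℕ} (E : EdgeConf n L) (u v : Fin n) : Option L :=
  if h : u < v then E ⟨(u, v), h⟩ else if h' : v < u then E ⟨(v, u), h'⟩ else none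

/-- Per-pair mass under the labeled stochastic block model. -/
noncomputable def sbmPairMass (n : ℕ) (a b : ℝ) (μ ν : L → ℝ) (same : Bool) : Option L → ℝ
  | none => if same then 1 - a / n else 1 - b / n
  | some ℓ => if same then (a / n) * μ ℓ else (b / n) * ν ℓ

/-- Joint mass of a (type assignment, labeled graph) outcome under the labeled SBM. -/
noncomputable def sbmMass (n : ℕ) (a b : ℝ) (μ ν : L → ℝ)
    (x : (Fin n → Bool) × EdgeConf n L) : ℝ :=
  (1 / 2 : ℝ) ^ n *
    ∏ p : Pairs n, sbmPairMass n a b μ ν (x.1 p.1.1 == x.1 p.1.2) (x.2 p)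

/-- Probability of an event under the labeled SBM (joint in types and graph). -/
noncomputable def sbmProb [Fintype L] (n : ℕ) (a b : ℝ) (μ ν : L → ℝ)
    (A : Set ((Fin n → Bool) × EdgeConf n L)) : ℝ :=
  ∑ x : (Fin n → Bool) × EdgeConf n L, A.indicator (sbmMass n a b μ ν) x

/-- Probability of a labeled-graph event under the labeled SBM (marginal over types). -/
noncomputable def sbmGraphProb [Fintype L] (n : ℕ) (a b : ℝ) (μ ν : L → ℝ)
    (A : Set (EdgeConf n L)) : ℝ :=
  sbmProb n a b μ ν {x | x.2 ∈ A}

/-- Conditional (given the type assignment `σ`) probability of a labeled-graph event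
under the labeled SBM. -/
noncomputable def sbmCondProb [Fintype L] (n : ℕ) (a b : ℝ) (μ ν : L → ℝ)
    (σ : Fin n → Bool) (A : Set (EdgeConf n L)) : ℝ :=
  ∑ E : EdgeConf n L, A.indicator
    (fun E' => ∏ p : Pairs n, sbmPairMass n a b μ ν (σ p.1.1 == σ p.1.2) (E' p)) E

/-- Conditional (given `σ`) expectation of a function of the labeled graph. -/
noncomputable def sbmCondExp [Fintype L] (n : ℕ) (a b : ℝ) (μ ν : L → ℝ)
    (σ : Fin n → Bool) (f : EdgeConf n L → ℝ) : ℝ :=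
  ∑ E : EdgeConf n L,
    (∏ p : Pairs n, sbmPairMass n a b μ ν (σ p.1.1 == σ p.1.2) (E p)) * f E

/-- Per-pair mass under the labeled Erdős–Rényi model. -/
noncomputable def erPairMass (n : ℕ) (a b : ℝ) (μ ν : L → ℝ) : Option L → ℝ
  | none => 1 - (a + b) / (2 * n)
  | some ℓ => ((a + b) / (2 * n)) * ((a * μ ℓ + b * ν ℓ) / (a + b))

/-- Mass of a labeled graph under the labeled Erdős–Rényi model. -/
noncomputable def erMass [Fintype L] (n : ℕ) (a b : ℝ) (μ ν : L → ℝ) (E : EdgeConf n L) : ℝ :=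
  ∏ p : Pairs n, erPairMass n a b μ ν (E p)

/-- Probability of a labeled-graph event under the labeled Erdős–Rényi model. -/
noncomputable def erProb [Fintype L] (n : ℕ) (a b : ℝ) (μ ν : L → ℝ)
    (A : Set (EdgeConf n L)) : ℝ :=
  ∑ E : EdgeConf n L, A.indicator (erMass n a b μ ν) E

/-- Expectation of a function of the labeled graph under the labeled Erdős–Rényi model. -/
noncomputable def erExp [Fintype L] (n : ℕ) (a b : ℝ) (μ ν : L → ℝ)
    (f : EdgeConf n L → ℝ) : ℝ :=
  ∑ E : EdgeConf n L, erMass n a b μ ν E * f E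

/-- `μ` is a probability distribution on the (finite) label set. -/
def IsProbVec [Fintype L] (μ : L → ℝ) : Prop := (∀ ℓ, 0 ≤ μ ℓ) ∧ ∑ ℓ, μ ℓ = 1

/-- The reconstruction-threshold parameter `τ`. -/
noncomputable def tau [Fintype L] (a b : ℝ) (μ ν : L → ℝ) : ℝ :=
  ∑ ℓ, (a * μ ℓ - b * ν ℓ) ^ 2 / (2 * (a * μ ℓ + b * ν ℓ))

/-- The weighted adjacency matrix `W` with `W u v = A u v * w (L u v)`. -/
def Wmat {n : ℕ} (w : L → ℝ) (E : EdgeConf n L) : Matrix (Fin n) (Fin n) ℝ :=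
  fun u v => match getLabel E u v with
    | none => 0
    | some ℓ => w ℓ

/-- The ±1 vector associated with a Boolean type assignment (`true ↦ +1`). -/
def signVec {n : ℕ} (σ : Fin n → Bool) : Fin n → ℝ := fun u => if σ u then 1 else -1

/-- `x` is a vector with entries in `{±1}`. -/
def IsSignVec {n : ℕ} (x : Fin n → ℝ) : Prop := ∀ u, x u = 1 ∨ x u = -1

/-- Componentwise sign of a real vector. -/
noncomputable def signR {n : ℕ} (x : Fin n → ℝ) : Fin n → ℝ :=
  fun u => if 0 ≤ x u then 1 else -1

open Classical in
/-- Hamming distance between two vectors. -/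
noncomputable def hamming {n : ℕ} (x y : Fin n → ℝ) : ℕ :=
  (univ.filter fun u => x u ≠ y u).card

/-- The overlap `Q(x, y) = 1/2 - (1/n) min(d(x,y), d(x,-y))`. -/
noncomputable def overlap (n : ℕ) (x y : Fin n → ℝ) : ℝ :=
  1 / 2 - (1 / n) * min (hamming x y : ℝ) (hamming x (-y) : ℝ)

open Classical in
/-- The weight of the cut induced by a ±1 assignment `σ`:
`∑_{(u,v) : u < v, σ_u ≠ σ_v} W_{uv}`. -/
noncomputable def cutWeight {n : ℕ} (w : L → ℝ) (E : EdgeConf n L) (σ : Fin n → ℝ) : ℝ :=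
  ∑ p : Pairs n, if σ p.1.1 ≠ σ p.1.2 then Wmat w E p.1.1 p.1.2 else 0

/-- The quadratic form `xᵀ M x`. -/
def quadForm {n : ℕ} (M : Matrix (Fin n) (Fin n) ℝ) (x : Fin n → ℝ) : ℝ :=
  ∑ u, ∑ v, x u * M u v * x v

/-- The entrywise inner product `⟨A, B⟩ = ∑_{u,v} A u v * B u v`. -/
def mInner {n : ℕ} (A B : Matrix (Fin n) (Fin n) ℝ) : ℝ :=
  ∑ u, ∑ v, A u v * B u v

/-- The degree of a vertex. -/
def degree {n : ℕ} (E : EdgeConf n L) (u : Fin n) : ℕ :=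
  (univ.filter fun v => (getLabel E u v).isSome).card

open Classical in
/-- The weighted adjacency matrix of the graph obtained by removing all edges incident
to vertices of degree larger than `(3/2)·(a+b)/2`. -/
noncomputable def prunedW {n : ℕ} (a b : ℝ) (w : L → ℝ) (E : EdgeConf n L) :
    Matrix (Fin n) (Fin n) ℝ :=
  fun u v =>
    if (degree E u : ℝ) ≤ (3 / 2) * ((a + b) / 2) ∧
       (degree E v : ℝ) ≤ (3 / 2) * ((a + b) / 2)
    then Wmat w E u v else 0

/-- The conditional (given `σ`) entrywise expectation `E[W | σ]` of the weighted
adjacency matrix. -/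
noncomputable def condEW {n : ℕ} [Fintype L] (a b : ℝ) (μ ν w : L → ℝ)
    (σ : Fin n → Bool) : Matrix (Fin n) (Fin n) ℝ :=
  fun u v =>
    if u = v then 0
    else if σ u = σ v then (a / n) * ∑ ℓ, μ ℓ * w ℓ
    else (b / n) * ∑ ℓ, ν ℓ * w ℓ

/-- The matrix `D' = W' - (α/n) J` used in the spectral method, where
`α = (1/2)·∑_ℓ w(ℓ)(aμ(ℓ)+bν(ℓ))` and `J` is the all-one matrix. -/
noncomputable def Dmat {n : ℕ} [Fintype L] (a b : ℝ) (μ ν w : L → ℝ)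
    (E : EdgeConf n L) : Matrix (Fin n) (Fin n) ℝ :=
  fun u v => prunedW a b w E u v - ((1 / 2) * ∑ ℓ, w ℓ * (a * μ ℓ + b * ν ℓ)) / n

/-- The spectral norm (ℓ²-operator norm) of a real square matrix. -/
noncomputable def specNorm {n : ℕ} (M : Matrix (Fin n) (Fin n) ℝ) : ℝ :=
  ‖Matrix.toEuclideanCLM (𝕜 := ℝ) M‖

/-- The number of `k`-cycles carrying the label sequence `ℓ`, in the canonical
orientation: starting from the minimal-index vertex of the cycle toward its
neighbor of smaller index. -/
def cycleCount [DecidableEq L] (n k : ℕ) (E : EdgeConf n L) (ℓ : Fin k → L) : ℕ :=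
  if hk : 0 < k then
    haveI : NeZero k := ⟨hk.ne'⟩
    (univ.filter fun c : Fin k → Fin n =>
      Function.Injective c ∧ (∀ i, c 0 ≤ c i) ∧
      c 1 < c ⟨k - 1, Nat.sub_lt hk one_pos⟩ ∧
      ∀ i : Fin k, getLabel E (c i) (c (i + 1)) = some (ℓ i)).card
  else 0

/-- The Poisson probability mass function. -/
noncomputable def poissonPMF (m : ℝ) (j : ℕ) : ℝ :=
  Real.exp (-m) * m ^ j / (Nat.factorial j)

/-- The mean cycle count `λ([ℓ]_k)` under the labeled Erdős–Rényi model. -/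
noncomputable def lamER [Fintype L] (a b : ℝ) (μ ν : L → ℝ) {k : ℕ} (ℓ : Fin k → L) : ℝ :=
  (1 / ((2 : ℝ) ^ (k + 1) * k)) * ∏ i, (a * μ (ℓ i) + b * ν (ℓ i))

/-- The mean cycle count `ξ([ℓ]_k)` under the labeled SBM. -/
noncomputable def xiSBM [Fintype L] (a b : ℝ) (μ ν : L → ℝ) {k : ℕ} (ℓ : Fin k → L) : ℝ :=
  (1 / ((2 : ℝ) ^ (k + 1) * k)) *
    (∏ i, (a * μ (ℓ i) + b * ν (ℓ i)) + ∏ i, (a * μ (ℓ i) - b * ν (ℓ i)))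

/-- The per-pair likelihood-ratio factor `W_{uv}(G, L, σ)` (SBM versus labeled
Erdős–Rényi), as a function of the pair status (`same` type or not) and the
edge/label information on the pair. -/
noncomputable def likPair (n : ℕ) (a b : ℝ) (μ ν : L → ℝ) (same : Bool) :
    Option L → ℝ
  | some ℓ =>
      if same then 2 * a * μ ℓ / (a * μ ℓ + b * ν ℓ)
      else 2 * b * ν ℓ / (a * μ ℓ + b * ν ℓ)
  | none =>
      if same then (1 - a / n) / (1 - (a + b) / (2 * n))
      else (1 - b / n) / (1 - (a + b) / (2 * n))

/-- The likelihood ratio `Y_n = ℙ_n / ℙ'_n` of the labeled SBM with respect to the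
labeled Erdős–Rényi model. -/
noncomputable def Ylik [Fintype L] (n : ℕ) (a b : ℝ) (μ ν : L → ℝ)
    (E : EdgeConf n L) : ℝ :=
  (1 / 2 : ℝ) ^ n * ∑ σ : Fin n → Bool,
    ∏ p : Pairs n, likPair n a b μ ν (σ p.1.1 == σ p.1.2) (E p)

/-!
After pruning, `D' = (β / n) σ σᵀ + R`, and the whole point is that `|xᵀ R x| ≤ K √d` on the unit
ball, where `d` is the mean degree. Following Kahn–Szemerédi and Feige–Ofek, a lattice net reduces
this to vectors with coordinates in `ℤ / (8 √n)`. Pairs with `|x_u x_v| ≤ √d / n` are handled by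
Bernstein's inequality and a union bound over the net; the remaining pairs are controlled by the
discrepancy property of sparse graphs with bounded degrees. Comparing a maximizer `x̂` with the
competitor `σ / √n` then forces `|⟨σ, x̂⟩|` to be so close to `√n` that most signs of `x̂` agree
with `σ` up to a global flip.
-/

section Concentration

open MeasureTheory ProbabilityTheory

variable {Ω ι : Type*} {mΩ : MeasurableSpace Ω} {P : Measure Ω}

lemma exp_le_one_add_add_sq {x : ℝ} (hx : |x| ≤ 1) : exp x ≤ 1 + x + x ^ 2 := by
  linarith [(abs_le.1 (abs_exp_sub_one_sub_id_le hx)).2]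

lemma exp_mul_le_one_add_mul (θ : ℝ) {x : ℝ} (hx : x ∈ Set.Icc 0 1) :
    exp (θ * x) ≤ 1 + (exp θ - 1) * x := by
  have h := convexOn_exp.2 (Set.mem_univ 0) (Set.mem_univ θ) (sub_nonneg.2 hx.2) hx.1
    (sub_add_cancel 1 x)
  simp only [smul_eq_mul, mul_zero, zero_add, exp_zero, mul_one] at h
  rw [mul_comm θ]
  linarith

variable [IsProbabilityMeasure P]

lemma mgf_sub_integral_le_exp {X : Ω → ℝ} (hX : AEMeasurable X P) (hbd : ∀ ω, |X ω| ≤ 1)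
    {v t : ℝ} (hv : ∫ ω, X ω ^ 2 ∂P ≤ v) (ht : |t| ≤ 1 / 2) :
    mgf (fun ω => X ω - ∫ ω', X ω' ∂P) P t ≤ exp (t ^ 2 * v) := by
  set m := ∫ ω, X ω ∂P
  have hint : Integrable X P := .of_bound hX.aestronglyMeasurable 1 (.of_forall hbd)
  have hint2 : Integrable (fun ω => X ω ^ 2) P :=
    .of_bound (hX.pow_const 2).aestronglyMeasurable 1
      (.of_forall fun ω => by simpa [abs_le_one_iff_mul_self_le_one, sq] using hbd ω)
  have hm : |m| ≤ 1 := (abs_integral_le_integral_abs).trans <| by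
    simpa using integral_mono hint.abs (integrable_const (1 : ℝ)) hbd
  have hquad (ω : Ω) : exp (t * (X ω - m)) ≤
      (1 - t * m + t ^ 2 * m ^ 2) + (t - 2 * t ^ 2 * m) * X ω + t ^ 2 * X ω ^ 2 := by
    have h2 : |X ω - m| ≤ 2 := (abs_sub _ _).trans (by linarith [hbd ω])
    have h1 : |t * (X ω - m)| ≤ 1 := by
      rw [abs_mul]; nlinarith [abs_nonneg t, abs_nonneg (X ω - m)]
    exact (exp_le_one_add_add_sq h1).trans_eq (by ring)
  calc mgf (fun ω => X ω - m) P t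
      ≤ ∫ ω, ((1 - t * m + t ^ 2 * m ^ 2) + (t - 2 * t ^ 2 * m) * X ω + t ^ 2 * X ω ^ 2) ∂P :=
        integral_mono_of_nonneg (.of_forall fun ω => (exp_pos _).le)
          (((integrable_const _).add (hint.const_mul _)).add (hint2.const_mul _))
          (.of_forall hquad)
    _ = 1 - t ^ 2 * m ^ 2 + t ^ 2 * ∫ ω, X ω ^ 2 ∂P := by
        rw [integral_add (by fun_prop) (by fun_prop), integral_add (by fun_prop) (by fun_prop),
          integral_const_mul, integral_const_mul, integral_const, probReal_univ, one_smul]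
        ring
    _ ≤ t ^ 2 * v + 1 := by
        nlinarith [mul_le_mul_of_nonneg_left hv (sq_nonneg t), sq_nonneg (t * m)]
    _ ≤ exp (t ^ 2 * v) := add_one_le_exp _

variable [Fintype ι]

lemma measureReal_le_sum_centered_le_exp {X : ι → Ω → ℝ} (hind : iIndepFun X P)
    (hX : ∀ i, Measurable (X i)) (hbd : ∀ i ω, |X i ω| ≤ 1) {v : ℝ}
    (hv : ∀ i, ∫ ω, X i ω ^ 2 ∂P ≤ v) {c : ι → ℝ} {θ : ℝ} (hθ : 0 ≤ θ)
    (hc : ∀ i, |θ * c i| ≤ 1 / 2) (t : ℝ) :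
    P.real {ω | t ≤ ∑ i, c i * (X i ω - ∫ ω', X i ω' ∂P)} ≤
      exp (-(θ * t) + θ ^ 2 * v * ∑ i, c i ^ 2) := by
  set Y : ι → Ω → ℝ := fun i ω => c i * (X i ω - ∫ ω', X i ω' ∂P)
  have hY (i : ι) : Measurable (Y i) := ((hX i).sub_const _).const_mul _
  have hYind : iIndepFun Y P :=
    hind.comp (fun i x => c i * (x - ∫ ω', X i ω' ∂P)) fun i => by fun_prop
  have hint (i : ι) : Integrable (fun ω => exp (θ * Y i ω)) P := by
    refine .of_bound (by fun_prop) (exp (1 / 2 * (1 + |∫ ω', X i ω' ∂P|))) (.of_forall fun ω => ?_)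
    rw [norm_of_nonneg (exp_pos _).le, exp_le_exp, ← mul_assoc]
    refine (le_abs_self _).trans ?_
    rw [abs_mul]
    exact mul_le_mul (hc i) ((abs_sub _ _).trans (by linarith [hbd i ω])) (abs_nonneg _) (by simp)
  have hmarkov := measure_ge_le_exp_mul_mgf (X := ∑ i, Y i) (μ := P) t hθ
    (hYind.integrable_exp_mul_sum hY fun i _ => hint i)
  rw [hYind.mgf_sum hY] at hmarkov
  simp only [Finset.sum_apply] at hmarkov
  refine hmarkov.trans ?_
  rw [exp_add, neg_mul, mul_sum, exp_sum]
  gcongr with i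
  · exact fun i _ => mgf_nonneg
  · rw [mgf_const_mul]
    refine (mgf_sub_integral_le_exp (hX i).aemeasurable (hbd i) (hv i)
      (mul_comm θ _ ▸ hc i)).trans_eq ?_
    ring_nf

lemma measureReal_lt_abs_sum_centered_le_exp {X : ι → Ω → ℝ} (hind : iIndepFun X P)
    (hX : ∀ i, Measurable (X i)) (hbd : ∀ i ω, |X i ω| ≤ 1) {v : ℝ}
    (hv : ∀ i, ∫ ω, X i ω ^ 2 ∂P ≤ v) {c : ι → ℝ} {θ : ℝ} (hθ : 0 ≤ θ)
    (hc : ∀ i, |θ * c i| ≤ 1 / 2) (t : ℝ) :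
    P.real {ω | t < |∑ i, c i * (X i ω - ∫ ω', X i ω' ∂P)|} ≤
      2 * exp (-(θ * t) + θ ^ 2 * v * ∑ i, c i ^ 2) := by
  have hupper := measureReal_le_sum_centered_le_exp hind hX hbd hv hθ hc t
  have hlower := measureReal_le_sum_centered_le_exp hind hX hbd hv hθ (c := fun i => -c i)
    (by simpa using hc) t
  simp only [neg_mul, sum_neg_distrib, neg_sq] at hlower
  refine (measureReal_mono fun ω (hω : t < _) => ?_).trans
    ((measureReal_union_le _ _).trans ((add_le_add hupper hlower).trans_eq (two_mul _).symm))
  exact (lt_abs.1 hω).imp le_of_lt le_of_lt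

lemma measureReal_le_sum_le_exp {X : ι → Ω → ℝ} (hind : iIndepFun X P)
    (hX : ∀ i, Measurable (X i)) (hbd : ∀ i ω, X i ω ∈ Set.Icc 0 1) {m : ℝ}
    (hm : ∑ i, ∫ ω, X i ω ∂P ≤ m) {θ : ℝ} (hθ : 0 ≤ θ) (t : ℝ) :
    P.real {ω | t ≤ ∑ i, X i ω} ≤ exp (-(θ * t) + (exp θ - 1) * m) := by
  have hintX (i : ι) : Integrable (X i) P :=
    .of_mem_Icc 0 1 (hX i).aemeasurable (.of_forall (hbd i))
  have hint (i : ι) : Integrable (fun ω => exp (θ * X i ω)) P :=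
    integrable_exp_mul_of_mem_Icc (hX i).aemeasurable (.of_forall (hbd i))
  have hmgf (i : ι) : mgf (X i) P θ ≤ exp ((exp θ - 1) * ∫ ω, X i ω ∂P) := by
    refine (integral_mono (hint i) ((integrable_const 1).add ((hintX i).const_mul _))
      fun ω => exp_mul_le_one_add_mul θ (hbd i ω)).trans ?_
    rw [integral_add' (integrable_const 1) ((hintX i).const_mul _), integral_const_mul,
      integral_const, probReal_univ, one_smul, add_comm]
    exact add_one_le_exp _
  have hmarkov := measure_ge_le_exp_mul_mgf (X := ∑ i, X i) (μ := P) t hθ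
    (hind.integrable_exp_mul_sum hX fun i _ => hint i)
  rw [hind.mgf_sum hX] at hmarkov
  simp only [Finset.sum_apply] at hmarkov
  calc P.real {ω | t ≤ ∑ i, X i ω}
      ≤ exp (-θ * t) * ∏ i, mgf (X i) P θ := hmarkov
    _ ≤ exp (-θ * t) * ∏ i, exp ((exp θ - 1) * ∫ ω, X i ω ∂P) := by
        gcongr with i
        · exact fun i _ => mgf_nonneg
        · exact hmgf i
    _ = exp (-(θ * t) + (exp θ - 1) * ∑ i, ∫ ω, X i ω ∂P) := by
        rw [← exp_sum, ← mul_sum, ← exp_add, neg_mul]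
    _ ≤ exp (-(θ * t) + (exp θ - 1) * m) := by
        have : 1 ≤ exp θ := one_le_exp hθ
        gcongr

end Concentration

section MassMeasure

open MeasureTheory

variable {Ω : Type*} [Fintype Ω] [MeasurableSpace Ω]

/-- The measure on a finite type whose point masses are given by `q`; negative values of `q` count
as `0`. -/
noncomputable def massMeasure (q : Ω → ℝ) : Measure Ω :=
  ∑ o, ENNReal.ofReal (q o) • Measure.dirac o

instance (q : Ω → ℝ) : IsFiniteMeasure (massMeasure q) :=
  have (o : Ω) : IsFiniteMeasure (ENNReal.ofReal (q o) • Measure.dirac o) :=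
    (Measure.dirac o).smul_finite ENNReal.ofReal_ne_top
  inferInstanceAs (IsFiniteMeasure (∑ o, ENNReal.ofReal (q o) • Measure.dirac o))

lemma isProbabilityMeasure_massMeasure {q : Ω → ℝ} (hq : ∀ o, 0 ≤ q o) (hsum : ∑ o, q o = 1) :
    IsProbabilityMeasure (massMeasure q) :=
  ⟨by simp [massMeasure, ← ENNReal.ofReal_sum_of_nonneg fun o _ => hq o, hsum]⟩

variable [MeasurableSingletonClass Ω]

lemma integral_massMeasure {q : Ω → ℝ} (hq : ∀ o, 0 ≤ q o) (f : Ω → ℝ) :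
    ∫ o, f o ∂massMeasure q = ∑ o, q o * f o := by
  rw [massMeasure, integral_finsetSum_measure fun o _ =>
    (integrable_dirac (by simp)).smul_measure ENNReal.ofReal_ne_top]
  simp [integral_smul_measure, hq]

lemma measureReal_pi_massMeasure {ι : Type*} [Fintype ι] [DecidableEq ι] {q : ι → Ω → ℝ}
    (hq : ∀ i o, 0 ≤ q i o) (A : Set (ι → Ω)) :
    (Measure.pi fun i => massMeasure (q i)).real A =
      ∑ x, A.indicator (fun x => ∏ i, q i (x i)) x := by
  classical
  rw [← integral_indicator_one A.toFinite.measurableSet, integral_fintype .of_finite]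
  refine sum_congr rfl fun x _ => ?_
  have hx : (Measure.pi fun i => massMeasure (q i)).real {x} = ∏ i, q i (x i) := by
    simp_rw [measureReal_def, Measure.pi_singleton, ENNReal.toReal_prod]
    refine prod_congr rfl fun i _ => ?_
    rw [← measureReal_def, ← integral_indicator_one (measurableSet_singleton (x i)),
      integral_massMeasure (hq i)]
    simp [Set.indicator_apply]
  simp [hx, Set.indicator_apply]

lemma integral_pi_massMeasure_eval {ι : Type*} [Fintype ι] {q : ι → Ω → ℝ}
    (hq : ∀ i o, 0 ≤ q i o) (hsum : ∀ i, ∑ o, q i o = 1) (f : Ω → ℝ) (i : ι) :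
    ∫ x, f (x i) ∂(Measure.pi fun i => massMeasure (q i)) = ∑ o, q i o * f o := by
  have (i : ι) := isProbabilityMeasure_massMeasure (hq i) (hsum i)
  rw [integral_comp_eval (μ := fun i => massMeasure (q i)) (f := f)
    (measurable_of_finite f).aestronglyMeasurable, integral_massMeasure (hq i)]

end MassMeasure

section Discrepancy

variable {V : Type*}

/-- The total weight `e(S, T)` that the matrix `A` puts on `S × T`. -/
def edgeSum (A : Matrix V V ℝ) (S T : Finset V) : ℝ := ∑ u ∈ S, ∑ v ∈ T, A u v

/-- An upper bound for the logarithm of the number of `t`-element subsets of an `N`-element set. -/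
noncomputable def subsetEntropy (N t : ℝ) : ℝ := t * log (exp 1 * N / t)

/-- The discrepancy alternative for `S` and `T`: the weight between them is at most a constant times
the expected weight `d |S| |T| / N` in a graph on `N` vertices with average degree `d`, or so little
more that the excess is controlled by the entropy of `T`. -/
def DiscrepancyAt (N d : ℝ) (A : Matrix V V ℝ) (S T : Finset V) : Prop :=
  edgeSum A S T ≤ exp 8 * (d * #S * #T / N) ∨
    edgeSum A S T * log (edgeSum A S T / (d * #S * #T / N)) ≤ 12 * subsetEntropy N #T

/-- The discrepancy property of Feige and Ofek, restricted to nested pairs because the argument only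
compares level sets of one function. -/
def HasDiscrepancy (N d : ℝ) (A : Matrix V V ℝ) : Prop :=
  ∀ S T : Finset V, S ⊆ T → S.Nonempty → DiscrepancyAt N d A S T

lemma log_le_div_four_add_one {x : ℝ} (hx : 0 < x) : log x ≤ x / 4 + 1 := by
  have h := log_le_sub_one_of_pos (show 0 < x / 4 by positivity)
  have h4 : log 4 < 2 := by
    rw [show (4 : ℝ) = 2 ^ 2 by norm_num, log_pow]
    norm_num
    linarith [log_two_lt_d9]
  rw [log_div hx.ne' (by norm_num)] at h
  linarith

lemma neg_mul_log_le_one {x : ℝ} (hx : 0 < x) : -(x * log x) ≤ 1 := by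
  have h := mul_le_mul_of_nonneg_left (one_sub_inv_le_log_of_pos hx) hx.le
  rw [mul_sub, mul_inv_cancel₀ hx.ne'] at h
  linarith

lemma le_of_mul_log_le {c ρ α α' y : ℝ} (hρ : 0 < ρ) (hρ2 : ρ < 2) (hα : 0 < α)
    (hα' : 0 < α') (hα'1 : α' ≤ 1) (hy : 0 < y)
    (hlarge : exp 8 < c * ρ ^ 2 * y ^ 4 / (α' * α))
    (hlog : c * log (c * ρ ^ 2 * y ^ 4 / (α' * α)) ≤
      12 * (ρ ^ 2 * α * log (exp 1 * y ^ 4 / α))) :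
    c ≤ ρ * (50 * α + 1 / y ^ 2) := by
  by_contra! hcon
  set ℓ := log (c * ρ ^ 2 * y ^ 4 / (α' * α))
  set Y := 1 / (y ^ 2 * α) with hYdef
  have hY : 0 < Y := by positivity
  have hℓ : 8 < ℓ := (lt_log_iff_exp_lt ((exp_pos 8).trans hlarge)).2 hlarge
  have hc : ρ * α * (50 + Y) < c := by
    refine hcon.trans_eq' ?_
    rw [hYdef]; field_simp
  have hentropy : log (exp 1 * y ^ 4 / α) = 1 + log Y + 6 * log y := by
    rw [show exp 1 * y ^ 4 / α = exp 1 * Y * y ^ 6 by rw [hYdef]; field_simp,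
      log_mul (by positivity) (by positivity), log_mul (by positivity) (by positivity), log_exp,
      log_pow]
    norm_num
  have hmain : (50 + Y) * ℓ < 12 * (ρ * (1 + log Y) + 6 * (ρ * log y)) := by
    refine lt_of_mul_lt_mul_left (a := ρ * α) ?_ (by positivity)
    calc ρ * α * ((50 + Y) * ℓ) = ρ * α * (50 + Y) * ℓ := by ring
      _ < c * ℓ := by gcongr
      _ ≤ 12 * (ρ ^ 2 * α * log (exp 1 * y ^ 4 / α)) := hlog
      _ = ρ * α * (12 * (ρ * (1 + log Y) + 6 * (ρ * log y))) := by rw [hentropy]; ring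
  have hℓ_lower : 3 * log ρ + 4 * log y ≤ ℓ := by
    have h : ρ ^ 3 * y ^ 4 ≤ c * ρ ^ 2 * y ^ 4 / (α' * α) := by
      rw [le_div_iff₀ (by positivity)]
      calc ρ ^ 3 * y ^ 4 * (α' * α) = ρ * α * α' * (ρ ^ 2 * y ^ 4) := by ring
        _ ≤ ρ * α * (50 + Y) * (ρ ^ 2 * y ^ 4) := by gcongr; linarith
        _ ≤ c * (ρ ^ 2 * y ^ 4) := by gcongr
        _ = c * ρ ^ 2 * y ^ 4 := by ring
    refine (log_le_log (by positivity) h).trans_eq' ?_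
    rw [log_mul (by positivity) (by positivity), log_pow, log_pow]
    norm_num
  have hy_upper : 6 * (ρ * log y) ≤ 3 * ℓ + 9 / 2 := by
    nlinarith [mul_le_mul_of_nonneg_left hℓ_lower hρ.le, neg_mul_log_le_one hρ]
  have hY_upper : ρ * (1 + log Y) ≤ 2 * (Y / 4 + 2) := by
    calc ρ * (1 + log Y) ≤ ρ * (Y / 4 + 2) := by
          gcongr _ * ?_; linarith [log_le_div_four_add_one hY]
      _ ≤ 2 * (Y / 4 + 2) := by gcongr
  nlinarith

/-- Here `p`, `q` are the sizes of the level sets `S = {X ≥ x²}` and `T = {X ≥ y²}`, and `e` is the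
weight between them. -/
lemma sq_mul_edgeSum_le {N δ p q e x y : ℝ} (hN : 0 < N) (hδ : 0 < δ) (hp : 0 < p) (hq : 0 < q)
    (hx : 0 < x) (hy : 0 < y) (hpx : x ^ 4 * p ≤ N) (hxy : x < 2 * δ * y)
    (hδxy : δ < 4 * (x * y))
    (hdisc : e ≤ exp 8 * (δ ^ 4 * p * q / N) ∨
      e * log (e / (δ ^ 4 * p * q / N)) ≤ 12 * subsetEntropy N q) :
    (x * y) ^ 2 * e ≤ N * δ ^ 2 * (16 * exp 8 * ((x ^ 4 * p / N) * (y ^ 4 * q / N)) +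
      x / (y * δ) * (50 * (y ^ 4 * q / N) + 1 / y ^ 2)) := by
  rw [mul_add]
  rcases le_or_gt e (exp 8 * (δ ^ 4 * p * q / N)) with hsmall | hlarge
  · refine le_add_of_le_of_nonneg ?_ (by positivity)
    calc (x * y) ^ 2 * e ≤ (x * y) ^ 2 * (exp 8 * (δ ^ 4 * p * q / N)) := by gcongr
      _ = δ ^ 2 * ((x * y) ^ 2 * exp 8 * (δ ^ 2 * p * q / N)) := by ring
      _ ≤ (4 * (x * y)) ^ 2 * ((x * y) ^ 2 * exp 8 * (δ ^ 2 * p * q / N)) := by gcongr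
      _ = N * δ ^ 2 * (16 * exp 8 * ((x ^ 4 * p / N) * (y ^ 4 * q / N))) := by field_simp; ring
  · have hlog := hdisc.resolve_left hlarge.not_ge
    refine le_add_of_nonneg_of_le (by positivity) ?_
    rw [← div_le_iff₀' (by positivity)]
    have hratio : e / (δ ^ 4 * p * q / N) = (x * y) ^ 2 * e / (N * δ ^ 2) * (x / (y * δ)) ^ 2 *
        y ^ 4 / (x ^ 4 * p / N * (y ^ 4 * q / N)) := by field_simp
    refine le_of_mul_log_le (α' := x ^ 4 * p / N) (by positivity) ?_ (by positivity)
      (by positivity) ((div_le_one hN).2 hpx) hy ?_ ?_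
    · rw [div_lt_iff₀ (by positivity)]; linarith
    · rwa [← hratio, lt_div_iff₀ (by positivity)]
    · rw [← hratio]
      calc (x * y) ^ 2 * e / (N * δ ^ 2) * log (e / (δ ^ 4 * p * q / N))
          = (x * y) ^ 2 / (N * δ ^ 2) * (e * log (e / (δ ^ 4 * p * q / N))) := by ring
        _ ≤ (x * y) ^ 2 / (N * δ ^ 2) * (12 * subsetEntropy N q) := by gcongr
        _ = 12 * ((x / (y * δ)) ^ 2 * (y ^ 4 * q / N) *
              log (exp 1 * y ^ 4 / (y ^ 4 * q / N))) := by
            rw [subsetEntropy, show exp 1 * y ^ 4 / (y ^ 4 * q / N) = exp 1 * N / q by field_simp]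
            field_simp

lemma sum_pow_ite_le {r B : ℝ} (hr : 2 ≤ r) (hB : 0 ≤ B) (K : ℕ) :
    ∑ i ∈ range K, (if r ^ i ≤ B then r ^ i else 0) ≤ 2 * B := by
  induction K with
  | zero => simpa using hB
  | succ k ih =>
    rw [sum_range_succ]
    split_ifs with h
    · have hgeom : ∑ i ∈ range k, (if r ^ i ≤ B then r ^ i else 0) ≤ r ^ k := by
        calc ∑ i ∈ range k, (if r ^ i ≤ B then r ^ i else 0) ≤ ∑ i ∈ range k, r ^ i := by
              gcongr with i
              split_ifs
              exacts [le_rfl, by positivity]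
          _ = (r ^ k - 1) / (r - 1) := geom_sum_eq (by linarith) k
          _ ≤ r ^ k := by
              have : 0 ≤ r ^ k := by positivity
              rw [div_le_iff₀ (by linarith)]
              nlinarith
      linarith
    · linarith

lemma sum_one_div_four_pow_le (K : ℕ) : ∑ j ∈ range K, (1 / 4 : ℝ) ^ j ≤ 2 := by
  rw [geom_sum_eq (by norm_num), div_le_iff_of_neg (by norm_num)]
  have : (0 : ℝ) ≤ (1 / 4) ^ K := by positivity
  linarith

variable {N δ : ℝ} {A : Matrix V V ℝ} {X : V → ℝ}

/-- The pairs of levels that meet a pair `(u, v)` of vertices with `X v ≤ X u`,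
`X u ≤ δ ^ 2 * X v` and `δ ^ 2 < X u * X v`. -/
noncomputable def levelPairs (K : ℕ) (δ : ℝ) : Finset (ℕ × ℕ) :=
  {p ∈ range K ×ˢ range K | p.2 ≤ p.1 ∧ (2 : ℝ) ^ p.1 < 2 * δ * 2 ^ p.2 ∧
    δ < 4 * (2 ^ p.1 * 2 ^ p.2)}

lemma exists_sq_two_pow_near {x : ℝ} (hx : 1 ≤ x) :
    ∃ i : ℕ, (2 ^ i) ^ 2 ≤ x ∧ x < 4 * (2 ^ i) ^ 2 := by
  obtain ⟨i, hle, hlt⟩ := exists_nat_pow_near hx (show (1 : ℝ) < 4 by norm_num)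
  have h4 : (4 : ℝ) ^ i = (2 ^ i) ^ 2 := by rw [pow_right_comm]; norm_num
  rw [pow_succ', h4] at hlt
  exact ⟨i, h4 ▸ hle, hlt⟩

/-- The dyadic majorant of the products `X u * X v` on the pairs meeting `levelPairs K δ`. -/
noncomputable def dyadicWeight (K : ℕ) (δ : ℝ) (X : V → ℝ) (u v : V) : ℝ :=
  ∑ p ∈ levelPairs K δ with (2 ^ p.1) ^ 2 ≤ X u ∧ (2 ^ p.2) ^ 2 ≤ X v, (2 ^ p.1 * 2 ^ p.2) ^ 2

lemma dyadicWeight_nonneg (K : ℕ) (δ : ℝ) (X : V → ℝ) (u v : V) : 0 ≤ dyadicWeight K δ X u v :=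
  sum_nonneg fun _ _ => sq_nonneg _

lemma mul_le_sq_div_add_dyadicWeight (hδ : 0 < δ) (hX0 : ∀ u, 0 ≤ X u) {K : ℕ}
    (hK : ∀ u, X u < 4 ^ K) {u v : V} (hvu : X v ≤ X u) (hheavy : δ ^ 2 < X u * X v) :
    X u * X v ≤ X u ^ 2 / δ ^ 2 + 16 * dyadicWeight K δ X u v := by
  -- Unbalanced pairs are paid for by the degree of `u`, balanced ones by a pair of dyadic levels.
  rcases lt_or_ge (δ ^ 2 * X v) (X u) with hfar | hnear
  · refine le_add_of_le_of_nonneg ?_ (mul_nonneg (by norm_num) (dyadicWeight_nonneg ..))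
    rw [le_div_iff₀ (by positivity)]
    nlinarith [hX0 u]
  have hv1 : 1 ≤ X v := by
    by_contra! h
    nlinarith [hX0 v]
  obtain ⟨i, hi, hi'⟩ := exists_sq_two_pow_near (hv1.trans hvu)
  obtain ⟨j, hj, hj'⟩ := exists_sq_two_pow_near hv1
  have hlt_K {k : ℕ} {w : V} (h : (2 ^ k) ^ 2 ≤ X w) : k < K := by
    have := h.trans_lt (hK w)
    rwa [pow_right_comm, show (2 : ℝ) ^ 2 = 4 by norm_num,
      pow_lt_pow_iff_right₀ (by norm_num)] at this
  have hprod : X u * X v < (4 * (2 ^ i * 2 ^ j)) ^ 2 := by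
    calc X u * X v < (4 * (2 ^ i) ^ 2) * (4 * (2 ^ j) ^ 2) :=
          mul_lt_mul'' hi' hj' (hX0 u) (hX0 v)
      _ = (4 * (2 ^ i * 2 ^ j)) ^ 2 := by ring
  have hmem : (i, j) ∈ levelPairs K δ := by
    simp only [levelPairs, mem_filter, mem_product, mem_range]
    refine ⟨⟨hlt_K hi, hlt_K hj⟩, ?_, ?_, ?_⟩
    · have : (2 : ℝ) ^ j < 2 ^ (i + 1) :=
        lt_of_pow_lt_pow_left₀ 2 (by positivity) (by rw [pow_succ' 2 i, mul_pow]; linarith)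
      exact Nat.lt_succ_iff.1 ((pow_lt_pow_iff_right₀ (by norm_num)).1 this)
    · refine lt_of_pow_lt_pow_left₀ 2 (by positivity) ?_
      calc ((2 : ℝ) ^ i) ^ 2 ≤ δ ^ 2 * X v := hi.trans hnear
        _ < δ ^ 2 * (4 * (2 ^ j) ^ 2) := by gcongr
        _ = (2 * δ * 2 ^ j) ^ 2 := by ring
    · exact lt_of_pow_lt_pow_left₀ 2 (by positivity) (hheavy.trans hprod)
  have hweight : (2 ^ i * 2 ^ j) ^ 2 ≤ dyadicWeight K δ X u v :=
    single_le_sum (f := fun p : ℕ × ℕ => ((2 : ℝ) ^ p.1 * 2 ^ p.2) ^ 2) (a := (i, j))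
      (fun _ _ => sq_nonneg _)
      (mem_filter.2 ⟨hmem, hi, hj⟩)
  have : 0 ≤ X u ^ 2 / δ ^ 2 := by positivity
  linarith

variable [Fintype V]

/-- The `i`-th dyadic level set `{X ≥ 4 ^ i}`, with the threshold written as a square because its
square root `2 ^ i` is the natural scale of the argument. -/
noncomputable def levelSet (X : V → ℝ) (i : ℕ) : Finset V := {u | (2 ^ i) ^ 2 ≤ X u}

/-- The share of the bound `∑ X ^ 2 ≤ N` that is accounted for by the `i`-th level set. -/
noncomputable def levelMass (N : ℝ) (X : V → ℝ) (i : ℕ) : ℝ := (2 ^ i) ^ 4 * #(levelSet X i) / N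

lemma mem_levelSet {u : V} {i : ℕ} : u ∈ levelSet X i ↔ (2 ^ i) ^ 2 ≤ X u := by
  simp [levelSet]

lemma levelSet_anti (X : V → ℝ) : Antitone (levelSet X) := fun i j hij u hu => by
  rw [mem_levelSet] at hu ⊢
  exact le_trans (by gcongr; norm_num) hu

lemma levelMass_nonneg (hN : 0 < N) (i : ℕ) : 0 ≤ levelMass N X i := by
  unfold levelMass; positivity

lemma pow_mul_card_levelSet_le (hX : ∑ u, X u ^ 2 ≤ N) (i : ℕ) :
    (2 ^ i) ^ 4 * #(levelSet X i) ≤ N := by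
  calc ((2 : ℝ) ^ i) ^ 4 * #(levelSet X i) = ∑ u ∈ levelSet X i, ((2 ^ i) ^ 2) ^ 2 := by
        rw [sum_const, nsmul_eq_mul]; ring
    _ ≤ ∑ u ∈ levelSet X i, X u ^ 2 := by
        gcongr with u hu
        exact mem_levelSet.1 hu
    _ ≤ ∑ u, X u ^ 2 := sum_le_univ_sum_of_nonneg fun u => sq_nonneg _
    _ ≤ N := hX

lemma sum_levelMass_le (hN : 0 < N) (hX0 : ∀ u, 0 ≤ X u) (hX : ∑ u, X u ^ 2 ≤ N) (K : ℕ) :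
    ∑ i ∈ range K, levelMass N X i ≤ 2 := by
  have hlevel (i : ℕ) : (2 ^ i) ^ 4 * (#(levelSet X i) : ℝ) =
      ∑ u, if (16 : ℝ) ^ i ≤ X u ^ 2 then (16 : ℝ) ^ i else 0 := by
    have h16 : (16 : ℝ) ^ i = ((2 ^ i) ^ 2) ^ 2 := by
      rw [← pow_mul, pow_right_comm]; norm_num
    rw [← sum_filter, sum_const, nsmul_eq_mul, h16]
    simp only [sq_le_sq₀ (sq_nonneg (2 ^ i)) (hX0 _), levelSet]
    ring
  simp only [levelMass]
  rw [← sum_div, div_le_iff₀ hN, sum_congr rfl fun i _ => hlevel i, sum_comm]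
  calc ∑ u, ∑ i ∈ range K, (if (16 : ℝ) ^ i ≤ X u ^ 2 then (16 : ℝ) ^ i else 0)
      ≤ ∑ u, 2 * X u ^ 2 := by
        gcongr with u
        exact sum_pow_ite_le (by norm_num) (sq_nonneg _) K
    _ ≤ 2 * N := by rw [← mul_sum]; gcongr

lemma sq_mul_edgeSum_levelSet_le (hN : 0 < N) (hδ : 0 < δ) (hX : ∑ u, X u ^ 2 ≤ N)
    (hdisc : HasDiscrepancy N (δ ^ 4) A) {K : ℕ} {p : ℕ × ℕ} (hp : p ∈ levelPairs K δ) :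
    (2 ^ p.1 * 2 ^ p.2) ^ 2 * edgeSum A (levelSet X p.1) (levelSet X p.2) ≤
      N * δ ^ 2 * (16 * exp 8 * (levelMass N X p.1 * levelMass N X p.2) +
        2 ^ p.1 / (2 ^ p.2 * δ) * (50 * levelMass N X p.2 + (1 / 4) ^ p.2)) := by
  simp only [levelPairs, mem_filter] at hp
  obtain ⟨-, hle, hupper, hlower⟩ := hp
  have hsub : levelSet X p.1 ⊆ levelSet X p.2 := levelSet_anti X hle
  rcases (levelSet X p.1).eq_empty_or_nonempty with hempty | hne
  · have := levelMass_nonneg (X := X) hN p.1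
    have := levelMass_nonneg (X := X) hN p.2
    rw [hempty, edgeSum, sum_empty, mul_zero]
    positivity
  · have hp := Nat.cast_pos (α := ℝ).2 hne.card_pos
    have hq := Nat.cast_pos (α := ℝ).2 (hne.mono hsub).card_pos
    refine (sq_mul_edgeSum_le hN hδ hp hq (by positivity) (by positivity)
      (pow_mul_card_levelSet_le hX _) hupper hlower (hdisc _ _ hsub hne)).trans_eq ?_
    rw [one_div_pow, pow_right_comm 2 p.2 2]
    norm_num [levelMass]

lemma sum_levelPairs_ratio_le (hδ : 0 < δ) {K : ℕ} {f : ℕ → ℝ} (hf : ∀ j, 0 ≤ f j) :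
    ∑ p ∈ levelPairs K δ, 2 ^ p.1 / (2 ^ p.2 * δ) * f p.2 ≤ 4 * ∑ j ∈ range K, f j := by
  calc ∑ p ∈ levelPairs K δ, (2 : ℝ) ^ p.1 / (2 ^ p.2 * δ) * f p.2
      ≤ ∑ p ∈ range K ×ˢ range K,
          (if (2 : ℝ) ^ p.1 ≤ 2 * δ * 2 ^ p.2 then (2 : ℝ) ^ p.1 else 0) /
            (2 ^ p.2 * δ) * f p.2 := by
        rw [levelPairs, sum_filter]
        gcongr with p
        have := hf p.2
        split_ifs with h h' h'
        · rfl
        · exact absurd h.2.1.le h'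
        all_goals positivity
    _ = ∑ j ∈ range K, (∑ i ∈ range K, if (2 : ℝ) ^ i ≤ 2 * δ * 2 ^ j then (2 : ℝ) ^ i else 0) /
          (2 ^ j * δ) * f j := by
        rw [sum_product_right]
        simp only [sum_div, sum_mul]
    _ ≤ ∑ j ∈ range K, 4 * f j := by
        gcongr with j
        · exact hf j
        · rw [div_le_iff₀ (by positivity)]
          exact (sum_pow_ite_le le_rfl (by positivity) K).trans_eq (by ring)
    _ = 4 * ∑ j ∈ range K, f j := (mul_sum ..).symm

lemma sum_levelPairs_edgeSum_le (hN : 0 < N) (hδ : 0 < δ) (hX0 : ∀ u, 0 ≤ X u)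
    (hX : ∑ u, X u ^ 2 ≤ N) (hdisc : HasDiscrepancy N (δ ^ 4) A) (K : ℕ) :
    ∑ p ∈ levelPairs K δ, (2 ^ p.1 * 2 ^ p.2) ^ 2 * edgeSum A (levelSet X p.1) (levelSet X p.2) ≤
      (64 * exp 8 + 408) * (N * δ ^ 2) := by
  have hmass := levelMass_nonneg (X := X) hN
  have hsum := sum_levelMass_le hN hX0 hX K
  have hproduct : ∑ p ∈ levelPairs K δ, levelMass N X p.1 * levelMass N X p.2 ≤ 4 := by
    calc ∑ p ∈ levelPairs K δ, levelMass N X p.1 * levelMass N X p.2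
        ≤ ∑ p ∈ range K ×ˢ range K, levelMass N X p.1 * levelMass N X p.2 :=
          sum_le_sum_of_subset_of_nonneg (filter_subset _ _)
            fun p _ _ => mul_nonneg (hmass _) (hmass _)
      _ = (∑ i ∈ range K, levelMass N X i) * ∑ j ∈ range K, levelMass N X j := by
          rw [sum_product, sum_mul_sum]
      _ ≤ 2 * 2 := mul_le_mul hsum hsum (sum_nonneg fun j _ => hmass j) (by norm_num)
      _ = 4 := by norm_num
  have hratio : ∑ p ∈ levelPairs K δ,
      2 ^ p.1 / (2 ^ p.2 * δ) * (50 * levelMass N X p.2 + (1 / 4) ^ p.2) ≤ 408 := by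
    refine (sum_levelPairs_ratio_le hδ (f := fun j => 50 * levelMass N X j + (1 / 4) ^ j)
      fun j => add_nonneg (mul_nonneg (by norm_num) (hmass j)) (by positivity)).trans ?_
    rw [sum_add_distrib, ← mul_sum]
    linarith [sum_one_div_four_pow_le K]
  calc ∑ p ∈ levelPairs K δ, (2 ^ p.1 * 2 ^ p.2) ^ 2 *
        edgeSum A (levelSet X p.1) (levelSet X p.2)
      ≤ ∑ p ∈ levelPairs K δ, N * δ ^ 2 * (16 * exp 8 * (levelMass N X p.1 * levelMass N X p.2) +
          2 ^ p.1 / (2 ^ p.2 * δ) * (50 * levelMass N X p.2 + (1 / 4) ^ p.2)) :=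
        sum_le_sum fun p hp => sq_mul_edgeSum_levelSet_le hN hδ hX hdisc hp
    _ ≤ N * δ ^ 2 * (16 * exp 8 * 4 + 408) := by
        rw [← mul_sum, sum_add_distrib, ← mul_sum]
        gcongr
    _ = (64 * exp 8 + 408) * (N * δ ^ 2) := by ring

lemma sum_mul_dyadicWeight (A : Matrix V V ℝ) (K : ℕ) (δ : ℝ) (X : V → ℝ) :
    ∑ u, ∑ v, A u v * dyadicWeight K δ X u v = ∑ p ∈ levelPairs K δ,
      (2 ^ p.1 * 2 ^ p.2) ^ 2 * edgeSum A (levelSet X p.1) (levelSet X p.2) := by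
  simp only [dyadicWeight, edgeSum, levelSet, sum_filter, mul_sum, ite_and]
  simp_rw [sum_comm (s := univ) (t := levelPairs K δ)]
  refine sum_congr rfl fun p _ => sum_congr rfl fun u _ => ?_
  split_ifs
  · rw [mul_sum]
    exact sum_congr rfl fun v _ => by split_ifs <;> ring
  · simp

/-- The constant in the bound `heavyConst * N * √d` on the contribution of the heavy pairs. -/
noncomputable def heavyConst : ℝ := 2 * (3 / 2 + 16 * (64 * exp 8 + 408))

lemma sum_sum_mul_sq_div_le_of_degree (hδ : 0 < δ) (hX0 : ∀ u, 0 ≤ X u) (hX : ∑ u, X u ^ 2 ≤ N)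
    (hdeg : ∀ u, 0 < X u → ∑ v, A u v ≤ 3 / 2 * δ ^ 4) :
    ∑ u, ∑ v, A u v * (X u ^ 2 / δ ^ 2) ≤ 3 / 2 * (N * δ ^ 2) := by
  calc ∑ u, ∑ v, A u v * (X u ^ 2 / δ ^ 2) ≤ ∑ u, 3 / 2 * δ ^ 2 * X u ^ 2 := by
        gcongr with u
        rw [← sum_mul]
        rcases (hX0 u).eq_or_lt with h | h
        · simp [← h]
        · calc (∑ v, A u v) * (X u ^ 2 / δ ^ 2) ≤ 3 / 2 * δ ^ 4 * (X u ^ 2 / δ ^ 2) := by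
                gcongr; exact hdeg u h
            _ = 3 / 2 * δ ^ 2 * X u ^ 2 := by field_simp
    _ = 3 / 2 * δ ^ 2 * ∑ u, X u ^ 2 := (mul_sum ..).symm
    _ ≤ 3 / 2 * δ ^ 2 * N := by gcongr
    _ = 3 / 2 * (N * δ ^ 2) := by ring

lemma sum_heavy_le (hN : 0 < N) (hδ : 0 < δ) (hA0 : ∀ u v, 0 ≤ A u v) (hA : A.IsSymm)
    (hX0 : ∀ u, 0 ≤ X u) (hX : ∑ u, X u ^ 2 ≤ N)
    (hdeg : ∀ u, 0 < X u → ∑ v, A u v ≤ 3 / 2 * δ ^ 4) (hdisc : HasDiscrepancy N (δ ^ 4) A) :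
    ∑ u, ∑ v, (if δ ^ 2 < X u * X v then A u v * (X u * X v) else 0) ≤
      heavyConst * (N * δ ^ 2) := by
  obtain ⟨K, hK⟩ : ∃ K : ℕ, ∀ u, X u < 4 ^ K := by
    obtain ⟨b, hb⟩ := (Set.finite_range X).bddAbove
    obtain ⟨K, hK⟩ := pow_unbounded_of_one_lt b (show (1 : ℝ) < 4 by norm_num)
    exact ⟨K, fun u => (hb ⟨u, rfl⟩).trans_lt hK⟩
  set F : V → V → ℝ := fun u v => A u v * (X u ^ 2 / δ ^ 2) + 16 * (A u v * dyadicWeight K δ X u v)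
  have hF0 (u v : V) : 0 ≤ F u v := by
    have := hA0 u v
    have := dyadicWeight_nonneg K δ X u v
    positivity
  have hle {u v : V} (hvu : X v ≤ X u) (h : δ ^ 2 < X u * X v) :
      A u v * (X u * X v) ≤ F u v :=
    (mul_le_mul_of_nonneg_left (mul_le_sq_div_add_dyadicWeight hδ hX0 hK hvu h)
      (hA0 u v)).trans_eq (by simp only [F]; ring)
  have hpair (u v : V) :
      (if δ ^ 2 < X u * X v then A u v * (X u * X v) else 0) ≤ F u v + F v u := by
    split_ifs with h
    · rcases le_total (X v) (X u) with hvu | huv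
      · linarith [hle hvu h, hF0 v u]
      · rw [mul_comm (X u), ← hA.apply u v] at *
        linarith [hle huv h, hF0 u v]
    · exact add_nonneg (hF0 u v) (hF0 v u)
  calc ∑ u, ∑ v, (if δ ^ 2 < X u * X v then A u v * (X u * X v) else 0)
      ≤ ∑ u, ∑ v, (F u v + F v u) := sum_le_sum fun u _ => sum_le_sum fun v _ => hpair u v
    _ = 2 * (∑ u, ∑ v, A u v * (X u ^ 2 / δ ^ 2) +
          16 * ∑ u, ∑ v, A u v * dyadicWeight K δ X u v) := by
        simp only [sum_add_distrib, sum_comm (f := fun u v => F v u)]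
        simp only [F, sum_add_distrib, mul_sum]
        ring
    _ ≤ 2 * (3 / 2 * (N * δ ^ 2) + 16 * ((64 * exp 8 + 408) * (N * δ ^ 2))) := by
        rw [sum_mul_dyadicWeight]
        gcongr
        · exact sum_sum_mul_sq_div_le_of_degree hδ hX0 hX hdeg
        · exact sum_levelPairs_edgeSum_le hN hδ hX0 hX hdisc K
    _ = heavyConst * (N * δ ^ 2) := by rw [heavyConst]; ring

end Discrepancy

section QuadraticForm

variable {n : ℕ}

lemma quadForm_mask (M : Matrix (Fin n) (Fin n) ℝ) (S : Finset (Fin n)) (x : Fin n → ℝ) :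
    quadForm (fun u v => if u ∈ S ∧ v ∈ S then M u v else 0) x =
      quadForm M fun u => if u ∈ S then x u else 0 := by
  refine sum_congr rfl fun u _ => sum_congr rfl fun v _ => ?_
  by_cases hu : u ∈ S <;> by_cases hv : v ∈ S <;> simp [hu, hv]

lemma quadForm_add_mul (M : Matrix (Fin n) (Fin n) ℝ) (y r : Fin n → ℝ) (t : ℝ) :
    quadForm M (fun u => y u + t * r u) = quadForm M y +
      2 * t * (quadForm M (fun u => (y u + r u) / 2) - quadForm M fun u => (y u - r u) / 2) +
      t ^ 2 * quadForm M r := by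
  simp only [quadForm, mul_sum, ← sum_sub_distrib, ← sum_add_distrib]
  exact sum_congr rfl fun u _ => sum_congr rfl fun v _ => by ring

lemma exists_forall_abs_quadForm_le (M : Matrix (Fin n) (Fin n) ℝ) :
    ∃ x₀ : Fin n → ℝ, ∑ u, x₀ u ^ 2 ≤ 1 ∧
      ∀ y : Fin n → ℝ, ∑ u, y u ^ 2 ≤ 1 → |quadForm M y| ≤ |quadForm M x₀| := by
  set K : Set (Fin n → ℝ) := {x | ∑ u, x u ^ 2 ≤ 1}
  have hclosed : IsClosed K := isClosed_le (by fun_prop) continuous_const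
  have hsub : K ⊆ Set.univ.pi fun _ : Fin n => Set.Icc (-1) 1 := fun y hy u _ =>
    abs_le.1 ((sq_le_one_iff_abs_le_one _).1
      ((single_le_sum (f := fun u => y u ^ 2) (fun _ _ => sq_nonneg _) (mem_univ u)).trans hy))
  have hcompact : IsCompact K :=
    (isCompact_univ_pi fun _ => isCompact_Icc).of_isClosed_subset hclosed hsub
  have hcont : ContinuousOn (fun x => |quadForm M x|) K := by
    unfold quadForm
    fun_prop
  exact hcompact.exists_isMaxOn ⟨0, by simp [K]⟩ hcont

end QuadraticForm

section LatticeNet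

variable {n : ℕ}

/-- The integer vectors `z` for which `z / (8 √n)` lies in the Euclidean unit ball. -/
noncomputable def latticeNet (n : ℕ) : Finset (Fin n → ℤ) :=
  {z ∈ Fintype.piFinset fun _ : Fin n => Icc (-(64 * n : ℕ) : ℤ) (64 * n : ℕ) |
    ∑ u, z u ^ 2 ≤ 64 * n}

/-- The point `z / (8 √n)` of the rescaled integer lattice. -/
noncomputable def latticePoint (z : Fin n → ℤ) : Fin n → ℝ := fun u => z u / (8 * √n)

lemma mem_latticeNet {z : Fin n → ℤ} : z ∈ latticeNet n ↔ ∑ u, z u ^ 2 ≤ 64 * n := by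
  simp only [latticeNet, mem_filter, Fintype.mem_piFinset, mem_Icc, and_iff_right_iff_imp]
  intro h u
  have := (single_le_sum (f := fun u => z u ^ 2) (fun _ _ => sq_nonneg _) (mem_univ u)).trans h
  push_cast
  constructor <;> nlinarith

lemma sum_latticePoint_sq (z : Fin n → ℤ) :
    ∑ u, latticePoint z u ^ 2 = ((∑ u, z u ^ 2 : ℤ) : ℝ) / (64 * n) := by
  simp only [latticePoint, div_pow, mul_pow, sq_sqrt (Nat.cast_nonneg (α := ℝ) n), ← sum_div]
  norm_num

lemma sum_latticePoint_sq_le_one (hn : 0 < n) {z : Fin n → ℤ} (hz : z ∈ latticeNet n) :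
    ∑ u, latticePoint z u ^ 2 ≤ 1 := by
  rw [sum_latticePoint_sq, div_le_one (by positivity)]
  exact_mod_cast mem_latticeNet.1 hz

lemma exp_neg_sq_le_half_pow (m : ℕ) : exp (-(m : ℝ) ^ 2) ≤ (1 / 2) ^ m := by
  have hm : (m : ℝ) ≤ (m : ℝ) ^ 2 := by exact_mod_cast Nat.le_self_pow two_ne_zero m
  calc exp (-(m : ℝ) ^ 2) ≤ exp (m * (-1)) := exp_le_exp.2 (by linarith)
    _ = exp (-1) ^ m := exp_nat_mul _ _
    _ ≤ (1 / 2) ^ m := by gcongr; linarith [exp_neg_one_lt_d9]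

lemma sum_Icc_exp_neg_sq_le (m : ℕ) :
    ∑ k ∈ Icc (-m : ℤ) m, exp (-(k : ℝ) ^ 2) ≤ 3 - 2 * (1 / 2) ^ m := by
  induction m with
  | zero => norm_num
  | succ m ih =>
    have hset : Icc (-(m + 1 : ℕ) : ℤ) (m + 1 : ℕ) =
        insert ((m + 1 : ℕ) : ℤ) (insert (-(m + 1 : ℕ) : ℤ) (Icc (-m : ℤ) m)) := by
      ext k
      simp only [mem_Icc, mem_insert]
      lia
    have hlast := exp_neg_sq_le_half_pow (m + 1)
    rw [hset, sum_insert (by simp; lia), sum_insert (by simp), Int.cast_neg, Int.cast_natCast,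
      neg_sq]
    rw [pow_succ (1 / 2 : ℝ) m] at hlast ⊢
    linarith

lemma card_latticeNet_le (n : ℕ) : (#(latticeNet n) : ℝ) ≤ exp (66 * n) := by
  -- Every point of the net has Gaussian weight `exp (-∑ z²)` at least `exp (-64 n)`.
  set I := Icc (-(64 * n : ℕ) : ℤ) (64 * n : ℕ)
  have hgauss : ∑ k ∈ I, exp (-(k : ℝ) ^ 2) ≤ exp 2 := by
    have := sum_Icc_exp_neg_sq_le (64 * n)
    have : (0 : ℝ) < (1 / 2) ^ (64 * n) := by positivity
    linarith [add_one_le_exp (2 : ℝ)]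
  calc (#(latticeNet n) : ℝ) = ∑ z ∈ latticeNet n, 1 := by simp
    _ ≤ ∑ z ∈ latticeNet n, exp (64 * n) * ∏ u, exp (-(z u : ℝ) ^ 2) := by
        gcongr with z hz
        have : ∑ u, (z u : ℝ) ^ 2 ≤ 64 * n := by exact_mod_cast mem_latticeNet.1 hz
        rw [← exp_sum, ← exp_add, sum_neg_distrib]
        exact one_le_exp (by linarith)
    _ ≤ ∑ z ∈ Fintype.piFinset fun _ : Fin n => I, exp (64 * n) * ∏ u, exp (-(z u : ℝ) ^ 2) :=
        sum_le_sum_of_subset_of_nonneg (filter_subset _ _) fun _ _ _ => by positivity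
    _ = exp (64 * n) * (∑ k ∈ I, exp (-(k : ℝ) ^ 2)) ^ n := by
        rw [← mul_sum, ← prod_univ_sum (fun _ => I) fun _ k => exp (-(k : ℝ) ^ 2), prod_const,
          card_univ, Fintype.card_fin]
    _ ≤ exp (64 * n) * exp 2 ^ n := by gcongr
    _ = exp (66 * n) := by rw [← exp_nat_mul, ← exp_add]; ring_nf

lemma exists_int_abs_le_abs (t : ℝ) : ∃ k : ℤ, |(k : ℝ)| ≤ |t| ∧ |t - k| ≤ 1 := by
  rcases le_total 0 t with h | h
  · have h0 : (0 : ℝ) ≤ ⌊t⌋ := by exact_mod_cast Int.floor_nonneg.2 h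
    refine ⟨⌊t⌋, ?_, abs_le.2 ⟨?_, ?_⟩⟩
    · rw [abs_of_nonneg h0, abs_of_nonneg h]
      exact Int.floor_le t
    all_goals linarith [Int.floor_le t, Int.lt_floor_add_one t]
  · have h0 : (⌈t⌉ : ℝ) ≤ 0 := by exact_mod_cast Int.ceil_le.2 (by simpa using h)
    refine ⟨⌈t⌉, ?_, abs_le.2 ⟨?_, ?_⟩⟩
    · rw [abs_of_nonpos h0, abs_of_nonpos h]
      linarith [Int.le_ceil t]
    all_goals linarith [Int.le_ceil t, Int.ceil_lt_add_one t]

lemma exists_latticePoint_add (hn : 0 < n) {x : Fin n → ℝ} (hx : ∑ u, x u ^ 2 ≤ 1) :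
    ∃ z ∈ latticeNet n, ∃ r : Fin n → ℝ, ∑ u, r u ^ 2 ≤ 1 ∧
      x = fun u => latticePoint z u + 1 / 8 * r u := by
  have hsqrt : √(n : ℝ) ≠ 0 := (sqrt_pos.2 (by exact_mod_cast hn)).ne'
  have hsq : √(n : ℝ) ^ 2 = n := sq_sqrt n.cast_nonneg
  choose z hz hzr using fun u => exists_int_abs_le_abs (8 * √n * x u)
  refine ⟨z, mem_latticeNet.2 ?_, fun u => (8 * √n * x u - z u) / √n, ?_, ?_⟩
  · have : ∑ u, (z u : ℝ) ^ 2 ≤ 64 * n := by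
      calc ∑ u, (z u : ℝ) ^ 2 ≤ ∑ u, (8 * √n * x u) ^ 2 :=
            sum_le_sum fun u _ => sq_le_sq.2 (hz u)
        _ = 64 * n * ∑ u, x u ^ 2 := by
            simp only [mul_pow, hsq, mul_sum]
            norm_num
        _ ≤ 64 * n * 1 := by gcongr
        _ = 64 * n := mul_one _
    exact_mod_cast this
  · calc ∑ u, ((8 * √n * x u - z u) / √n) ^ 2 ≤ ∑ _u : Fin n, 1 / (n : ℝ) := by
          gcongr with u
          rw [div_pow, hsq]
          gcongr
          exact (sq_le_one_iff_abs_le_one _).2 (hzr u)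
      _ = 1 := by simp [hn.ne']
  · funext u
    rw [latticePoint]
    field_simp [hsqrt]
    ring

lemma abs_quadForm_le_of_latticeNet (hn : 0 < n) {M : Matrix (Fin n) (Fin n) ℝ} {s : ℝ}
    (h : ∀ z ∈ latticeNet n, |quadForm M (latticePoint z)| ≤ s) {x : Fin n → ℝ}
    (hx : ∑ u, x u ^ 2 ≤ 1) : |quadForm M x| ≤ 3 * s := by
  -- At a maximizer `y + r / 8` the terms involving `r` cost at most 33/64 of the maximum.
  obtain ⟨x₀, hx₀, hmax⟩ := exists_forall_abs_quadForm_le M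
  obtain ⟨z, hz, r, hr, rfl⟩ := exists_latticePoint_add hn hx₀
  set y := latticePoint z
  have hy : ∑ u, y u ^ 2 ≤ 1 := sum_latticePoint_sq_le_one hn hz
  have hmidpoint {e : Fin n → ℝ} (he : ∀ u, e u ^ 2 ≤ (y u ^ 2 + r u ^ 2) / 2) :
      ∑ u, e u ^ 2 ≤ 1 := by
    refine (sum_le_sum fun u _ => he u).trans ?_
    rw [← sum_div, sum_add_distrib]
    linarith
  have hnet := abs_le.1 (h z hz)
  have hadd := abs_le.1 (hmax (fun u => (y u + r u) / 2)
    (hmidpoint fun u => by nlinarith [sq_nonneg (y u - r u)]))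
  have hsub := abs_le.1 (hmax (fun u => (y u - r u) / 2)
    (hmidpoint fun u => by nlinarith [sq_nonneg (y u + r u)]))
  have hrem := abs_le.1 (hmax r hr)
  have hself : |quadForm M fun u => y u + 1 / 8 * r u| ≤
      s + 33 / 64 * |quadForm M fun u => y u + 1 / 8 * r u| := by
    conv_lhs => rw [quadForm_add_mul]
    rw [abs_le]
    constructor <;> linarith
  linarith [hmax x hx]

end LatticeNet

section LightHeavy

/-- The coefficient of the pair `{u, v}` in the light part of the quadratic form at `y`, the part
formed by the pairs with `|y u * y v| ≤ c`. -/
noncomputable def lightCoeff {n : ℕ} (c : ℝ) (y : Fin n → ℝ) (p : Pairs n) : ℝ :=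
  if |y p.1.1 * y p.1.2| ≤ c then 2 * (y p.1.1 * y p.1.2) else 0

lemma sum_pairs_eq_sum_sum {n : ℕ} (F : Fin n → Fin n → ℝ) :
    ∑ p : Pairs n, F p.1.1 p.1.2 = ∑ u, ∑ v, if u < v then F u v else 0 := by
  rw [← Fintype.sum_prod_type' (f := fun u v => if u < v then F u v else 0), ← sum_filter]
  exact (sum_subtype (univ.filter fun p : Fin n × Fin n => p.1 < p.2) (by simp)
    fun p => F p.1 p.2).symm

lemma sum_sum_eq_sum_pairs {n : ℕ} (F : Fin n → Fin n → ℝ) :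
    ∑ u, ∑ v, F u v = ∑ p : Pairs n, (F p.1.1 p.1.2 + F p.1.2 p.1.1) + ∑ u, F u u := by
  have hdiag : ∑ u, F u u = ∑ u, ∑ v, if u = v then F u v else 0 := by simp
  rw [sum_add_distrib, sum_pairs_eq_sum_sum F, sum_pairs_eq_sum_sum fun u v => F v u,
    sum_comm (f := fun u v => if u < v then F v u else 0), hdiag]
  simp only [← sum_add_distrib]
  refine sum_congr rfl fun u _ => sum_congr rfl fun v _ => ?_
  rcases lt_trichotomy u v with h | h | h
  · simp [h, h.ne, h.not_gt]
  · simp [h]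
  · simp [h, h.ne', h.not_gt]

lemma quadForm_eq_light_add_heavy {n : ℕ} {R : Matrix (Fin n) (Fin n) ℝ} (hR : R.IsSymm)
    (hdiag : ∀ u, R u u = 0) (c : ℝ) (y : Fin n → ℝ) :
    quadForm R y = ∑ p : Pairs n, lightCoeff c y p * R p.1.1 p.1.2 +
      ∑ u, ∑ v, if c < |y u * y v| then R u v * (y u * y v) else 0 := by
  have hlight : ∑ p : Pairs n, lightCoeff c y p * R p.1.1 p.1.2 =
      ∑ u, ∑ v, if |y u * y v| ≤ c then R u v * (y u * y v) else 0 := by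
    rw [sum_sum_eq_sum_pairs]
    simp only [hdiag, zero_mul, ite_self, sum_const_zero, add_zero]
    refine sum_congr rfl fun p _ => ?_
    rw [lightCoeff, hR.apply p.1.1 p.1.2, mul_comm (y p.1.2)]
    split_ifs <;> ring
  rw [hlight, quadForm]
  simp only [← sum_add_distrib, ← not_lt]
  refine sum_congr rfl fun u _ => sum_congr rfl fun v _ => ?_
  split_ifs <;> ring

variable {V : Type*} {N d : ℝ} {A R : Matrix V V ℝ} {y : V → ℝ}

lemma abs_heavy_term_le (hN : 0 < N) (hd : 0 < d) (hR : ∀ u v, |R u v| ≤ A u v + 2 * d / N)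
    (u v : V) :
    |if √d / N < |y u * y v| then R u v * (y u * y v) else 0| ≤
      (if √d / N < |y u * y v| then A u v * |y u * y v| else 0) +
        2 * √d * (y u ^ 2 * y v ^ 2) := by
  split_ifs with h
  · rw [div_lt_iff₀ hN] at h
    have hmean : 2 * d / N * |y u * y v| ≤ 2 * √d * (y u ^ 2 * y v ^ 2) := by
      calc 2 * d / N * |y u * y v| = 2 * √d / N * |y u * y v| * √d := by
            nth_rewrite 1 [← mul_self_sqrt hd.le]
            ring
        _ ≤ 2 * √d / N * |y u * y v| * (|y u * y v| * N) := by gcongr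
        _ = 2 * √d * |y u * y v| ^ 2 := by field_simp
        _ = 2 * √d * (y u ^ 2 * y v ^ 2) := by rw [sq_abs, mul_pow]
    calc |R u v * (y u * y v)| ≤ (A u v + 2 * d / N) * |y u * y v| := by
          rw [abs_mul]
          gcongr
          exact hR u v
      _ ≤ A u v * |y u * y v| + 2 * √d * (y u ^ 2 * y v ^ 2) := by
          rw [add_mul]
          gcongr
  · rw [abs_zero]
    positivity

variable [Fintype V]

lemma sum_heavy_le_of_sum_sq_le_one (hN : 0 < N) (hd : 0 < d) (hA0 : ∀ u v, 0 ≤ A u v)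
    (hA : A.IsSymm) (hy : ∑ u, y u ^ 2 ≤ 1) (hdeg : ∀ u, y u ≠ 0 → ∑ v, A u v ≤ 3 / 2 * d)
    (hdisc : HasDiscrepancy N d A) :
    ∑ u, ∑ v, (if √d / N < |y u * y v| then A u v * |y u * y v| else 0) ≤ heavyConst * √d := by
  have hδ : √(√d) ^ 2 = √d := sq_sqrt (sqrt_nonneg d)
  have hδd : √(√d) ^ 4 = d := by rw [show 4 = 2 * 2 by rfl, pow_mul, hδ, sq_sqrt hd.le]
  have hscale (u v : V) : √N * |y u| * (√N * |y v|) = N * |y u * y v| := by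
    rw [abs_mul, mul_mul_mul_comm, mul_self_sqrt hN.le]
  have h := sum_heavy_le (δ := √(√d)) (X := fun u => √N * |y u|) hN (by positivity) hA0 hA
    (fun u => by positivity)
    (by simpa [mul_pow, sq_sqrt hN.le, ← mul_sum] using mul_le_of_le_one_right hN.le hy)
    (fun u hu => by
      rw [hδd]
      exact hdeg u fun h => by simp [h] at hu)
    (hδd.symm ▸ hdisc)
  refine le_of_mul_le_mul_left ?_ hN
  calc N * ∑ u, ∑ v, (if √d / N < |y u * y v| then A u v * |y u * y v| else 0) =
        ∑ u, ∑ v, (if √d < N * |y u * y v| then A u v * (N * |y u * y v|) else 0) := by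
        simp only [mul_sum, div_lt_iff₀' hN]
        refine sum_congr rfl fun u _ => sum_congr rfl fun v _ => ?_
        split_ifs <;> ring
    _ ≤ heavyConst * (N * √d) := by simpa only [hscale, hδ] using h
    _ = N * (heavyConst * √d) := by ring

lemma abs_sum_heavy_le (hN : 0 < N) (hd : 0 < d) (hA0 : ∀ u v, 0 ≤ A u v) (hA : A.IsSymm)
    (hR : ∀ u v, |R u v| ≤ A u v + 2 * d / N) (hy : ∑ u, y u ^ 2 ≤ 1)
    (hdeg : ∀ u, y u ≠ 0 → ∑ v, A u v ≤ 3 / 2 * d) (hdisc : HasDiscrepancy N d A) :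
    |∑ u, ∑ v, if √d / N < |y u * y v| then R u v * (y u * y v) else 0| ≤
      (heavyConst + 2) * √d := by
  have hy0 : 0 ≤ ∑ u, y u ^ 2 := sum_nonneg fun u _ => sq_nonneg _
  calc |∑ u, ∑ v, if √d / N < |y u * y v| then R u v * (y u * y v) else 0|
      ≤ ∑ u, ∑ v, |if √d / N < |y u * y v| then R u v * (y u * y v) else 0| :=
        (abs_sum_le_sum_abs _ _).trans (sum_le_sum fun u _ => abs_sum_le_sum_abs _ _)
    _ ≤ ∑ u, ∑ v, ((if √d / N < |y u * y v| then A u v * |y u * y v| else 0) +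
          2 * √d * (y u ^ 2 * y v ^ 2)) :=
        sum_le_sum fun u _ => sum_le_sum fun v _ => abs_heavy_term_le hN hd hR u v
    _ = ∑ u, ∑ v, (if √d / N < |y u * y v| then A u v * |y u * y v| else 0) +
          2 * √d * ((∑ u, y u ^ 2) * ∑ u, y u ^ 2) := by
        simp only [sum_add_distrib, ← mul_sum, sum_mul_sum]
    _ ≤ heavyConst * √d + 2 * √d * 1 := by
        gcongr
        · exact sum_heavy_le_of_sum_sq_le_one hN hd hA0 hA hy hdeg hdisc
        · exact mul_le_one₀ hy hy0 hy
    _ = (heavyConst + 2) * √d := by ring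

end LightHeavy

section Restriction

variable {V : Type*} [Fintype V] [DecidableEq V]

lemma abs_sq_sum_sub_sq_sum_le {s x : V → ℝ} (hs : ∀ u, |s u| ≤ 1) (hx : ∑ u, x u ^ 2 ≤ 1)
    {S : Finset V} {ε : ℝ} (hε : 0 ≤ ε) (hS : #Sᶜ ≤ ε ^ 2 * Fintype.card V) :
    |(∑ u ∈ S, s u * x u) ^ 2 - (∑ u, s u * x u) ^ 2| ≤ 2 * ε * Fintype.card V := by
  set N := (Fintype.card V : ℝ)
  have hN : 0 ≤ N := Nat.cast_nonneg _
  have hcauchy (T : Finset V) : |∑ u ∈ T, s u * x u| ≤ √(#T) := by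
    refine abs_le_sqrt ((sum_mul_sq_le_sq_mul_sq T s x).trans ?_)
    have hs2 : ∑ u ∈ T, s u ^ 2 ≤ #T := by
      simpa using sum_le_card_nsmul T (fun u => s u ^ 2) 1 fun u _ =>
        (sq_le_one_iff_abs_le_one _).2 (hs u)
    have hx2 : ∑ u ∈ T, x u ^ 2 ≤ 1 :=
      (sum_le_univ_sum_of_nonneg fun u => sq_nonneg (x u)).trans hx
    simpa using mul_le_mul hs2 hx2 (sum_nonneg fun u _ => sq_nonneg _) (Nat.cast_nonneg _)
  have hle (T : Finset V) : |∑ u ∈ T, s u * x u| ≤ √N :=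
    (hcauchy T).trans (sqrt_le_sqrt (Nat.cast_le.2 (card_le_univ T)))
  have hcompl : |∑ u ∈ Sᶜ, s u * x u| ≤ ε * √N := by
    calc |∑ u ∈ Sᶜ, s u * x u| ≤ √(ε ^ 2 * N) := (hcauchy _).trans (sqrt_le_sqrt hS)
      _ = ε * √N := by rw [sqrt_mul (sq_nonneg ε), sqrt_sq hε]
  calc |(∑ u ∈ S, s u * x u) ^ 2 - (∑ u, s u * x u) ^ 2|
      = |∑ u ∈ Sᶜ, s u * x u| * |∑ u ∈ S, s u * x u + ∑ u, s u * x u| := by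
        rw [← abs_mul, ← abs_neg, ← sum_add_sum_compl S fun u => s u * x u]
        ring_nf
    _ ≤ ε * √N * (√N + √N) := by
        gcongr
        exact (abs_add_le _ _).trans (add_le_add (hle S) (hle univ))
    _ = 2 * ε * (√N * √N) := by ring
    _ = 2 * ε * N := by rw [mul_self_sqrt hN]

end Restriction

section WeightedAdjacency

/-- The weight carried by a pair: `w ℓ` on an edge with label `ℓ`, and `0` without an edge. -/
def labelWeight (w : L → ℝ) (o : Option L) : ℝ := o.elim 0 w

/-- The unweighted adjacency matrix. -/
def adjMat {n : ℕ} (E : EdgeConf n L) : Matrix (Fin n) (Fin n) ℝ := Wmat (fun _ => 1) E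

variable {n : ℕ} {w : L → ℝ} {E : EdgeConf n L}

lemma getLabel_symm (E : EdgeConf n L) (u v : Fin n) : getLabel E u v = getLabel E v u := by
  unfold getLabel
  rcases lt_trichotomy u v with h | h | h
  · simp [h, h.not_gt]
  · simp [h]
  · simp [h, h.not_gt]

lemma Wmat_eq_labelWeight (w : L → ℝ) (E : EdgeConf n L) (u v : Fin n) :
    Wmat w E u v = labelWeight w (getLabel E u v) := by
  unfold Wmat
  cases getLabel E u v <;> rfl

lemma Wmat_pair (w : L → ℝ) (E : EdgeConf n L) (p : Pairs n) :
    Wmat w E p.1.1 p.1.2 = labelWeight w (E p) := by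
  rw [Wmat_eq_labelWeight, getLabel, dif_pos p.2]

lemma Wmat_self (w : L → ℝ) (E : EdgeConf n L) (u : Fin n) : Wmat w E u u = 0 := by
  simp [Wmat_eq_labelWeight, getLabel, labelWeight]

lemma Wmat_isSymm (w : L → ℝ) (E : EdgeConf n L) : (Wmat w E).IsSymm :=
  Matrix.IsSymm.ext fun u v => by
    rw [Wmat_eq_labelWeight, Wmat_eq_labelWeight, getLabel_symm]

lemma adjMat_nonneg (E : EdgeConf n L) (u v : Fin n) : 0 ≤ adjMat E u v := by
  rw [adjMat, Wmat_eq_labelWeight]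
  cases getLabel E u v <;> simp [labelWeight]

lemma abs_Wmat_le_adjMat (hw : ∀ ℓ, |w ℓ| ≤ 1) (E : EdgeConf n L) (u v : Fin n) :
    |Wmat w E u v| ≤ adjMat E u v := by
  rw [adjMat, Wmat_eq_labelWeight, Wmat_eq_labelWeight]
  cases getLabel E u v <;> simp [labelWeight, hw]

lemma degree_eq_sum_adjMat (E : EdgeConf n L) (u : Fin n) :
    (degree E u : ℝ) = ∑ v, adjMat E u v := by
  rw [degree, card_filter]
  push_cast
  refine sum_congr rfl fun v _ => ?_
  rw [adjMat, Wmat_eq_labelWeight]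
  cases getLabel E u v <;> simp [labelWeight]

end WeightedAdjacency

section Centering

variable {n : ℕ} {w : L → ℝ} {E : EdgeConf n L} {s : Fin n → ℝ} {d al be : ℝ}

/-- The weighted adjacency matrix minus the conditional mean `(al + be * s u * s v) / n` of its
off-diagonal entries under the labeled block model with types `s`. -/
noncomputable def centeredMat (w : L → ℝ) (E : EdgeConf n L) (al be : ℝ) (s : Fin n → ℝ) :
    Matrix (Fin n) (Fin n) ℝ :=
  fun u v => if u = v then 0 else Wmat w E u v - (al + be * (s u * s v)) / n

lemma IsSignVec.mul_self (hs : IsSignVec s) (u : Fin n) : s u * s u = 1 := by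
  rcases hs u with h | h <;> simp [h]

lemma IsSignVec.abs_eq_one (hs : IsSignVec s) (u : Fin n) : |s u| = 1 := by
  rcases hs u with h | h <;> simp [h]

lemma centeredMat_self (u : Fin n) : centeredMat w E al be s u u = 0 := if_pos rfl

lemma centeredMat_isSymm : (centeredMat w E al be s).IsSymm :=
  Matrix.IsSymm.ext fun u v => by
    simp only [centeredMat, eq_comm (a := u), (Wmat_isSymm w E).apply u v, mul_comm (s u)]

lemma abs_centeredMat_le (hw : ∀ ℓ, |w ℓ| ≤ 1) (hs : IsSignVec s) (hal : |al| ≤ d)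
    (hbe : |be| ≤ d) (u v : Fin n) :
    |centeredMat w E al be s u v| ≤ adjMat E u v + 2 * d / n := by
  have hd : 0 ≤ d := (abs_nonneg al).trans hal
  have hA := adjMat_nonneg E u v
  have hmean : |(al + be * (s u * s v)) / n| ≤ 2 * d / n := by
    rw [abs_div, Nat.abs_cast]
    gcongr
    calc |al + be * (s u * s v)| ≤ |al| + |be * (s u * s v)| := abs_add_le _ _
      _ = |al| + |be| := by simp [abs_mul, hs.abs_eq_one]
      _ ≤ 2 * d := by linarith
  rw [centeredMat]
  split_ifs
  · rw [abs_zero]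
    positivity
  · exact (abs_sub _ _).trans (add_le_add (abs_Wmat_le_adjMat hw E u v) hmean)

lemma quadForm_Wmat (hs : IsSignVec s) (w : L → ℝ) (E : EdgeConf n L) (al be : ℝ)
    (x : Fin n → ℝ) :
    quadForm (Wmat w E) x = quadForm (centeredMat w E al be s) x + al / n * (∑ u, x u) ^ 2 +
      be / n * (∑ u, s u * x u) ^ 2 - (al + be) / n * ∑ u, x u ^ 2 := by
  have hterm (u v : Fin n) : x u * Wmat w E u v * x v =
      x u * centeredMat w E al be s u v * x v + al / n * (x u * x v) +
        be / n * (s u * x u * (s v * x v)) - (if u = v then (al + be) / n * x u ^ 2 else 0) := by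
    rw [centeredMat]
    split_ifs with h
    · subst h
      rw [Wmat_self]
      linear_combination be / n * x u ^ 2 * (-hs.mul_self u)
    · ring
  simp only [quadForm, hterm, sum_sub_distrib, sum_add_distrib, sum_ite_eq, mem_univ, if_true, sq,
    sum_mul_sum]
  simp only [mul_sum]

end Centering

section Pruning

/-- The average degree `(a + b) / 2` of the block model. -/
noncomputable def meanDegree (a b : ℝ) : ℝ := (a + b) / 2

/-- The parameter `α` of the spectral method. -/
noncomputable def alpha [Fintype L] (a b : ℝ) (μ ν w : L → ℝ) : ℝ :=
  (1 / 2) * ∑ ℓ, w ℓ * (a * μ ℓ + b * ν ℓ)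

/-- The parameter `β` of the spectral method. -/
noncomputable def beta [Fintype L] (a b : ℝ) (μ ν w : L → ℝ) : ℝ :=
  (1 / 2) * ∑ ℓ, w ℓ * (a * μ ℓ - b * ν ℓ)

/-- The vertices whose edges survive the pruning. -/
noncomputable def lowDegree {n : ℕ} (d : ℝ) (E : EdgeConf n L) : Finset (Fin n) :=
  {u | (degree E u : ℝ) ≤ 3 / 2 * d}

variable {n : ℕ} {d al be : ℝ} {w : L → ℝ} {E : EdgeConf n L} {s x : Fin n → ℝ}

lemma mem_lowDegree {u : Fin n} : u ∈ lowDegree d E ↔ (degree E u : ℝ) ≤ 3 / 2 * d := by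
  simp [lowDegree]

lemma quadForm_Dmat [Fintype L] (a b : ℝ) (μ ν w : L → ℝ) (E : EdgeConf n L) (x : Fin n → ℝ) :
    quadForm (Dmat a b μ ν w E) x =
      quadForm (Wmat w E) (fun u => if u ∈ lowDegree (meanDegree a b) E then x u else 0) -
        alpha a b μ ν w / n * (∑ u, x u) ^ 2 := by
  rw [← quadForm_mask]
  simp only [quadForm, sq, sum_mul_sum]
  simp only [mul_sum, ← sum_sub_distrib]
  refine sum_congr rfl fun u _ => sum_congr rfl fun v _ => ?_
  simp only [Dmat, prunedW, mem_lowDegree, meanDegree, alpha]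
  ring

/-- The deterministic properties of a configuration `E` with types `s` on which the analysis of the
spectral method rests; they hold asymptotically almost surely in the block model. The constants
`200` and `300` leave room for the union bounds over vertex sets and over the lattice net. -/
structure IsTypical (d : ℝ) (w : L → ℝ) (al be : ℝ) (s : Fin n → ℝ) (E : EdgeConf n L) :
    Prop where
  hasDiscrepancy : HasDiscrepancy n d (adjMat E)
  card_compl_lowDegree_le : #(lowDegree d E)ᶜ ≤ 200 * n / d
  abs_light_le : ∀ z ∈ latticeNet n, |∑ p : Pairs n, lightCoeff (√d / n) (latticePoint z) p *
    centeredMat w E al be s p.1.1 p.1.2| ≤ 300 * √d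

lemma ite_latticePoint_eq (S : Finset (Fin n)) (z : Fin n → ℤ) :
    (fun u => if u ∈ S then latticePoint z u else 0) =
      latticePoint fun u => if u ∈ S then z u else 0 := by
  funext u
  by_cases hu : u ∈ S <;> simp [latticePoint, hu]

lemma ite_mem_latticeNet {z : Fin n → ℤ} (hz : z ∈ latticeNet n) (S : Finset (Fin n)) :
    (fun u => if u ∈ S then z u else 0) ∈ latticeNet n := by
  refine mem_latticeNet.2 ((sum_le_sum fun u _ => ?_).trans (mem_latticeNet.1 hz))
  split_ifs
  · exact le_rfl
  · positivity

lemma IsTypical.abs_quadForm_centeredMat_le (h : IsTypical d w al be s E) (hn : 0 < n)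
    (hd : 0 < d) (hw : ∀ ℓ, |w ℓ| ≤ 1) (hs : IsSignVec s) (hal : |al| ≤ d) (hbe : |be| ≤ d)
    (hx : ∑ u, x u ^ 2 ≤ 1) :
    |quadForm (centeredMat w E al be s) fun u => if u ∈ lowDegree d E then x u else 0| ≤
      3 * ((302 + heavyConst) * √d) := by
  rw [← quadForm_mask]
  refine abs_quadForm_le_of_latticeNet hn (fun z hz => ?_) hx
  have hz' := ite_mem_latticeNet hz (lowDegree d E)
  rw [quadForm_mask, ite_latticePoint_eq,
    quadForm_eq_light_add_heavy centeredMat_isSymm centeredMat_self (√d / n)]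
  have hheavy := abs_sum_heavy_le (by exact_mod_cast hn) hd (adjMat_nonneg E) (Wmat_isSymm _ E)
    (abs_centeredMat_le hw hs hal hbe) (sum_latticePoint_sq_le_one hn hz')
    (fun u hu => by
      rw [← degree_eq_sum_adjMat, ← mem_lowDegree]
      by_contra hlow
      simp [latticePoint, hlow] at hu)
    h.hasDiscrepancy
  refine (abs_add_le _ _).trans ((add_le_add (h.abs_light_le _ hz') hheavy).trans_eq ?_)
  ring

lemma IsTypical.abs_div_mul_restriction_le (h : IsTypical d w al be s E) (hn : 0 < n)
    (hd : 0 < d) (hx : ∑ u, x u ^ 2 ≤ 1) {c : ℝ} (hc : |c| ≤ d) {t : Fin n → ℝ}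
    (ht : ∀ u, |t u| ≤ 1) :
    |c / n * ((∑ u ∈ lowDegree d E, t u * x u) ^ 2 - (∑ u, t u * x u) ^ 2)| ≤ 30 * √d := by
  have hdiff := abs_sq_sum_sub_sq_sum_le (ε := 15 / √d) ht hx (by positivity)
    (h.card_compl_lowDegree_le.trans <| by
      rw [div_pow, sq_sqrt hd.le, Fintype.card_fin, div_mul_eq_mul_div]
      gcongr
      norm_num)
  rw [Fintype.card_fin] at hdiff
  rw [abs_mul, abs_div, Nat.abs_cast]
  calc |c| / n * |(∑ u ∈ lowDegree d E, t u * x u) ^ 2 - (∑ u, t u * x u) ^ 2|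
      ≤ d / n * (2 * (15 / √d) * n) := by gcongr
    _ = 30 * (d / √d) := by
        have : (n : ℝ) ≠ 0 := by exact_mod_cast hn.ne'
        field_simp
        ring
    _ = 30 * √d := by rw [div_sqrt]

/-- The constant in the bound `spectralConst * √d` on the deviation of `D'` from its mean on unit
vectors. -/
noncomputable def spectralConst : ℝ := 3 * (302 + heavyConst) + 62

lemma IsTypical.abs_quadForm_Dmat_sub_le [Fintype L] {a b : ℝ} {μ ν : L → ℝ}
    (h : IsTypical (meanDegree a b) w (alpha a b μ ν w) (beta a b μ ν w) s E)
    (hd : 1 ≤ meanDegree a b) (hn : meanDegree a b ≤ n) (hw : ∀ ℓ, |w ℓ| ≤ 1)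
    (hs : IsSignVec s) (hal : |alpha a b μ ν w| ≤ meanDegree a b)
    (hbe : |beta a b μ ν w| ≤ meanDegree a b) (hx : ∑ u, x u ^ 2 ≤ 1) :
    |quadForm (Dmat a b μ ν w E) x - beta a b μ ν w / n * (∑ u, s u * x u) ^ 2| ≤
      spectralConst * √(meanDegree a b) := by
  set d := meanDegree a b
  set al := alpha a b μ ν w
  set be := beta a b μ ν w
  have hd0 : 0 < d := by linarith
  have hn' : (0 : ℝ) < n := by linarith
  have hn0 : 0 < n := by exact_mod_cast hn'
  have hcentered := abs_le.1 (h.abs_quadForm_centeredMat_le hn0 hd0 hw hs hal hbe hx)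
  have hone := abs_le.1 (h.abs_div_mul_restriction_le hn0 hd0 hx hal (t := fun _ => 1) (by simp))
  have hsign := abs_le.1 (h.abs_div_mul_restriction_le hn0 hd0 hx hbe fun u => (hs.abs_eq_one u).le)
  have hdiag : |(al + be) / n * ∑ u ∈ lowDegree d E, x u ^ 2| ≤ 2 * √d := by
    have hsum : |al + be| ≤ 2 * d := (abs_add_le _ _).trans (by linarith)
    have hlow : ∑ u ∈ lowDegree d E, x u ^ 2 ≤ 1 :=
      (sum_le_univ_sum_of_nonneg fun u => sq_nonneg (x u)).trans hx
    rw [abs_mul, abs_div, Nat.abs_cast, abs_of_nonneg (sum_nonneg fun u _ => sq_nonneg (x u))]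
    calc |al + be| / n * ∑ u ∈ lowDegree d E, x u ^ 2 ≤ 2 * d / n * 1 := by gcongr
      _ ≤ 2 * 1 := by rw [mul_one, mul_div_assoc]; gcongr; exact (div_le_one hn').2 hn
      _ ≤ 2 * √d := by gcongr; exact one_le_sqrt.2 hd
  have hdiag' := abs_le.1 hdiag
  rw [quadForm_Dmat, quadForm_Wmat hs w E al be]
  simp only [ite_pow, mul_ite, mul_zero, one_mul, ne_eq, OfNat.ofNat_ne_zero, not_false_eq_true,
    zero_pow, sum_ite_mem, univ_inter] at hone hsign ⊢
  rw [spectralConst, abs_le]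
  constructor <;> linarith

end Pruning

section Overlap

variable {n : ℕ} {s x : Fin n → ℝ}

lemma hamming_signR_le_sum_sq (hs : IsSignVec s) {c : ℝ} (hc : 0 ≤ c) :
    (hamming s (signR x) : ℝ) ≤ ∑ u, (c * x u - s u) ^ 2 := by
  rw [hamming, card_filter]
  push_cast
  refine sum_le_sum fun u _ => ?_
  rw [signR]
  rcases hs u with h | h <;> by_cases hx : 0 ≤ x u <;> simp only [h, hx, if_true, if_false]
  · simpa using sq_nonneg (c * x u - 1)
  · norm_num
    exact le_abs.2 (Or.inr (by nlinarith))
  · norm_num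
    exact le_abs.2 (Or.inl (by nlinarith))
  · simpa using sq_nonneg (c * x u - -1)

lemma hamming_signR_le (hs : IsSignVec s) (hx : ∑ u, x u ^ 2 = 1)
    (hcorr : 7 / 8 * √n ≤ ∑ u, s u * x u) : (hamming s (signR x) : ℝ) ≤ n / 4 := by
  have hsq : √(n : ℝ) ^ 2 = n := sq_sqrt n.cast_nonneg
  calc (hamming s (signR x) : ℝ) ≤ ∑ u, (√n * x u - s u) ^ 2 :=
        hamming_signR_le_sum_sq hs (sqrt_nonneg _)
    _ = ∑ u, (n * x u ^ 2 - 2 * √n * (s u * x u) + 1) := by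
        refine sum_congr rfl fun u _ => ?_
        linear_combination x u ^ 2 * hsq + hs.mul_self u
    _ = 2 * n - 2 * √n * ∑ u, s u * x u := by
        rw [sum_add_distrib, sum_sub_distrib, ← mul_sum, ← mul_sum, hx]
        simp
        ring
    _ ≤ n / 4 := by nlinarith [sqrt_nonneg (n : ℝ)]

lemma hamming_neg_left (x y : Fin n → ℝ) : hamming (-x) y = hamming x (-y) := by
  classical
  unfold hamming
  congr 1
  ext u
  simp [neg_eq_iff_eq_neg]

lemma IsSignVec.neg (hs : IsSignVec s) : IsSignVec (-s) := fun u => by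
  rcases hs u with h | h <;> simp [h]

lemma overlap_signR_pos (hn : 0 < n) (hs : IsSignVec s) (hx : ∑ u, x u ^ 2 = 1)
    (hcorr : 7 / 8 * √n ≤ |∑ u, s u * x u|) : 0 < overlap n s (signR x) := by
  have hmin : min (hamming s (signR x) : ℝ) (hamming s (-signR x)) ≤ n / 4 := by
    rcases le_abs.1 hcorr with h | h
    · exact (min_le_left _ _).trans (hamming_signR_le hs hx h)
    · refine (min_le_right _ _).trans ?_
      rw [← hamming_neg_left]
      exact hamming_signR_le hs.neg hx (by simpa using h)
  have : 1 / (n : ℝ) * min (hamming s (signR x) : ℝ) (hamming s (-signR x)) ≤ 1 / 4 := by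
    calc 1 / (n : ℝ) * min (hamming s (signR x) : ℝ) (hamming s (-signR x))
        ≤ 1 / n * (n / 4) := by gcongr
      _ = 1 / 4 := by field_simp
  rw [overlap]
  linarith

-- The normalized type vector `s / √n` is the competitor: its quadratic form is about `be`.
lemma le_abs_sum_mul_of_maximizer (hn : 0 < n) (hs : IsSignVec s) {Q : (Fin n → ℝ) → ℝ} {be : ℝ}
    (hbe : be ≠ 0)
    (hQ : ∀ y : Fin n → ℝ, ∑ u, y u ^ 2 = 1 →
      |Q y - be / n * (∑ u, s u * y u) ^ 2| ≤ |be| / 17)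
    (hx : ∑ u, x u ^ 2 = 1) (hmax : ∀ y : Fin n → ℝ, ∑ u, y u ^ 2 = 1 → |Q y| ≤ |Q x|) :
    7 / 8 * √n ≤ |∑ u, s u * x u| := by
  have hn' : (0 : ℝ) < n := by exact_mod_cast hn
  have hsq : √(n : ℝ) ^ 2 = n := sq_sqrt hn'.le
  have hb : 0 < |be| := abs_pos.2 hbe
  set P := ∑ u, s u * x u
  have hunit : ∑ u, (s u / √n) ^ 2 = 1 := by
    simp [div_pow, hsq, sq (s _), hs.mul_self, hn'.ne']
  have hinner : ∑ u, s u * (s u / √n) = √n := by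
    simp [← mul_div_assoc, hs.mul_self, ← div_eq_mul_inv]
  have hcompetitor := hQ _ hunit
  rw [hinner, hsq, div_mul_cancel₀ _ hn'.ne'] at hcompetitor
  have hlower : |be| - |be| / 17 ≤ |Q x| := by
    have := abs_sub_abs_le_abs_sub be (Q fun u => s u / √n)
    rw [abs_sub_comm] at this
    linarith [hmax _ hunit]
  have hupper : |Q x| ≤ |be| / 17 + |be| * (P ^ 2 / n) := by
    have := abs_sub_abs_le_abs_sub (Q x) (be / n * P ^ 2)
    rw [abs_mul, abs_div, Nat.abs_cast, abs_of_nonneg (sq_nonneg P), div_mul_eq_mul_div,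
      mul_div_assoc] at this
    linarith [hQ x hx]
  have hP : 15 / 17 * n ≤ P ^ 2 :=
    (le_div_iff₀ hn').1 (le_of_mul_le_mul_left (by linarith) hb)
  refine le_of_sq_le_sq ?_ (abs_nonneg P)
  rw [mul_pow, hsq, sq_abs]
  linarith

end Overlap

section EdgeMeasure

open MeasureTheory ProbabilityTheory

/-- The parameters for which the masses of the labeled block model on `n` vertices are
probabilities. -/
structure IsAdmissible [Fintype L] (n : ℕ) (a b : ℝ) (μ ν : L → ℝ) : Prop where
  isProbVec_same : IsProbVec μ
  isProbVec_diff : IsProbVec ν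
  nonneg_same : 0 ≤ a
  nonneg_diff : 0 ≤ b
  le_same : a ≤ n
  le_diff : b ≤ n

/-- The conditional law of the configuration given the types `σ`. -/
noncomputable def edgeMeasure [Fintype L] [MeasurableSpace (Option L)] (n : ℕ) (a b : ℝ)
    (μ ν : L → ℝ) (σ : Fin n → Bool) : Measure (EdgeConf n L) :=
  Measure.pi fun p => massMeasure (sbmPairMass n a b μ ν (σ p.1.1 == σ p.1.2))

variable {n : ℕ} {a b : ℝ} {μ ν w : L → ℝ}

lemma isSignVec_signVec (σ : Fin n → Bool) : IsSignVec (signVec σ) := fun u => by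
  cases h : σ u <;> simp [signVec, h]

lemma signVec_mul_signVec (σ : Fin n → Bool) (u v : Fin n) :
    signVec σ u * signVec σ v = if σ u == σ v then 1 else -1 := by
  cases hu : σ u <;> cases hv : σ v <;> simp [signVec, hu, hv]

variable [Fintype L]

lemma alpha_one (hμ : IsProbVec μ) (hν : IsProbVec ν) :
    alpha a b μ ν (fun _ => 1) = meanDegree a b := by
  simp [alpha, meanDegree, sum_add_distrib, ← mul_sum, hμ.2, hν.2, div_eq_inv_mul]

lemma beta_one (hμ : IsProbVec μ) (hν : IsProbVec ν) :
    beta a b μ ν (fun _ => 1) = (a - b) / 2 := by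
  simp [beta, sum_sub_distrib, ← mul_sum, hμ.2, hν.2, div_eq_inv_mul]

lemma sum_sbmPairMass_mul_labelWeight (w : L → ℝ) (σ : Fin n → Bool) (u v : Fin n) :
    ∑ o, sbmPairMass n a b μ ν (σ u == σ v) o * labelWeight w o =
      (alpha a b μ ν w + beta a b μ ν w * (signVec σ u * signVec σ v)) / n := by
  rw [Fintype.sum_option, signVec_mul_signVec, alpha, beta]
  cases σ u == σ v <;>
    simp only [sbmPairMass, labelWeight, Option.elim, if_true, Bool.false_eq_true, if_false,
      mul_zero, zero_add, mul_one, mul_neg, ← sub_eq_add_neg, ← mul_sub, ← mul_add,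
      ← sum_sub_distrib, ← sum_add_distrib, mul_sum, sum_div]
  all_goals exact sum_congr rfl fun ℓ _ => by ring

namespace IsAdmissible

variable (h : IsAdmissible n a b μ ν)
include h

lemma meanDegree_le : meanDegree a b ≤ n := by
  rw [meanDegree]
  linarith [h.le_same, h.le_diff]

lemma abs_half_sum_le (hw : ∀ ℓ, |w ℓ| ≤ 1) {c : L → ℝ} (hc : ∀ ℓ, |c ℓ| ≤ a * μ ℓ + b * ν ℓ) :
    |1 / 2 * ∑ ℓ, w ℓ * c ℓ| ≤ meanDegree a b := by
  rw [← alpha_one h.isProbVec_same h.isProbVec_diff, alpha, abs_mul, abs_of_pos one_half_pos]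
  gcongr
  refine (abs_sum_le_sum_abs _ _).trans (sum_le_sum fun ℓ _ => ?_)
  rw [abs_mul]
  exact mul_le_mul (hw ℓ) (hc ℓ) (abs_nonneg _) zero_le_one

lemma abs_alpha_le (hw : ∀ ℓ, |w ℓ| ≤ 1) : |alpha a b μ ν w| ≤ meanDegree a b :=
  h.abs_half_sum_le hw fun ℓ =>
    (abs_of_nonneg (add_nonneg (mul_nonneg h.nonneg_same (h.isProbVec_same.1 ℓ))
      (mul_nonneg h.nonneg_diff (h.isProbVec_diff.1 ℓ)))).le

lemma abs_beta_le (hw : ∀ ℓ, |w ℓ| ≤ 1) : |beta a b μ ν w| ≤ meanDegree a b :=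
  h.abs_half_sum_le hw fun ℓ => by
    have := mul_nonneg h.nonneg_same (h.isProbVec_same.1 ℓ)
    have := mul_nonneg h.nonneg_diff (h.isProbVec_diff.1 ℓ)
    exact abs_le.2 ⟨by linarith, by linarith⟩

lemma sbmPairMass_nonneg (same : Bool) (o : Option L) : 0 ≤ sbmPairMass n a b μ ν same o := by
  have ha := h.nonneg_same
  have hb := h.nonneg_diff
  have han : a / n ≤ 1 := div_le_one_of_le₀ h.le_same n.cast_nonneg
  have hbn : b / n ≤ 1 := div_le_one_of_le₀ h.le_diff n.cast_nonneg
  rcases o with _ | ℓ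
  · cases same <;> simpa [sbmPairMass]
  · have := h.isProbVec_same.1 ℓ
    have := h.isProbVec_diff.1 ℓ
    cases same <;> simp only [sbmPairMass, if_true, Bool.false_eq_true, if_false] <;> positivity

lemma sum_sbmPairMass (same : Bool) : ∑ o, sbmPairMass n a b μ ν same o = 1 := by
  rw [Fintype.sum_option]
  cases same <;> simp [sbmPairMass, ← mul_sum, h.isProbVec_same.2, h.isProbVec_diff.2]

variable [MeasurableSpace (Option L)] (σ : Fin n → Bool)

lemma isProbabilityMeasure_edgeMeasure : IsProbabilityMeasure (edgeMeasure n a b μ ν σ) :=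
  have (p : Pairs n) := isProbabilityMeasure_massMeasure
    (h.sbmPairMass_nonneg (σ p.1.1 == σ p.1.2)) (h.sum_sbmPairMass _)
  inferInstanceAs (IsProbabilityMeasure (Measure.pi _))

variable [MeasurableSingletonClass (Option L)]

lemma iIndepFun_edgeMeasure {f : Pairs n → Option L → ℝ} :
    iIndepFun (fun p E => f p (E p)) (edgeMeasure n a b μ ν σ) :=
  have (p : Pairs n) := isProbabilityMeasure_massMeasure
    (h.sbmPairMass_nonneg (σ p.1.1 == σ p.1.2)) (h.sum_sbmPairMass _)
  iIndepFun_pi fun p => (measurable_of_finite (f p)).aemeasurable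

lemma integral_edgeMeasure (f : Option L → ℝ) (p : Pairs n) :
    ∫ E, f (E p) ∂edgeMeasure n a b μ ν σ =
      ∑ o, sbmPairMass n a b μ ν (σ p.1.1 == σ p.1.2) o * f o :=
  integral_pi_massMeasure_eval (fun _ => h.sbmPairMass_nonneg _) (fun _ => h.sum_sbmPairMass _) f p

lemma integral_labelWeight (w : L → ℝ) (p : Pairs n) :
    ∫ E, labelWeight w (E p) ∂edgeMeasure n a b μ ν σ =
      (alpha a b μ ν w + beta a b μ ν w * (signVec σ p.1.1 * signVec σ p.1.2)) / n := by
  rw [h.integral_edgeMeasure, sum_sbmPairMass_mul_labelWeight]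

lemma integral_labelWeight_sq_le (hw : ∀ ℓ, |w ℓ| ≤ 1) (p : Pairs n) :
    ∫ E, labelWeight w (E p) ^ 2 ∂edgeMeasure n a b μ ν σ ≤ 2 * meanDegree a b / n := by
  rw [h.integral_edgeMeasure σ fun o => labelWeight w o ^ 2]
  calc ∑ o, sbmPairMass n a b μ ν (σ p.1.1 == σ p.1.2) o * labelWeight w o ^ 2
      ≤ ∑ o, sbmPairMass n a b μ ν (σ p.1.1 == σ p.1.2) o * labelWeight (fun _ => 1) o := by
        gcongr with o
        · exact h.sbmPairMass_nonneg _ o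
        · rcases o with _ | ℓ
          · simp [labelWeight]
          · simpa [labelWeight] using hw ℓ
    _ ≤ 2 * meanDegree a b / n := by
        rw [sum_sbmPairMass_mul_labelWeight, alpha_one h.isProbVec_same h.isProbVec_diff,
          beta_one h.isProbVec_same h.isProbVec_diff, signVec_mul_signVec, meanDegree]
        have := h.nonneg_same
        have := h.nonneg_diff
        gcongr
        split_ifs <;> linarith

end IsAdmissible

end EdgeMeasure

section Light

open MeasureTheory

variable {n : ℕ}

lemma sum_pairs_le_sum_sum {F : Fin n → Fin n → ℝ} (hF : ∀ u v, 0 ≤ F u v) :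
    ∑ p : Pairs n, F p.1.1 p.1.2 ≤ ∑ u, ∑ v, F u v := by
  rw [sum_pairs_eq_sum_sum]
  refine sum_le_sum fun u _ => sum_le_sum fun v _ => ?_
  split_ifs
  exacts [le_rfl, hF u v]

lemma sum_lightCoeff_sq_le (c : ℝ) {y : Fin n → ℝ} (hy : ∑ u, y u ^ 2 ≤ 1) :
    ∑ p, lightCoeff c y p ^ 2 ≤ 4 := by
  have hterm (p : Pairs n) : lightCoeff c y p ^ 2 ≤ 4 * (y p.1.1 ^ 2 * y p.1.2 ^ 2) := by
    rw [lightCoeff]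
    split_ifs
    · exact le_of_eq (by ring)
    · rw [zero_pow two_ne_zero]
      positivity
  calc ∑ p, lightCoeff c y p ^ 2 ≤ ∑ p : Pairs n, 4 * (y p.1.1 ^ 2 * y p.1.2 ^ 2) :=
        sum_le_sum fun p _ => hterm p
    _ ≤ 4 * ((∑ u, y u ^ 2) * ∑ v, y v ^ 2) := by
        rw [← mul_sum, sum_mul_sum]
        gcongr
        exact sum_pairs_le_sum_sum (F := fun u v => y u ^ 2 * y v ^ 2) fun u v => by positivity
    _ ≤ 4 := by nlinarith [sum_nonneg fun u (_ : u ∈ univ) => sq_nonneg (y u)]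

lemma abs_lightCoeff_le {c : ℝ} (hc : 0 ≤ c) (y : Fin n → ℝ) (p : Pairs n) :
    |lightCoeff c y p| ≤ 2 * c := by
  rw [lightCoeff]
  split_ifs with hlight
  · rw [abs_mul, abs_two]
    gcongr
  · rw [abs_zero]
    positivity

variable [Fintype L] [MeasurableSpace (Option L)] [MeasurableSingletonClass (Option L)]
  {a b : ℝ} {μ ν w : L → ℝ}

namespace IsAdmissible

variable (h : IsAdmissible n a b μ ν) (σ : Fin n → Bool)
include h

lemma centeredMat_signVec_pair (E : EdgeConf n L) (p : Pairs n) :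
    centeredMat w E (alpha a b μ ν w) (beta a b μ ν w) (signVec σ) p.1.1 p.1.2 =
      labelWeight w (E p) - ∫ E', labelWeight w (E' p) ∂edgeMeasure n a b μ ν σ := by
  rw [centeredMat, if_neg p.2.ne, Wmat_pair, h.integral_labelWeight]

lemma measureReal_lt_abs_light_le (hd : 1 ≤ meanDegree a b) (hw : ∀ ℓ, |w ℓ| ≤ 1)
    {y : Fin n → ℝ} (hy : ∑ u, y u ^ 2 ≤ 1) :
    (edgeMeasure n a b μ ν σ).real {E | 300 * √(meanDegree a b) <
      |∑ p : Pairs n, lightCoeff (√(meanDegree a b) / n) y p *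
        centeredMat w E (alpha a b μ ν w) (beta a b μ ν w) (signVec σ) p.1.1 p.1.2|} ≤
      2 * exp (-74 * n) := by
  have := h.isProbabilityMeasure_edgeMeasure σ
  have hdn := h.meanDegree_le
  set d := meanDegree a b
  have hn : (0 : ℝ) < n := by linarith
  have : 0 < √d := sqrt_pos.2 (by linarith)
  have hr2 : √d ^ 2 = d := sq_sqrt (by linarith)
  simp only [h.centeredMat_signVec_pair σ]
  refine (measureReal_lt_abs_sum_centered_le_exp (θ := n / (4 * √d))
    (h.iIndepFun_edgeMeasure σ (f := fun _ => labelWeight w)) (fun _ => measurable_of_finite _)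
    (fun p E => ?_) (h.integral_labelWeight_sq_le σ hw) (by positivity) (fun p => ?_) _).trans ?_
  · cases E p <;> simp [labelWeight, hw]
  · rw [abs_mul, abs_of_pos (by positivity)]
    calc n / (4 * √d) * |lightCoeff (√d / n) y p| ≤ n / (4 * √d) * (2 * (√d / n)) := by
          gcongr; exact abs_lightCoeff_le (by positivity) y p
      _ = 1 / 2 := by field_simp; norm_num
  · gcongr
    calc -(n / (4 * √d) * (300 * √d)) + (n / (4 * √d)) ^ 2 * (2 * d / n) *
          ∑ p, lightCoeff (√d / n) y p ^ 2
        ≤ -(n / (4 * √d) * (300 * √d)) + (n / (4 * √d)) ^ 2 * (2 * d / n) * 4 := by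
          gcongr; exact sum_lightCoeff_sq_le _ hy
      _ = -(75 * (n : ℝ)) + (n : ℝ) / 2 := by
          rw [div_pow, mul_pow, hr2]; field_simp; ring
      _ ≤ -74 * n := by linarith

lemma measureReal_not_abs_light_le (hd : 1 ≤ meanDegree a b) (hw : ∀ ℓ, |w ℓ| ≤ 1) :
    (edgeMeasure n a b μ ν σ).real {E | ¬ ∀ z ∈ latticeNet n,
      |∑ p : Pairs n, lightCoeff (√(meanDegree a b) / n) (latticePoint z) p *
        centeredMat w E (alpha a b μ ν w) (beta a b μ ν w) (signVec σ) p.1.1 p.1.2| ≤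
      300 * √(meanDegree a b)} ≤ 2 * exp (-8 * n) := by
  have := h.isProbabilityMeasure_edgeMeasure σ
  have hn : 0 < n := Nat.cast_pos (α := ℝ).1 (by linarith [h.meanDegree_le])
  simp only [not_forall, not_le, Set.ofPred_exists]
  calc _ ≤ ∑ _z ∈ latticeNet n, 2 * exp (-74 * n) :=
        (measureReal_biUnion_finset_le _ _).trans <| sum_le_sum fun z hz =>
          h.measureReal_lt_abs_light_le σ hd hw (sum_latticePoint_sq_le_one hn hz)
    _ ≤ exp (66 * n) * (2 * exp (-74 * n)) := by
        rw [sum_const, nsmul_eq_mul]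
        gcongr
        exact card_latticeNet_le n
    _ = 2 * exp (-8 * n) := by
        rw [mul_left_comm, ← exp_add]; ring_nf

end IsAdmissible

end Light

section EdgeSum

open MeasureTheory

variable {n : ℕ}

/-- The number of orientations of the pair `p` that lie in `S × T`. -/
def pairMult (S T : Finset (Fin n)) (p : Pairs n) : ℝ :=
  (if p.1.1 ∈ S ∧ p.1.2 ∈ T then 1 else 0) + if p.1.2 ∈ S ∧ p.1.1 ∈ T then 1 else 0

lemma half_pairMult_mem_Icc (S T : Finset (Fin n)) (p : Pairs n) :
    pairMult S T p / 2 ∈ Set.Icc 0 1 := by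
  rw [pairMult]
  split_ifs <;> norm_num

lemma edgeSum_eq_sum_pairs {A : Matrix (Fin n) (Fin n) ℝ} (hA : A.IsSymm)
    (S T : Finset (Fin n)) :
    edgeSum A S T = ∑ p : Pairs n, pairMult S T p * A p.1.1 p.1.2 + ∑ u ∈ S ∩ T, A u u := by
  have hsum : edgeSum A S T = ∑ u, ∑ v, if u ∈ S ∧ v ∈ T then A u v else 0 := by
    simp only [edgeSum, ite_and, sum_ite_mem, sum_ite_irrel, sum_const_zero, univ_inter]
  rw [hsum, sum_sum_eq_sum_pairs]
  congr 1
  · refine sum_congr rfl fun p _ => ?_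
    rw [hA.apply p.1.1 p.1.2, pairMult, add_mul, ite_zero_mul, ite_zero_mul, one_mul]
  · simp only [← mem_inter, sum_ite_mem, univ_inter]

/-- The matrix of the conditional edge probabilities given the types, which are encoded by the sign
vector `s`; the diagonal also carries the probability of an edge between vertices of equal type. -/
noncomputable def meanAdjMat (a b : ℝ) (s : Fin n → ℝ) : Matrix (Fin n) (Fin n) ℝ :=
  fun u v => (meanDegree a b + (a - b) / 2 * (s u * s v)) / n

variable {a b : ℝ} {s : Fin n → ℝ}

lemma meanAdjMat_isSymm : (meanAdjMat a b s).IsSymm :=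
  Matrix.IsSymm.ext fun u v => by simp only [meanAdjMat, mul_comm (s u)]

lemma meanAdjMat_mem_Icc (ha : 0 ≤ a) (hb : 0 ≤ b) (hs : IsSignVec s) (u v : Fin n) :
    meanAdjMat a b s u v ∈ Set.Icc 0 (2 * meanDegree a b / n) := by
  have habs : |(a - b) / 2 * (s u * s v)| ≤ meanDegree a b := by
    rw [abs_mul, abs_mul, hs.abs_eq_one, hs.abs_eq_one, one_mul, mul_one, abs_le, meanDegree]
    constructor <;> linarith
  have := abs_le.1 habs
  exact ⟨div_nonneg (by linarith) n.cast_nonneg, by rw [meanAdjMat]; gcongr; linarith⟩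

lemma edgeSum_meanAdjMat_le (ha : 0 ≤ a) (hb : 0 ≤ b) (hs : IsSignVec s) (S T : Finset (Fin n)) :
    edgeSum (meanAdjMat a b s) S T ≤ 2 * (meanDegree a b * #S * #T / n) := by
  calc edgeSum (meanAdjMat a b s) S T ≤ ∑ _u ∈ S, ∑ _v ∈ T, 2 * meanDegree a b / n :=
        sum_le_sum fun u _ => sum_le_sum fun v _ => (meanAdjMat_mem_Icc ha hb hs u v).2
    _ = 2 * (meanDegree a b * #S * #T / n) := by
        simp only [sum_const, nsmul_eq_mul]; ring

variable [Fintype L] [MeasurableSpace (Option L)] [MeasurableSingletonClass (Option L)]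
  {μ ν : L → ℝ}

namespace IsAdmissible

variable (h : IsAdmissible n a b μ ν) (σ : Fin n → Bool)
include h

lemma integral_labelWeight_one (p : Pairs n) :
    ∫ E, labelWeight (fun _ => 1) (E p) ∂edgeMeasure n a b μ ν σ =
      meanAdjMat a b (signVec σ) p.1.1 p.1.2 := by
  rw [h.integral_labelWeight, alpha_one h.isProbVec_same h.isProbVec_diff,
    beta_one h.isProbVec_same h.isProbVec_diff, meanAdjMat]

lemma measureReal_le_edgeSum_le_exp {S T : Finset (Fin n)} {m : ℝ}
    (hm : edgeSum (meanAdjMat a b (signVec σ)) S T ≤ m) {θ : ℝ} (hθ : 0 ≤ θ) (t : ℝ) :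
    (edgeMeasure n a b μ ν σ).real {E | t ≤ edgeSum (adjMat E) S T} ≤
      exp (-(θ * (t / 2)) + (exp θ - 1) * (m / 2)) := by
  have := h.isProbabilityMeasure_edgeMeasure σ
  have hsum (E : EdgeConf n L) : t ≤ edgeSum (adjMat E) S T ↔
      t / 2 ≤ ∑ p, pairMult S T p / 2 * labelWeight (fun _ => 1) (E p) := by
    rw [adjMat, edgeSum_eq_sum_pairs (Wmat_isSymm _ E)]
    simp only [Wmat_self, Wmat_pair, sum_const_zero, add_zero, div_mul_eq_mul_div, ← sum_div]
    exact (div_le_div_iff_of_pos_right two_pos).symm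
  simp only [hsum]
  refine measureReal_le_sum_le_exp
    (h.iIndepFun_edgeMeasure σ (f := fun p o => pairMult S T p / 2 * labelWeight (fun _ => 1) o))
    (fun _ => measurable_of_finite _) (fun p E => ?_) ?_ hθ _
  · have := half_pairMult_mem_Icc S T p
    rcases E p with _ | _
    · simp [labelWeight]
    · simpa [labelWeight] using this
  · calc ∑ p, ∫ E, pairMult S T p / 2 * labelWeight (fun _ => 1) (E p) ∂edgeMeasure n a b μ ν σ
        = (∑ p, pairMult S T p * meanAdjMat a b (signVec σ) p.1.1 p.1.2) / 2 := by
          rw [sum_div]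
          refine sum_congr rfl fun p _ => ?_
          rw [integral_const_mul, h.integral_labelWeight_one, div_mul_eq_mul_div]
      _ ≤ edgeSum (meanAdjMat a b (signVec σ)) S T / 2 := by
          rw [edgeSum_eq_sum_pairs meanAdjMat_isSymm]
          gcongr
          exact le_add_of_nonneg_right <| sum_nonneg fun u _ =>
            (meanAdjMat_mem_Icc h.nonneg_same h.nonneg_diff (isSignVec_signVec σ) u u).1
      _ ≤ m / 2 := by gcongr

end IsAdmissible

end EdgeSum

section RandomDiscrepancy

open MeasureTheory

lemma subsetEntropy_eq {N t : ℝ} (hN : 0 < N) (ht : 0 < t) :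
    subsetEntropy N t = t * (1 + log N - log t) := by
  rw [subsetEntropy, log_div (by positivity) ht.ne', log_mul (by positivity) hN.ne', log_exp]

lemma le_subsetEntropy {N t : ℝ} (ht : 0 < t) (htN : t ≤ N) : t ≤ subsetEntropy N t := by
  rw [subsetEntropy_eq (ht.trans_le htN) ht]
  exact le_mul_of_one_le_right ht.le (by linarith [log_le_log ht htN])

lemma log_le_subsetEntropy {N t : ℝ} (ht : 1 ≤ t) (htN : t ≤ N) : log N ≤ subsetEntropy N t := by
  rw [subsetEntropy_eq (by linarith) (by linarith)]
  nlinarith [log_le_log (by linarith) htN, log_le_sub_one_of_pos (zero_lt_one.trans_le ht)]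

lemma choose_le_exp_subsetEntropy {n t : ℕ} (hn : 0 < n) (ht : 0 < t) :
    n.choose t ≤ exp (subsetEntropy n t) := by
  calc (n.choose t : ℝ) ≤ n ^ t / t.factorial := Nat.choose_le_pow_div t n
    _ = t ^ t / t.factorial * (n ^ t / t ^ t) := by field_simp
    _ ≤ exp t * (n ^ t / t ^ t) := by
        gcongr
        exact pow_div_factorial_le_exp _ t.cast_nonneg t
    _ = exp (subsetEntropy n t) := by
        rw [subsetEntropy, exp_nat_mul, exp_log (by positivity), div_pow, mul_pow, ← exp_nat_mul,
          mul_one, mul_div_assoc]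

lemma two_pow_le_exp (k : ℕ) : (2 : ℝ) ^ k ≤ exp k := by
  rw [← mul_one (k : ℝ), exp_nat_mul]
  gcongr
  linarith [add_one_le_exp (1 : ℝ)]

variable {n : ℕ} {a b : ℝ} {μ ν : L → ℝ}
variable [Fintype L] [MeasurableSpace (Option L)] [MeasurableSingletonClass (Option L)]

namespace IsAdmissible

variable (h : IsAdmissible n a b μ ν) (σ : Fin n → Bool)
include h

lemma measureReal_le_edgeSum_le_exp_mul_log {S T : Finset (Fin n)} {κ : ℝ} (hκ : 0 < κ)
    (hmean : meanDegree a b * #S * #T / n ≤ κ) {e : ℝ} (he : exp 8 * κ < e) :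
    (edgeMeasure n a b μ ν σ).real {E | e ≤ edgeSum (adjMat E) S T} ≤
      exp (-(3 / 8 * (e * log (e / κ)))) := by
  have he0 : 0 < e := he.trans' (by positivity)
  have hlog : 8 ≤ log (e / κ) :=
    (le_log_iff_exp_le (by positivity)).2 ((le_div_iff₀ hκ).2 he.le)
  refine (h.measureReal_le_edgeSum_le_exp σ (m := 2 * κ) (θ := log (e / κ)) ?_
    (by linarith) e).trans (exp_le_exp.2 ?_)
  · refine (edgeSum_meanAdjMat_le h.nonneg_same h.nonneg_diff (isSignVec_signVec σ) S T).trans ?_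
    gcongr
  · rw [exp_log (by positivity), sub_mul, mul_div_cancel_left₀ κ two_ne_zero,
      div_mul_cancel₀ e hκ.ne']
    nlinarith

lemma measureReal_not_discrepancyAt_le (hd : 0 < meanDegree a b) {S T : Finset (Fin n)}
    (hS : S.Nonempty) (hT : T.Nonempty) :
    (edgeMeasure n a b μ ν σ).real {E | ¬ DiscrepancyAt n (meanDegree a b) (adjMat E) S T} ≤
      exp (-(4 * subsetEntropy n #T)) := by
  have := h.isProbabilityMeasure_edgeMeasure σ
  have hn := hd.trans_le h.meanDegree_le
  have : (0 : ℝ) < #S := by exact_mod_cast hS.card_pos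
  have hT0 : (0 : ℝ) < #T := by exact_mod_cast hT.card_pos
  have hTn : (#T : ℝ) ≤ n := by exact_mod_cast card_finset_fin_le T
  set κ := meanDegree a b * #S * #T / n
  set B := {E : EdgeConf n L | ¬ DiscrepancyAt n (meanDegree a b) (adjMat E) S T}
  rcases B.eq_empty_or_nonempty with hB | hB
  · rw [hB, measureReal_empty]
    positivity
  -- The failing set lies in an upper level set of `e(S, T)` whose threshold is attained on it.
  obtain ⟨E₀, hE₀, hmin⟩ := B.exists_min_image (fun E => edgeSum (adjMat E) S T) B.toFinite hB
  obtain ⟨hlarge, hentropy⟩ := not_or.1 hE₀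
  rw [not_le] at hlarge hentropy
  refine (measureReal_mono hmin).trans
    ((h.measureReal_le_edgeSum_le_exp_mul_log σ (by positivity) le_rfl hlarge).trans
      (exp_le_exp.2 ?_))
  linarith [le_subsetEntropy hT0 hTn]

lemma measureReal_exists_subset_not_discrepancyAt_le (hd : 0 < meanDegree a b)
    (T : Finset (Fin n)) :
    (edgeMeasure n a b μ ν σ).real {E | ∃ S ∈ {S ∈ T.powerset | S.Nonempty},
      ¬ DiscrepancyAt n (meanDegree a b) (adjMat E) S T} ≤ (n.choose #T * (n : ℝ) ^ 2)⁻¹ := by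
  rcases T.eq_empty_or_nonempty with rfl | hT
  · simp [filter_singleton]
  have hn := hd.trans_le h.meanDegree_le
  have hT1 : (1 : ℝ) ≤ #T := by exact_mod_cast hT.card_pos
  have hTn : #T ≤ n := card_finset_fin_le T
  have hTn' : (#T : ℝ) ≤ n := by exact_mod_cast hTn
  have hchoose : (0 : ℝ) < n.choose #T := by exact_mod_cast Nat.choose_pos hTn
  set H := subsetEntropy n #T
  have hHchoose : (n.choose #T : ℝ) ≤ exp H :=
    choose_le_exp_subsetEntropy (by exact_mod_cast hn) hT.card_pos
  have hHn : (n : ℝ) ≤ exp H := (log_le_iff_le_exp hn).1 (log_le_subsetEntropy hT1 hTn')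
  have hcard : (#{S ∈ T.powerset | S.Nonempty} : ℝ) ≤ exp H := by
    calc (#{S ∈ T.powerset | S.Nonempty} : ℝ) ≤ 2 ^ #T := by
          exact_mod_cast (card_filter_le _ _).trans_eq (card_powerset T)
      _ ≤ exp #T := two_pow_le_exp _
      _ ≤ exp H := by
          gcongr
          exact le_subsetEntropy (by linarith) hTn'
  simp only [← exists_prop, Set.ofPred_exists]
  calc _ ≤ ∑ _S ∈ {S ∈ T.powerset | S.Nonempty}, exp (-(4 * H)) :=
        (measureReal_biUnion_finset_le _ _).trans <| sum_le_sum fun S hS =>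
          h.measureReal_not_discrepancyAt_le σ hd (mem_filter.1 hS).2 hT
    _ ≤ exp H * exp (-(4 * H)) := by
        rw [sum_const, nsmul_eq_mul]
        gcongr
    _ = (exp H * exp H ^ 2)⁻¹ := by
        rw [← exp_nat_mul, ← exp_add, ← exp_add, ← exp_neg]
        congr 1
        push_cast
        ring
    _ ≤ (n.choose #T * (n : ℝ) ^ 2)⁻¹ := by gcongr

lemma measureReal_not_hasDiscrepancy_le (hd : 0 < meanDegree a b) :
    (edgeMeasure n a b μ ν σ).real {E | ¬ HasDiscrepancy n (meanDegree a b) (adjMat E)} ≤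
      (n + 1) / (n : ℝ) ^ 2 := by
  have := h.isProbabilityMeasure_edgeMeasure σ
  have hunion : {E : EdgeConf n L | ¬ HasDiscrepancy n (meanDegree a b) (adjMat E)} =
      ⋃ T ∈ (univ : Finset (Fin n)).powerset, {E | ∃ S ∈ {S ∈ T.powerset | S.Nonempty},
        ¬ DiscrepancyAt n (meanDegree a b) (adjMat E) S T} := by
    ext E
    simp only [HasDiscrepancy, not_forall, exists_prop, Set.mem_ofPred_eq, mem_filter,
      mem_powerset, Set.mem_iUnion, subset_univ, true_and, and_assoc]
    exact exists_comm
  rw [hunion]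
  calc _ ≤ ∑ T ∈ (univ : Finset (Fin n)).powerset, (n.choose #T * (n : ℝ) ^ 2)⁻¹ :=
        (measureReal_biUnion_finset_le _ _).trans <| sum_le_sum fun T _ =>
          h.measureReal_exists_subset_not_discrepancyAt_le σ hd T
    _ = ∑ _t ∈ range (n + 1), ((n : ℝ) ^ 2)⁻¹ := by
        rw [sum_powerset_apply_card fun t => (n.choose t * (n : ℝ) ^ 2)⁻¹, card_univ,
          Fintype.card_fin]
        refine sum_congr rfl fun t ht => ?_
        have hchoose : (n.choose t : ℝ) ≠ 0 := by
          exact_mod_cast (Nat.choose_pos (mem_range_succ_iff.1 ht)).ne'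
        rw [nsmul_eq_mul, mul_inv, mul_inv_cancel_left₀ hchoose]
    _ = (n + 1) / (n : ℝ) ^ 2 := by
        rw [sum_const, card_range, nsmul_eq_mul, div_eq_mul_inv, Nat.cast_succ]

end IsAdmissible

end RandomDiscrepancy

section HighDegree

open MeasureTheory

variable {n : ℕ} {a b : ℝ} {μ ν : L → ℝ}

lemma edgeSum_meanAdjMat_univ_le (ha : 0 ≤ a) (hb : 0 ≤ b) {s : Fin n → ℝ} (hs : IsSignVec s)
    (hbal : |∑ u, s u| ≤ n / 10) (T : Finset (Fin n)) :
    edgeSum (meanAdjMat a b s) T univ ≤ 11 / 10 * (meanDegree a b * #T) := by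
  have hrow (u : Fin n) : ∑ v, meanAdjMat a b s u v ≤ 11 / 10 * meanDegree a b := by
    rcases n.eq_zero_or_pos with rfl | hn
    · exact u.elim0
    have hdiff : |(a - b) / 2| ≤ meanDegree a b := by
      rw [meanDegree, abs_le]
      constructor <;> linarith
    have hcorr : (a - b) / 2 * (s u * ∑ v, s v) ≤ meanDegree a b * (n / 10) := by
      refine (le_abs_self _).trans ?_
      rw [abs_mul, abs_mul, hs.abs_eq_one, one_mul]
      exact mul_le_mul hdiff hbal (abs_nonneg _) ((abs_nonneg _).trans hdiff)
    simp only [meanAdjMat]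
    rw [← sum_div, div_le_iff₀ (by positivity), sum_add_distrib, ← mul_sum, ← mul_sum]
    simp only [sum_const, card_univ, Fintype.card_fin, nsmul_eq_mul]
    linarith
  calc edgeSum (meanAdjMat a b s) T univ ≤ ∑ _u ∈ T, 11 / 10 * meanDegree a b :=
        sum_le_sum fun u _ => hrow u
    _ = 11 / 10 * (meanDegree a b * #T) := by
        rw [sum_const, nsmul_eq_mul]; ring

lemma exp_one_quarter_le : exp (1 / 4) ≤ 21 / 16 :=
  (exp_le_one_add_add_sq (by norm_num [abs_of_pos])).trans (by norm_num)

variable [Fintype L] [MeasurableSpace (Option L)] [MeasurableSingletonClass (Option L)]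

namespace IsAdmissible

variable (h : IsAdmissible n a b μ ν) {σ : Fin n → Bool}
include h

lemma measureReal_forall_notMem_lowDegree_le (hd : 0 < meanDegree a b)
    (hbal : |∑ u, signVec σ u| ≤ n / 10) {T : Finset (Fin n)}
    (hT : 200 * n / meanDegree a b < #T) :
    (edgeMeasure n a b μ ν σ).real {E | ∀ u ∈ T, u ∉ lowDegree (meanDegree a b) E} ≤
      exp (-2 * n) := by
  have := h.isProbabilityMeasure_edgeMeasure σ
  rw [div_lt_iff₀' hd] at hT
  set d := meanDegree a b
  have hsub : {E : EdgeConf n L | ∀ u ∈ T, u ∉ lowDegree d E} ⊆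
      {E | 3 / 2 * (d * #T) ≤ edgeSum (adjMat E) T univ} := fun E hE => by
    calc 3 / 2 * (d * #T) = ∑ _u ∈ T, 3 / 2 * d := by rw [sum_const, nsmul_eq_mul]; ring
      _ ≤ ∑ u ∈ T, (degree E u : ℝ) := sum_le_sum fun u hu =>
          (not_le.1 (mem_lowDegree.not.1 (hE u hu))).le
      _ = edgeSum (adjMat E) T univ := sum_congr rfl fun u _ => degree_eq_sum_adjMat E u
  refine (measureReal_mono hsub).trans ((h.measureReal_le_edgeSum_le_exp σ
    (edgeSum_meanAdjMat_univ_le h.nonneg_same h.nonneg_diff (isSignVec_signVec σ) hbal T)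
    (θ := 1 / 4) (by norm_num) _).trans (exp_le_exp.2 ?_))
  nlinarith [exp_one_quarter_le]

lemma measureReal_not_card_compl_lowDegree_le (hd : 0 < meanDegree a b)
    (hbal : |∑ u, signVec σ u| ≤ n / 10) :
    (edgeMeasure n a b μ ν σ).real
      {E | ¬ (#(lowDegree (meanDegree a b) E)ᶜ : ℝ) ≤ 200 * n / meanDegree a b} ≤ exp (-n) := by
  have := h.isProbabilityMeasure_edgeMeasure σ
  set d := meanDegree a b
  set large : Finset (Finset (Fin n)) := {T | 200 * n / d < #T}
  have hsub : {E : EdgeConf n L | ¬ (#(lowDegree d E)ᶜ : ℝ) ≤ 200 * n / d} ⊆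
      ⋃ T ∈ large, {E | ∀ u ∈ T, u ∉ lowDegree d E} := fun E hE =>
    Set.mem_biUnion (x := (lowDegree d E)ᶜ) ((mem_filter_univ _).2 (not_le.1 hE))
      fun u => mem_compl.1
  have hcard : (#large : ℝ) ≤ exp n := by
    calc (#large : ℝ) ≤ 2 ^ n := by
          exact_mod_cast (card_filter_le _ _).trans_eq (by simp)
      _ ≤ exp n := two_pow_le_exp n
  calc _ ≤ ∑ _T ∈ large, exp (-2 * n) :=
        (measureReal_mono hsub (measure_ne_top _ _)).trans <|
          (measureReal_biUnion_finset_le _ _).trans <| sum_le_sum fun T hT =>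
            h.measureReal_forall_notMem_lowDegree_le hd hbal ((mem_filter_univ T).1 hT)
    _ ≤ exp n * exp (-2 * n) := by
        rw [sum_const, nsmul_eq_mul]
        gcongr
    _ = exp (-n) := by
        rw [← exp_add]; ring_nf

end IsAdmissible

end HighDegree

section SignBalance

open MeasureTheory ProbabilityTheory

/-- The law of independent uniform types. -/
noncomputable def typeMeasure (n : ℕ) : Measure (Fin n → Bool) :=
  Measure.pi fun _ => massMeasure fun _ => 1 / 2

instance (n : ℕ) : IsProbabilityMeasure (typeMeasure n) :=
  have : IsProbabilityMeasure (massMeasure fun _ : Bool => (1 / 2 : ℝ)) :=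
    isProbabilityMeasure_massMeasure (by norm_num) (by norm_num)
  inferInstanceAs (IsProbabilityMeasure (Measure.pi _))

lemma integral_typeMeasure_signVec (n : ℕ) (u : Fin n) : ∫ σ, signVec σ u ∂typeMeasure n = 0 :=
  (integral_pi_massMeasure_eval (q := fun _ _ => 1 / 2) (by norm_num) (by norm_num)
    (fun o : Bool => if o then 1 else -1) u).trans (by norm_num)

lemma iIndepFun_signVec (n : ℕ) : iIndepFun (fun u σ => signVec σ u) (typeMeasure n) :=
  have : IsProbabilityMeasure (massMeasure fun _ : Bool => (1 / 2 : ℝ)) :=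
    isProbabilityMeasure_massMeasure (by norm_num) (by norm_num)
  iIndepFun_pi (X := fun _ (o : Bool) => if o then (1 : ℝ) else -1)
    fun _ => (measurable_of_finite _).aemeasurable

lemma typeMeasure_real_not_balanced_le (n : ℕ) :
    (typeMeasure n).real {σ | ¬ |∑ u, signVec σ u| ≤ n / 10} ≤ 2 * exp (-(n / 400)) := by
  have hbernstein := measureReal_lt_abs_sum_centered_le_exp (iIndepFun_signVec n)
    (fun _ => measurable_of_finite _) (fun u σ => ((isSignVec_signVec σ).abs_eq_one u).le)
    (v := 1) (fun u => by simp [sq, (isSignVec_signVec _).mul_self]) (c := fun _ => 1)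
    (θ := 1 / 20) (by norm_num) (by norm_num [abs_of_pos]) (n / 10)
  simp only [integral_typeMeasure_signVec, sub_zero, one_mul] at hbernstein
  simp only [not_le]
  refine hbernstein.trans_eq ?_
  congr 2
  simp
  ring

end SignBalance

section Recovery

open MeasureTheory

variable [Fintype L] {n : ℕ} {a b : ℝ} {μ ν w : L → ℝ}

/-- The event that the signs of every maximizer of `|xᵀ D' x|` over the unit sphere overlap
positively with the types. -/
def spectralSuccess (n : ℕ) (a b : ℝ) (μ ν w : L → ℝ) : Set ((Fin n → Bool) × EdgeConf n L) :=
  {x | ∀ xh : Fin n → ℝ, ∑ u, xh u ^ 2 = 1 →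
    (∀ z : Fin n → ℝ, ∑ u, z u ^ 2 = 1 →
      |quadForm (Dmat a b μ ν w x.2) z| ≤ |quadForm (Dmat a b μ ν w x.2) xh|) →
    0 < overlap n (signVec x.1) (signR xh)}

lemma one_le_spectralConst : 1 ≤ spectralConst := by
  rw [spectralConst, heavyConst]
  linarith [exp_pos 8]

lemma IsAdmissible.mem_spectralSuccess (h : IsAdmissible n a b μ ν) (hw : ∀ ℓ, |w ℓ| ≤ 1)
    (hd : 1 ≤ meanDegree a b)
    (hgap : spectralConst * √(meanDegree a b) ≤ |beta a b μ ν w| / 17)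
    {σ : Fin n → Bool} {E : EdgeConf n L}
    (hE : IsTypical (meanDegree a b) w (alpha a b μ ν w) (beta a b μ ν w) (signVec σ) E) :
    (σ, E) ∈ spectralSuccess n a b μ ν w := fun xh hunit hmax => by
  have hn : 0 < n := by exact_mod_cast one_pos.trans_le (hd.trans h.meanDegree_le)
  have hs := isSignVec_signVec σ
  have hpos : 0 < spectralConst * √(meanDegree a b) :=
    mul_pos (one_pos.trans_le one_le_spectralConst) (sqrt_pos.2 (one_pos.trans_le hd))
  have hbe : beta a b μ ν w ≠ 0 := abs_pos.1 (by linarith)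
  exact overlap_signR_pos hn hs hunit <| le_abs_sum_mul_of_maximizer hn hs hbe
    (fun y hy => (hE.abs_quadForm_Dmat_sub_le hd h.meanDegree_le hw hs (h.abs_alpha_le hw)
      (h.abs_beta_le hw) hy.le).trans hgap) hunit hmax

lemma one_le_meanDegree_and_spectralConst_mul_sqrt_le {d be : ℝ} (hd : 0 ≤ d) (hbe : |be| ≤ d)
    (h : 2 * (17 * spectralConst) ^ 2 * d < be ^ 2) :
    1 ≤ d ∧ spectralConst * √d ≤ |be| / 17 := by
  have hK := one_le_spectralConst
  have hsq : be ^ 2 ≤ d ^ 2 := sq_le_sq.2 (by rwa [abs_of_nonneg hd])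
  constructor
  · by_contra! hlt
    have hd_sq : d ^ 2 ≤ d := by nlinarith
    have hd_mul : d ≤ 2 * (17 * spectralConst) ^ 2 * d := le_mul_of_one_le_left hd (by nlinarith)
    linarith
  · rw [le_div_iff₀ (by norm_num)]
    refine le_of_sq_le_sq ?_ (abs_nonneg be)
    rw [mul_pow, mul_pow, sq_sqrt hd, sq_abs]
    nlinarith

/-- A bound on the probability that the spectral method fails on `n` vertices, collecting the
failure probabilities of the properties of typical configurations and of the balance of types. -/
noncomputable def failureBound (n : ℕ) : ℝ :=
  2 * exp (-8 * n) + (n + 1) / (n : ℝ) ^ 2 + exp (-n) + 2 * exp (-(n / 400))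

lemma tendsto_failureBound : Tendsto failureBound atTop (nhds 0) := by
  have hcast : Tendsto (fun n : ℕ => (n : ℝ)) atTop atTop := tendsto_natCast_atTop_atTop
  have hexp : Tendsto (fun n : ℕ => exp (-(n : ℝ))) atTop (nhds 0) :=
    tendsto_exp_neg_atTop_nhds_zero.comp hcast
  have hexp₈ : Tendsto (fun n : ℕ => exp (-8 * (n : ℝ))) atTop (nhds 0) :=
    tendsto_exp_atBot.comp (hcast.const_mul_atTop_of_neg (by norm_num))
  have hexp₄₀₀ : Tendsto (fun n : ℕ => exp (-((n : ℝ) / 400))) atTop (nhds 0) :=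
    tendsto_exp_neg_atTop_nhds_zero.comp (hcast.atTop_div_const (by norm_num))
  have hinv : Tendsto (fun n : ℕ => (n : ℝ)⁻¹) atTop (nhds 0) :=
    tendsto_inv_atTop_nhds_zero_nat
  have hrat : Tendsto (fun n : ℕ => ((n : ℝ) + 1) / (n : ℝ) ^ 2) atTop (nhds 0) := by
    have hsum : Tendsto (fun n : ℕ => (n : ℝ)⁻¹ + (n : ℝ)⁻¹ ^ 2) atTop (nhds 0) := by
      simpa using hinv.add (hinv.pow 2)
    refine hsum.congr' ((eventually_gt_atTop 0).mono fun n hn => ?_)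
    field_simp
  unfold failureBound
  simpa using
    (((hexp₈.const_mul 2).add hrat).add hexp).add (hexp₄₀₀.const_mul 2)

lemma typeMeasure_real_singleton (σ : Fin n → Bool) : (typeMeasure n).real {σ} = (1 / 2) ^ n := by
  classical
  rw [typeMeasure, measureReal_pi_massMeasure fun _ _ => by norm_num]
  simp [Set.indicator_apply]

variable [MeasurableSpace (Option L)] [MeasurableSingletonClass (Option L)]

namespace IsAdmissible

variable (h : IsAdmissible n a b μ ν)
include h

lemma sbmProb_eq_integral (A : Set ((Fin n → Bool) × EdgeConf n L)) :
    sbmProb n a b μ ν A =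
      ∫ σ, (edgeMeasure n a b μ ν σ).real {E | (σ, E) ∈ A} ∂typeMeasure n := by
  classical
  rw [integral_fintype .of_finite, sbmProb, Fintype.sum_prod_type]
  refine sum_congr rfl fun σ _ => ?_
  rw [typeMeasure_real_singleton, edgeMeasure,
    measureReal_pi_massMeasure fun p => h.sbmPairMass_nonneg _, smul_eq_mul, mul_sum]
  simp only [Set.indicator_apply, Set.mem_ofPred_eq, sbmMass, mul_ite, mul_zero]

lemma sbmProb_le_one (A : Set ((Fin n → Bool) × EdgeConf n L)) : sbmProb n a b μ ν A ≤ 1 := by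
  have (σ : Fin n → Bool) := h.isProbabilityMeasure_edgeMeasure σ
  rw [h.sbmProb_eq_integral]
  exact (integral_mono .of_finite .of_finite fun σ => measureReal_le_one).trans_eq (by simp)

lemma measureReal_not_isTypical_le (hd : 1 ≤ meanDegree a b) (hw : ∀ ℓ, |w ℓ| ≤ 1)
    {σ : Fin n → Bool} (hbal : |∑ u, signVec σ u| ≤ n / 10) :
    (edgeMeasure n a b μ ν σ).real {E | ¬ IsTypical (meanDegree a b) w (alpha a b μ ν w)
      (beta a b μ ν w) (signVec σ) E} ≤ 2 * exp (-8 * n) + (n + 1) / (n : ℝ) ^ 2 + exp (-n) := by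
  have := h.isProbabilityMeasure_edgeMeasure σ
  have hd0 := one_pos.trans_le hd
  refine (measureReal_mono fun E hE => ?_).trans <| (measureReal_union_le _ _).trans <|
    add_le_add ((measureReal_union_le _ _).trans (add_le_add
      (h.measureReal_not_abs_light_le σ hd hw) (h.measureReal_not_hasDiscrepancy_le σ hd0)))
      (h.measureReal_not_card_compl_lowDegree_le hd0 hbal)
  by_contra hnot
  simp only [Set.mem_union, Set.mem_ofPred_eq, not_or, not_not] at hnot
  exact hE ⟨hnot.1.2, hnot.2, hnot.1.1⟩

lemma one_sub_failureBound_le_sbmProb (hd : 1 ≤ meanDegree a b) (hw : ∀ ℓ, |w ℓ| ≤ 1)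
    {A : Set ((Fin n → Bool) × EdgeConf n L)}
    (hA : ∀ σ E, IsTypical (meanDegree a b) w (alpha a b μ ν w) (beta a b μ ν w) (signVec σ) E →
      (σ, E) ∈ A) :
    1 - failureBound n ≤ sbmProb n a b μ ν A := by
  have (σ : Fin n → Bool) := h.isProbabilityMeasure_edgeMeasure σ
  set δ := 2 * exp (-8 * n) + (n + 1) / (n : ℝ) ^ 2 + exp (-n)
  set unbalanced : Set (Fin n → Bool) := {σ | ¬ |∑ u, signVec σ u| ≤ n / 10}
  have hcond (σ : Fin n → Bool) : 1 - δ - unbalanced.indicator 1 σ ≤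
      (edgeMeasure n a b μ ν σ).real {E | (σ, E) ∈ A} := by
    by_cases hσ : σ ∈ unbalanced
    · have : 0 ≤ δ := by positivity
      have : 0 ≤ (edgeMeasure n a b μ ν σ).real {E | (σ, E) ∈ A} := measureReal_nonneg
      simp only [Set.indicator_of_mem hσ, Pi.one_apply]
      linarith
    · rw [Set.indicator_of_notMem hσ, sub_zero, sub_le_comm,
        ← probReal_compl_eq_one_sub (.of_discrete)]
      refine (measureReal_mono ?_).trans (h.measureReal_not_isTypical_le hd hw (not_not.1 hσ))
      exact fun E hE hT => hE (hA σ E hT)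
  calc 1 - failureBound n ≤ 1 - δ - (typeMeasure n).real unbalanced := by
        rw [failureBound]
        linarith [typeMeasure_real_not_balanced_le n]
    _ = ∫ σ, (1 - δ - unbalanced.indicator 1 σ) ∂typeMeasure n := by
        rw [integral_sub .of_finite .of_finite, integral_indicator_one .of_discrete]
        simp
    _ ≤ sbmProb n a b μ ν A := by
        rw [h.sbmProb_eq_integral]
        exact integral_mono .of_finite .of_finite hcond

end IsAdmissible

end Recovery

theorem spectral_correlated_general :
    ∃ C : ℝ, ∀ (L : Type*) [Fintype L] (a b : ℝ) (μ ν w : L → ℝ),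
      IsProbVec μ → IsProbVec ν → (∀ ℓ, |w ℓ| ≤ 1) → 0 ≤ a → 0 ≤ b →
      C * (a + b) < beta a b μ ν w ^ 2 →
      Tendsto (fun n => sbmProb n a b μ ν (spectralSuccess n a b μ ν w)) atTop (nhds 1) := by
  refine ⟨(17 * spectralConst) ^ 2, fun L _ a b μ ν w hμ hν hw ha hb hC => ?_⟩
  let _ : MeasurableSpace (Option L) := ⊤
  have hadm : ∀ᶠ n : ℕ in atTop, IsAdmissible n a b μ ν := by
    filter_upwards [tendsto_natCast_atTop_atTop.eventually_ge_atTop a,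
      tendsto_natCast_atTop_atTop.eventually_ge_atTop b] with n han hbn
    exact ⟨hμ, hν, ha, hb, han, hbn⟩
  obtain ⟨n₀, hn₀⟩ := hadm.exists
  obtain ⟨hd, hgap⟩ := one_le_meanDegree_and_spectralConst_mul_sqrt_le
    (d := meanDegree a b) (by rw [meanDegree]; positivity) (hn₀.abs_beta_le hw)
    (by rw [meanDegree]; linarith)
  have hlow : Tendsto (fun n => 1 - failureBound n) atTop (nhds 1) := by
    simpa using tendsto_failureBound.const_sub 1
  refine tendsto_of_tendsto_of_tendsto_of_le_of_le' hlow tendsto_const_nhds ?_ ?_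
  · filter_upwards [hadm] with n h
    exact h.one_sub_failureBound_le_sbmProb hd hw fun σ E => h.mem_spectralSuccess hw hd hgap
  · filter_upwards [hadm] with n h
    exact h.sbmProb_le_one _

/-- **Theorem (Spectral method, Theorem 3).**
There exist universal constants `C₀`, `C` (not depending on `a`, `b`, `μ`, `ν`) such
that under the labeled SBM with `a > b > C₀` and `β² > C (a+b)`, where
`β = (1/2)·∑_ℓ w(ℓ)(aμ(ℓ) - bν(ℓ))`, a.a.s. every maximizer `x̂` of `|xᵀ D' x|` over
unit vectors (with `D' = W' - (α/n)J` built from the degree-pruned weighted graph)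
yields an assignment `sign(x̂)` with positive overlap with the truth. -/
theorem spectral_correlated
    {L : Type*} [Fintype L] :
    ∃ C₀ C : ℝ, ∀ (a b : ℝ) (μ ν w : L → ℝ),
      IsProbVec μ → IsProbVec ν → (∀ ℓ, -1 ≤ w ℓ ∧ w ℓ ≤ 1) →
      b < a → C₀ < b →
      C * (a + b) < ((1 / 2) * ∑ ℓ, w ℓ * (a * μ ℓ - b * ν ℓ)) ^ 2 →
      Filter.Tendsto (fun n : ℕ =>
        sbmProb n a b μ ν
          {x | ∀ xh : Fin n → ℝ, (∑ u, xh u ^ 2) = 1 →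
            (∀ z : Fin n → ℝ, (∑ u, z u ^ 2) = 1 →
              |quadForm (Dmat a b μ ν w x.2) z| ≤ |quadForm (Dmat a b μ ν w x.2) xh|) →
            0 < overlap n (signVec x.1) (signR xh)})
        Filter.atTop (nhds 1) := by
  obtain ⟨C, hC⟩ := spectral_correlated_general
  exact ⟨0, C, fun a b μ ν w hμ hν hw hba hb h =>
    hC L a b μ ν w hμ hν (fun ℓ => abs_le.2 (hw ℓ)) (hb.trans hba).le hb.le h⟩

end LSBM
end

section
/- Consider the labeled stochastic block model 𝒢(n, a/n, b/n, μ, ν) and suppose τ < 1. Then for any two fixed distinct vertices ρ and v, the conditional probability ℙ_n(σ_ρ = +1 | G, L, σ_v = +1), viewed as a random variable of the observed labeled graph (G, L), converges in probability to 1/2 as n → ∞. -/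
open Finset Filter Real

namespace LSBM

variable {L : Type*}

open Classical in
/-- The conditional probability `ℙ_n(σ_ρ = +1 | G, L, σ_v = +1)`, as a function of the
observed labeled graph. -/
noncomputable def condTypeProb [Fintype L] (n : ℕ) (a b : ℝ) (μ ν : L → ℝ)
    (ρ v : Fin n) (E : EdgeConf n L) : ℝ :=
  (∑ σ : Fin n → Bool, if σ ρ = true ∧ σ v = true then sbmMass n a b μ ν (σ, E) else 0) /
  (∑ σ : Fin n → Bool, if σ v = true then sbmMass n a b μ ν (σ, E) else 0)

/-!
Compare the observed labelled graph with the Erdős–Rényi graph in which each pair independently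
follows the equal-weight mixture of the two pair laws. By Cauchy–Schwarz, the mean absolute
posterior correlation of `σ_ρ` and `σ_v` is at most the root of a second moment relative to this
mixture. That moment is an average over two replicas of the types and depends only on their relative
spins `x`, which carry the Curie–Weiss weight `∏_{u < v} (1 + t x_u x_v)`, where `t` is the
`χ²`-divergence of the pair laws from their mixture. Since `n t → τ < 1`, the spins are at high
temperature: a Gaussian linearisation gives `|∑ x_u|` a weighted mean of order `√n`, so by
exchangeability the two-point correlation is of order `1 / √n`. As flipping all types leaves the
model unchanged, the conditional probability differs from `1 / 2` by half the posterior correlation,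
and Markov's inequality concludes.
-/

open ProbabilityTheory
open scoped BigOperators

/-- The sign `±1` of a type, as a real number: `signVec σ u = boolSign (σ u)`. -/
def boolSign (s : Bool) : ℝ := if s then 1 else -1

lemma boolSign_beq (s s' : Bool) : boolSign (s == s') = boolSign s * boolSign s' := by
  cases s <;> cases s' <;> simp [boolSign]

lemma boolSign_not (s : Bool) : boolSign (!s) = -boolSign s := by
  cases s <;> simp [boolSign]

lemma abs_boolSign (s : Bool) : |boolSign s| = 1 := by
  cases s <;> simp [boolSign]

lemma boolSign_mul_self (s : Bool) : boolSign s * boolSign s = 1 := by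
  cases s <;> simp [boolSign]

section SpinAverages

variable {V : Type*} [Fintype V] [DecidableEq V]

lemma expect_exp_mul_sum_boolSign (c : ℝ) :
    𝔼 x : V → Bool, exp (c * ∑ u, boolSign (x u)) = cosh c ^ Fintype.card V := by
  have h_sum : ∑ x : V → Bool, exp (c * ∑ u, boolSign (x u)) =
      (∑ s : Bool, exp (c * boolSign s)) ^ Fintype.card V := by
    simp only [mul_sum, exp_sum]
    rw [← Fintype.prod_sum fun (_ : V) s => exp (c * boolSign s), prod_const, card_univ]
  rw [Fintype.expect_eq_sum_div_card, h_sum, Fintype.card_fun, Fintype.card_bool, Nat.cast_pow,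
    ← div_pow]
  simp [boolSign, cosh_eq]

lemma gaussianPDFReal_smul_exp_mul_sq (c x : ℝ) :
    gaussianPDFReal 0 1 x • exp (c * x ^ 2 / 2) =
      (√(2 * π))⁻¹ * exp (-((1 - c) / 2) * x ^ 2) := by
  simp only [gaussianPDFReal, NNReal.coe_one, mul_one, sub_zero, smul_eq_mul, mul_assoc, ← exp_add]
  ring_nf

lemma integral_exp_mul_sq_gaussianReal {c : ℝ} (hc : c < 1) :
    ∫ x, exp (c * x ^ 2 / 2) ∂gaussianReal 0 1 = 1 / √(1 - c) := by
  simp only [integral_gaussianReal_eq_integral_smul one_ne_zero, gaussianPDFReal_smul_exp_mul_sq,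
    MeasureTheory.integral_const_mul, integral_gaussian]
  rw [← sqrt_inv, ← sqrt_mul (by positivity), ← sqrt_one, ← sqrt_div zero_le_one]
  congr 1
  have : 1 - c ≠ 0 := by linarith
  field_simp

lemma integrable_exp_mul_sq_gaussianReal {c : ℝ} (hc : c < 1) :
    MeasureTheory.Integrable (fun x => exp (c * x ^ 2 / 2)) (gaussianReal 0 1) :=
  .of_integral_ne_zero <| by
    have := sub_pos.2 hc
    rw [integral_exp_mul_sq_gaussianReal hc]
    positivity

-- Hubbard–Stratonovich: `exp (t S² / 2)` is the Gaussian average of `exp (√t S g)`, and the spins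
-- decouple once `g` is fixed.
lemma expect_exp_mul_sq_sum_boolSign_le {t : ℝ} (ht : 0 ≤ t) (htV : Fintype.card V * t < 1) :
    𝔼 x : V → Bool, exp (t * (∑ u, boolSign (x u)) ^ 2 / 2) ≤ 1 / √(1 - Fintype.card V * t) := by
  have h_gauss (x : V → Bool) : exp (t * (∑ u, boolSign (x u)) ^ 2 / 2) =
      ∫ g, exp (√t * (∑ u, boolSign (x u)) * g) ∂gaussianReal 0 1 := by
    have := congrFun (mgf_id_gaussianReal (μ := 0) (v := 1)) (√t * ∑ u, boolSign (x u))
    simpa [mgf, mul_pow, sq_sqrt ht] using this.symm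
  have h_int (x : V → Bool) : MeasureTheory.Integrable
      (fun g => exp (√t * (∑ u, boolSign (x u)) * g)) (gaussianReal 0 1) :=
    integrable_exp_mul_gaussianReal _
  have h_decouple (g : ℝ) : 𝔼 x : V → Bool, exp (√t * (∑ u, boolSign (x u)) * g) =
      cosh (√t * g) ^ Fintype.card V := by
    rw [← expect_exp_mul_sum_boolSign]
    simp only [mul_right_comm]
  calc 𝔼 x : V → Bool, exp (t * (∑ u, boolSign (x u)) ^ 2 / 2)
      = ∫ g, 𝔼 x : V → Bool, exp (√t * (∑ u, boolSign (x u)) * g) ∂gaussianReal 0 1 := by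
        simp only [h_gauss, Fintype.expect_eq_sum_div_card, MeasureTheory.integral_div,
          MeasureTheory.integral_finsetSum _ fun x _ => h_int x]
    _ = ∫ g, cosh (√t * g) ^ Fintype.card V ∂gaussianReal 0 1 := by simp only [h_decouple]
    _ ≤ ∫ g, exp (Fintype.card V * t * g ^ 2 / 2) ∂gaussianReal 0 1 := by
        refine MeasureTheory.integral_mono_of_nonneg (.of_forall fun g => by positivity)
          (integrable_exp_mul_sq_gaussianReal htV) (.of_forall fun g => ?_)
        calc cosh (√t * g) ^ Fintype.card V ≤ exp ((√t * g) ^ 2 / 2) ^ Fintype.card V := by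
              gcongr
              exact cosh_le_exp_half_sq _
          _ = exp (Fintype.card V * t * g ^ 2 / 2) := by
              rw [← exp_nat_mul, mul_pow, sq_sqrt ht]
              ring_nf
    _ = 1 / √(1 - Fintype.card V * t) := integral_exp_mul_sq_gaussianReal htV

lemma abs_mul_exp_mul_sq_le {s t : ℝ} (hts : t < s) (y : ℝ) :
    |y| * exp (t * y ^ 2 / 2) ≤ exp (s * y ^ 2 / 2) / √(s - t) := by
  have hst : 0 < s - t := sub_pos.2 hts
  have h_abs : √(s - t) * |y| ≤ exp ((s - t) * y ^ 2 / 2) := by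
    have h_sq : (√(s - t) * |y|) ^ 2 = (s - t) * y ^ 2 := by
      rw [mul_pow, sq_sqrt hst.le, sq_abs]
    nlinarith [add_one_le_exp ((s - t) * y ^ 2 / 2), sq_nonneg (√(s - t) * |y| - 1)]
  rw [le_div_iff₀ (sqrt_pos.2 hst)]
  calc |y| * exp (t * y ^ 2 / 2) * √(s - t)
      = √(s - t) * |y| * exp (t * y ^ 2 / 2) := by ring
    _ ≤ exp ((s - t) * y ^ 2 / 2) * exp (t * y ^ 2 / 2) := by gcongr
    _ = exp (s * y ^ 2 / 2) := by
        rw [← exp_add]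
        ring_nf

lemma expect_abs_sum_boolSign_mul_exp_le [Nonempty V] {t : ℝ} (ht : 0 ≤ t)
    (htV : Fintype.card V * t < 1) :
    𝔼 x : V → Bool, |∑ u, boolSign (x u)| * exp (t * (∑ u, boolSign (x u)) ^ 2 / 2) ≤
      2 * √(Fintype.card V) / (1 - Fintype.card V * t) := by
  set N : ℝ := (Fintype.card V : ℝ)
  have hN : 0 < N := Nat.cast_pos.2 Fintype.card_pos
  have : 0 < 1 - N * t := sub_pos.2 htV
  -- the midpoint of `t` and `1 / N`, so that `s - t` and `1 - N s` are comparable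
  set s : ℝ := (t + 1 / N) / 2 with hs
  have hst : s - t = (1 - N * t) / (2 * N) := by
    rw [hs]
    field_simp
    ring
  have hNs : 1 - N * s = (1 - N * t) / 2 := by
    rw [hs]
    field_simp
    ring
  have h_lt : t < s := sub_pos.1 (hst ▸ by positivity)
  calc 𝔼 x : V → Bool, |∑ u, boolSign (x u)| * exp (t * (∑ u, boolSign (x u)) ^ 2 / 2)
      ≤ 𝔼 x : V → Bool, exp (s * (∑ u, boolSign (x u)) ^ 2 / 2) / √(s - t) :=
        expect_le_expect fun x _ => abs_mul_exp_mul_sq_le h_lt _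
    _ = (𝔼 x : V → Bool, exp (s * (∑ u, boolSign (x u)) ^ 2 / 2)) / √(s - t) :=
        (expect_div ..).symm
    _ ≤ 1 / √(1 - N * s) / √(s - t) := by
        gcongr
        exact expect_exp_mul_sq_sum_boolSign_le (ht.trans h_lt.le) (by linarith)
    _ = 2 * √N / (1 - N * t) := by
        have h_prod : (1 - N * s) * (s - t) = ((1 - N * t) / (2 * √N)) ^ 2 := by
          rw [hst, hNs, div_pow, mul_pow, sq_sqrt hN.le]
          ring
        rw [div_div, ← sqrt_mul (by linarith), h_prod, sqrt_sq (by positivity), one_div_div]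

end SpinAverages

section IsingWeight

lemma prod_pairs_sq {M : Type*} [CommMonoid M] {n : ℕ} {f : Fin n → Fin n → M}
    (hf : ∀ u v, f u v = f v u) :
    (∏ p : Pairs n, f p.1.1 p.1.2) ^ 2 = ∏ u, ∏ v ∈ {u}ᶜ, f u v := by
  have h_pairs : ∏ p : Pairs n, f p.1.1 p.1.2 = ∏ u, ∏ v ∈ Ioi u, f u v := by
    rw [prod_sigma', ← prod_subtype (univ.filter fun p : Fin n × Fin n => p.1 < p.2)
      (by simp) fun p => f p.1 p.2]
    exact prod_nbij' (fun p => ⟨p.1, p.2⟩) (fun p => (p.1, p.2)) (by simp) (by simp) (by simp)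
      (by simp) (by simp)
  rw [h_pairs, sq, ← prod_mul_distrib]
  simp only [← prod_mul_distrib]
  simpa only [hf _ _] using prod_prod_Ioi_mul_eq_prod_prod_off_diag f

/-- The weight `∏_{u < v} (1 + t x_u x_v)` of a spin configuration. Up to normalisation this is the
Curie–Weiss (mean-field Ising) Gibbs weight, `t` being the hyperbolic tangent of the coupling. -/
noncomputable def isingWeight {n : ℕ} (t : ℝ) (x : Fin n → Bool) : ℝ :=
  ∏ p : Pairs n, (1 + t * (boolSign (x p.1.1) * boolSign (x p.1.2)))

variable {n : ℕ} {t : ℝ}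

lemma one_add_mul_boolSign_nonneg (ht : |t| ≤ 1) (s s' : Bool) :
    0 ≤ 1 + t * (boolSign s * boolSign s') := by
  have := abs_le.1 ht
  cases s <;> cases s' <;> simp [boolSign] <;> linarith

lemma isingWeight_nonneg (ht : |t| ≤ 1) (x : Fin n → Bool) : 0 ≤ isingWeight t x :=
  prod_nonneg fun _ _ => one_add_mul_boolSign_nonneg ht _ _

lemma isingWeight_sq (t : ℝ) (x : Fin n → Bool) :
    isingWeight t x ^ 2 = ∏ u, ∏ v ∈ {u}ᶜ, (1 + t * (boolSign (x u) * boolSign (x v))) :=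
  prod_pairs_sq (f := fun u v => 1 + t * (boolSign (x u) * boolSign (x v)))
    fun u v => by rw [mul_comm (boolSign (x u))]

lemma isingWeight_comp_perm (ht : |t| ≤ 1) (x : Fin n → Bool) (ψ : Equiv.Perm (Fin n)) :
    isingWeight t (x ∘ ψ) = isingWeight t x := by
  rw [← sq_eq_sq₀ (isingWeight_nonneg ht _) (isingWeight_nonneg ht _), isingWeight_sq,
    isingWeight_sq]
  exact Fintype.prod_equiv ψ _ _ fun u => prod_equiv ψ (by simp) (by simp)

lemma boolSign_mul_sum_compl_boolSign (x : Fin n → Bool) (u : Fin n) :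
    boolSign (x u) * ∑ v ∈ {u}ᶜ, boolSign (x v) = boolSign (x u) * ∑ v, boolSign (x v) - 1 := by
  rw [Fintype.sum_eq_add_sum_compl u fun v => boolSign (x v), mul_add, boolSign_mul_self,
    add_sub_cancel_left]

lemma isingWeight_le_exp (ht : |t| ≤ 1) (x : Fin n → Bool) :
    isingWeight t x ≤ exp (t * ((∑ u, boolSign (x u)) ^ 2 - n) / 2) := by
  rw [← sq_le_sq₀ (isingWeight_nonneg ht x) (exp_pos _).le, isingWeight_sq]
  calc ∏ u, ∏ v ∈ {u}ᶜ, (1 + t * (boolSign (x u) * boolSign (x v)))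
      ≤ ∏ u, ∏ v ∈ {u}ᶜ, exp (t * (boolSign (x u) * boolSign (x v))) := by
        refine prod_le_prod (fun u _ => prod_nonneg fun v _ => ?_) fun u _ =>
          prod_le_prod (fun v _ => ?_) fun v _ => ?_
        · exact one_add_mul_boolSign_nonneg ht _ _
        · exact one_add_mul_boolSign_nonneg ht _ _
        · rw [add_comm]
          exact add_one_le_exp _
    _ = exp (t * ((∑ u, boolSign (x u)) ^ 2 - n)) := by
        simp only [← exp_sum, ← mul_sum, boolSign_mul_sum_compl_boolSign, sum_sub_distrib,
          ← sum_mul]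
        simp [sq]
    _ = exp (t * ((∑ u, boolSign (x u)) ^ 2 - n) / 2) ^ 2 := by
        rw [← exp_nat_mul]
        ring_nf

lemma expect_boolSign_mul_isingWeight_eq (ht : |t| ≤ 1) {ρ v w : Fin n} (hv : v ≠ ρ) (hw : w ≠ ρ) :
    𝔼 x : Fin n → Bool, boolSign (x ρ) * boolSign (x w) * isingWeight t x =
      𝔼 x : Fin n → Bool, boolSign (x ρ) * boolSign (x v) * isingWeight t x := by
  refine Fintype.expect_equiv ((Equiv.swap v w).arrowCongr (Equiv.refl Bool)) _ _ fun x => ?_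
  rw [show (Equiv.swap v w).arrowCongr (Equiv.refl Bool) x = x ∘ Equiv.swap v w from rfl,
    isingWeight_comp_perm ht]
  simp [Equiv.swap_apply_of_ne_of_ne hv.symm hw.symm]

-- By exchangeability every `w ≠ ρ` has the same correlation with `ρ`, and these `n - 1`
-- correlations add up to at most the mean of `|∑ w, x_w|`.
lemma sub_one_mul_expect_boolSign_mul_isingWeight_le (ht₀ : 0 ≤ t) (ht₁ : t ≤ 1) {ρ v : Fin n}
    (hv : v ≠ ρ) :
    (n - 1) * 𝔼 x : Fin n → Bool, boolSign (x ρ) * boolSign (x v) * isingWeight t x ≤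
      𝔼 x : Fin n → Bool, |∑ u, boolSign (x u)| * isingWeight t x := by
  have ht : |t| ≤ 1 := abs_le.2 ⟨by linarith, ht₁⟩
  have h_card : (#({ρ}ᶜ : Finset (Fin n)) : ℝ) = n - 1 := by
    rw [card_compl, Fintype.card_fin, card_singleton, Nat.cast_pred ρ.pos]
  calc (n - 1) * 𝔼 x : Fin n → Bool, boolSign (x ρ) * boolSign (x v) * isingWeight t x
      = ∑ w ∈ {ρ}ᶜ, 𝔼 x : Fin n → Bool, boolSign (x ρ) * boolSign (x w) * isingWeight t x := by
        rw [sum_congr rfl fun w hw => expect_boolSign_mul_isingWeight_eq ht hv (by simpa using hw),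
          sum_const, nsmul_eq_mul, h_card]
    _ = 𝔼 x : Fin n → Bool,
          (boolSign (x ρ) * (∑ u, boolSign (x u)) - 1) * isingWeight t x := by
        simp only [← expect_sum_comm, ← sum_mul, ← mul_sum, boolSign_mul_sum_compl_boolSign]
    _ ≤ 𝔼 x : Fin n → Bool, |∑ u, boolSign (x u)| * isingWeight t x := by
        refine expect_le_expect fun x _ => mul_le_mul_of_nonneg_right ?_ (isingWeight_nonneg ht x)
        calc boolSign (x ρ) * (∑ u, boolSign (x u)) - 1
            ≤ |boolSign (x ρ) * ∑ u, boolSign (x u)| := by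
              linarith [le_abs_self (boolSign (x ρ) * ∑ u, boolSign (x u))]
          _ = |∑ u, boolSign (x u)| := by rw [abs_mul, abs_boolSign, one_mul]

lemma expect_boolSign_mul_isingWeight_le (ht : 0 ≤ t) (hnt : n * t < 1) {ρ v : Fin n}
    (hv : v ≠ ρ) :
    𝔼 x : Fin n → Bool, boolSign (x ρ) * boolSign (x v) * isingWeight t x ≤
      4 / (√n * (1 - n * t)) := by
  have : Nonempty (Fin n) := ⟨ρ⟩
  have h_two : (2 : ℝ) ≤ n := by
    have := Fintype.one_lt_card_iff.2 ⟨v, ρ, hv⟩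
    rw [Fintype.card_fin] at this
    exact_mod_cast this
  have ht₁ : t ≤ 1 := by nlinarith
  have h_gap : 0 < 1 - n * t := sub_pos.2 hnt
  have h_weight (x : Fin n → Bool) : isingWeight t x ≤ exp (t * (∑ u, boolSign (x u)) ^ 2 / 2) :=
    (isingWeight_le_exp (abs_le.2 ⟨by linarith, ht₁⟩) x).trans <| by
      gcongr
      linarith
  have h_abs : (n - 1) * 𝔼 x : Fin n → Bool, boolSign (x ρ) * boolSign (x v) * isingWeight t x ≤
      2 * √n / (1 - n * t) :=
    calc _ ≤ 𝔼 x : Fin n → Bool, |∑ u, boolSign (x u)| * isingWeight t x :=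
          sub_one_mul_expect_boolSign_mul_isingWeight_le ht ht₁ hv
      _ ≤ 𝔼 x : Fin n → Bool,
            |∑ u, boolSign (x u)| * exp (t * (∑ u, boolSign (x u)) ^ 2 / 2) :=
          expect_le_expect fun x _ => by gcongr; exact h_weight x
      _ ≤ 2 * √n / (1 - n * t) := by
          simpa using expect_abs_sum_boolSign_mul_exp_le (V := Fin n) ht (by simpa using hnt)
  calc 𝔼 x : Fin n → Bool, boolSign (x ρ) * boolSign (x v) * isingWeight t x
      ≤ 2 * √n / (1 - n * t) / (n - 1) := by rwa [le_div_iff₀' (by linarith)]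
    _ ≤ 2 * √n / (1 - n * t) / (n / 2) := by
        gcongr
        linarith
    _ = 4 / (√n * (1 - n * t)) := by
        have h_sqrt : √n * √n = (n : ℝ) := mul_self_sqrt n.cast_nonneg
        have := sqrt_pos.2 (show (0 : ℝ) < n by linarith)
        field_simp
        linear_combination 4 * h_sqrt

end IsingWeight

section ProbVec

variable {ι κ Ω : Type*} [Fintype ι] [DecidableEq ι] [Fintype κ] [Fintype Ω]

lemma expect_comp_involutive {M : Type*} [AddCommMonoid M] [Module ℚ≥0 M] {g : κ → κ}
    (hg : g.Involutive) (f : κ → M) :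
    𝔼 x, f (g x) = 𝔼 x, f x :=
  Fintype.expect_equiv hg.toPerm _ _ fun _ => rfl

lemma IsProbVec.pi {q : ι → Ω → ℝ} (hq : ∀ i, IsProbVec (q i)) :
    IsProbVec fun E : ι → Ω => ∏ i, q i (E i) :=
  ⟨fun _ => prod_nonneg fun i _ => (hq i).1 _, by
    rw [← Fintype.prod_sum, prod_eq_one fun i _ => (hq i).2]⟩

lemma IsProbVec.expect [Nonempty κ] {q : κ → Ω → ℝ} (hq : ∀ k, IsProbVec (q k)) :
    IsProbVec fun o => 𝔼 k, q k o :=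
  ⟨fun _ => expect_nonneg fun k _ => (hq k).1 _, by
    rw [← expect_sum_comm]
    simp [(hq _).2]⟩

-- Cauchy–Schwarz after a change of measure to `q`.
lemma IsProbVec.sum_abs_le_sqrt {q f : Ω → ℝ} (hq : IsProbVec q) (hf : ∀ o, q o = 0 → f o = 0) :
    ∑ o, |f o| ≤ √(∑ o, f o ^ 2 / q o) := by
  apply le_sqrt_of_sq_le
  simpa [hq.2] using sum_sq_le_sum_mul_sum_of_sq_le_mul univ (r := fun o => |f o|) (f := q)
    (g := fun o => f o ^ 2 / q o) (fun o _ => hq.1 o) (fun o _ => div_nonneg (sq_nonneg _) (hq.1 o))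
    fun o _ => by rw [sq_abs, mul_div_cancel_of_imp' fun h => by simp [hf o h]]

-- Markov's inequality for `|f| / q` under `q`.
lemma IsProbVec.one_sub_le_sum_indicator {q f : Ω → ℝ} (hq : IsProbVec q) {ε : ℝ} (hε : 0 < ε)
    {A : Set Ω} (hA : ∀ o ∉ A, ε * q o ≤ |f o|) :
    1 - (∑ o, |f o|) / ε ≤ ∑ o, A.indicator q o := by
  rw [← hq.2, sum_div, ← sum_sub_distrib]
  refine sum_le_sum fun o _ => ?_
  by_cases ho : o ∈ A
  · rw [Set.indicator_of_mem ho]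
    exact sub_le_self _ (by positivity)
  · rw [Set.indicator_of_notMem ho, sub_nonpos, le_div_iff₀' hε]
    exact hA o ho

end ProbVec

section Channel

variable {Ω : Type*}

/-- The equal-weight mixture of the observation laws `W true` and `W false` of a pair of vertices of
the same and of different types. For the stochastic block model this is the Erdős–Rényi law with the
matching edge and label densities. -/
noncomputable def meanMass (W : Bool → Ω → ℝ) (o : Ω) : ℝ := 𝔼 s, W s o

/-- Half the difference of the observation laws `W true` and `W false`. -/
noncomputable def halfDiff (W : Bool → Ω → ℝ) (o : Ω) : ℝ := 𝔼 s, boolSign s * W s o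

/-- The `χ²`-divergence of `W true` (equivalently of `W false`) from the mixture `meanMass W`.
Outcomes of mass zero contribute `0 / 0 = 0`. -/
noncomputable def chiSq [Fintype Ω] (W : Bool → Ω → ℝ) : ℝ := ∑ o, halfDiff W o ^ 2 / meanMass W o

lemma meanMass_eq (W : Bool → Ω → ℝ) (o : Ω) : meanMass W o = (W true o + W false o) / 2 := by
  rw [meanMass, Fintype.expect_eq_sum_div_card, Fintype.sum_bool, Fintype.card_bool, Nat.cast_two]

lemma halfDiff_eq (W : Bool → Ω → ℝ) (o : Ω) : halfDiff W o = (W true o - W false o) / 2 := by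
  rw [halfDiff, Fintype.expect_eq_sum_div_card, Fintype.sum_bool, Fintype.card_bool, Nat.cast_two]
  simp [boolSign, sub_eq_add_neg]

lemma meanMass_add_boolSign_mul_halfDiff (W : Bool → Ω → ℝ) (s : Bool) (o : Ω) :
    meanMass W o + boolSign s * halfDiff W o = W s o := by
  rw [meanMass_eq, halfDiff_eq]
  cases s <;> simp [boolSign] <;> ring

variable [Fintype Ω] {W : Bool → Ω → ℝ} (hW : ∀ s, IsProbVec (W s))
include hW

lemma isProbVec_meanMass : IsProbVec (meanMass W) := .expect hW

lemma eq_zero_of_meanMass_eq_zero {o : Ω} (ho : meanMass W o = 0) (s : Bool) : W s o = 0 :=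
  (expect_eq_zero_iff_of_nonneg fun s _ => (hW s).1 o).1 ho s (mem_univ s)

lemma chiSq_nonneg : 0 ≤ chiSq W :=
  sum_nonneg fun o _ => div_nonneg (sq_nonneg _) ((isProbVec_meanMass hW).1 o)

lemma sum_halfDiff : ∑ o, halfDiff W o = 0 := by
  simp [halfDiff_eq, ← sum_div, (hW _).2]

lemma sum_mul_div_meanMass (s s' : Bool) :
    ∑ o, W s o * W s' o / meanMass W o = 1 + chiSq W * (boolSign s * boolSign s') := by
  have h_expand (o : Ω) : W s o * W s' o / meanMass W o =
      meanMass W o + (boolSign s + boolSign s') * halfDiff W o +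
        halfDiff W o ^ 2 / meanMass W o * (boolSign s * boolSign s') := by
    by_cases ho : meanMass W o = 0
    · simp [halfDiff_eq, ho, eq_zero_of_meanMass_eq_zero hW ho]
    · rw [← meanMass_add_boolSign_mul_halfDiff W s, ← meanMass_add_boolSign_mul_halfDiff W s']
      field_simp
      ring
  simp only [h_expand, sum_add_distrib, ← mul_sum, ← sum_mul, sum_halfDiff hW,
    (isProbVec_meanMass hW).2, chiSq]
  ring

end Channel

section BlockModel

variable {n : ℕ} {Ω : Type*}

/-- The conditional mass of the pair observations `E` given the types `σ`: independently for each
pair, `E p` has law `W true` if the two types agree and `W false` otherwise. -/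
def condMass (W : Bool → Ω → ℝ) (σ : Fin n → Bool) (E : Pairs n → Ω) : ℝ :=
  ∏ p : Pairs n, W (σ p.1.1 == σ p.1.2) (E p)

/-- The marginal mass of the pair observations `E` under uniform types. -/
noncomputable def graphMass (W : Bool → Ω → ℝ) (E : Pairs n → Ω) : ℝ :=
  𝔼 σ : Fin n → Bool, condMass W σ E

/-- The unnormalised posterior correlation of the types of `ρ` and `v`: its quotient by
`graphMass W E` is the conditional expectation of `σ_ρ σ_v` given `E`. -/
noncomputable def corrMass (W : Bool → Ω → ℝ) (ρ v : Fin n) (E : Pairs n → Ω) : ℝ :=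
  𝔼 σ : Fin n → Bool, boolSign (σ ρ) * boolSign (σ v) * condMass W σ E

lemma condMass_not (W : Bool → Ω → ℝ) (σ : Fin n → Bool) (E : Pairs n → Ω) :
    condMass W (fun u => !σ u) E = condMass W σ E := by
  have h_beq (s s' : Bool) : ((!s) == (!s')) = (s == s') := by cases s <;> cases s' <;> rfl
  simp only [condMass, h_beq]

-- The model does not change when all the types are flipped.
lemma expect_boolSign_mul_condMass (W : Bool → Ω → ℝ) (u : Fin n) (E : Pairs n → Ω) :
    𝔼 σ : Fin n → Bool, boolSign (σ u) * condMass W σ E = 0 := by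
  have h_inv : (fun (σ : Fin n → Bool) u => !σ u).Involutive := fun σ => by simp
  have h_flip := expect_comp_involutive h_inv fun σ => boolSign (σ u) * condMass W σ E
  simp only [condMass_not, boolSign_not, neg_mul, expect_neg_distrib] at h_flip
  linarith

variable [Fintype Ω] {W : Bool → Ω → ℝ} (hW : ∀ s, IsProbVec (W s))
include hW

lemma isProbVec_graphMass : IsProbVec (graphMass (n := n) W) := .expect fun _ => .pi fun _ => hW _

lemma corrMass_eq_zero_of_prod_meanMass_eq_zero (ρ v : Fin n) {E : Pairs n → Ω}
    (hE : ∏ p, meanMass W (E p) = 0) : corrMass W ρ v E = 0 := by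
  obtain ⟨p, -, hp⟩ := prod_eq_zero_iff.1 hE
  refine expect_eq_zero fun σ _ => ?_
  rw [condMass, prod_eq_zero (mem_univ p) (eq_zero_of_meanMass_eq_zero hW hp _), mul_zero]

lemma sum_condMass_mul_condMass_div (σ σ' : Fin n → Bool) :
    ∑ E : Pairs n → Ω, condMass W σ E * condMass W σ' E / ∏ p, meanMass W (E p) =
      isingWeight (chiSq W) fun u => σ u == σ' u := by
  simp only [condMass, ← prod_mul_distrib, ← prod_div_distrib]
  rw [← Fintype.prod_sum fun (p : Pairs n) o => W (σ p.1.1 == σ p.1.2) o *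
    W (σ' p.1.1 == σ' p.1.2) o / meanMass W o]
  refine prod_congr rfl fun p _ => ?_
  rw [sum_mul_div_meanMass hW]
  simp only [boolSign_beq]
  ring

-- Squaring introduces two independent type assignments `σ, σ'`. Only their relative spin
-- `x = σ σ'` matters, and it is uniform for each fixed `σ`.
lemma sum_corrMass_sq_div (ρ v : Fin n) :
    ∑ E : Pairs n → Ω, corrMass W ρ v E ^ 2 / ∏ p, meanMass W (E p) =
      𝔼 x : Fin n → Bool, boolSign (x ρ) * boolSign (x v) * isingWeight (chiSq W) x := by
  have h_inv (σ : Fin n → Bool) : (fun (σ' : Fin n → Bool) u => σ u == σ' u).Involutive :=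
    fun σ' => by simp
  calc ∑ E : Pairs n → Ω, corrMass W ρ v E ^ 2 / ∏ p, meanMass W (E p)
      = 𝔼 σ : Fin n → Bool, 𝔼 σ' : Fin n → Bool,
          boolSign (σ ρ == σ' ρ) * boolSign (σ v == σ' v) *
            ∑ E : Pairs n → Ω, condMass W σ E * condMass W σ' E / ∏ p, meanMass W (E p) := by
        simp only [corrMass, sq, expect_mul_expect, expect_div, mul_sum, expect_sum_comm,
          boolSign_beq]
        refine sum_congr rfl fun E _ => expect_congr rfl fun σ _ => expect_congr rfl fun σ' _ => ?_
        ring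
    _ = 𝔼 _ : Fin n → Bool, 𝔼 x : Fin n → Bool,
          boolSign (x ρ) * boolSign (x v) * isingWeight (chiSq W) x := by
        simp only [sum_condMass_mul_condMass_div hW]
        exact expect_congr rfl fun σ _ => expect_comp_involutive (h_inv σ) fun x =>
          boolSign (x ρ) * boolSign (x v) * isingWeight (chiSq W) x
    _ = 𝔼 x : Fin n → Bool, boolSign (x ρ) * boolSign (x v) * isingWeight (chiSq W) x :=
        Fintype.expect_const _

theorem sum_abs_corrMass_le (hn : n * chiSq W < 1) {ρ v : Fin n} (hv : v ≠ ρ) :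
    ∑ E : Pairs n → Ω, |corrMass W ρ v E| ≤ √(4 / (√n * (1 - n * chiSq W))) :=
  calc ∑ E : Pairs n → Ω, |corrMass W ρ v E|
      ≤ √(∑ E : Pairs n → Ω, corrMass W ρ v E ^ 2 / ∏ p, meanMass W (E p)) :=
        (IsProbVec.pi fun _ => isProbVec_meanMass hW).sum_abs_le_sqrt fun _ =>
          corrMass_eq_zero_of_prod_meanMass_eq_zero hW ρ v
    _ ≤ √(4 / (√n * (1 - n * chiSq W))) := by
        rw [sum_corrMass_sq_div hW]
        gcongr
        exact expect_boolSign_mul_isingWeight_le (chiSq_nonneg hW) hn hv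

end BlockModel

section StochasticBlockModel

variable {n : ℕ} {a b : ℝ} {μ ν : L → ℝ}

lemma sbmMass_eq (x : (Fin n → Bool) × EdgeConf n L) :
    sbmMass n a b μ ν x = (1 / 2) ^ n * condMass (sbmPairMass n a b μ ν) x.1 x.2 := rfl

lemma sum_half_pow_mul_eq_expect (f : (Fin n → Bool) → ℝ) :
    ∑ σ, (1 / 2) ^ n * f σ = 𝔼 σ, f σ := by
  rw [Fintype.expect_eq_sum_div_card, ← mul_sum]
  simp [div_eq_inv_mul]

lemma ite_eq_add_boolSign_mul_div_two (s : Bool) (c : ℝ) :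
    (if s = true then c else 0) = (c + boolSign s * c) / 2 := by
  cases s <;> simp [boolSign]

lemma condTypeProb_sub_half [Fintype L] (ρ v : Fin n) {E : EdgeConf n L}
    (hE : graphMass (sbmPairMass n a b μ ν) E ≠ 0) :
    condTypeProb n a b μ ν ρ v E - 1 / 2 =
      corrMass (sbmPairMass n a b μ ν) ρ v E / (2 * graphMass (sbmPairMass n a b μ ν) E) := by
  have h_den : ∑ σ : Fin n → Bool, (if σ v = true then sbmMass n a b μ ν (σ, E) else 0) =
      graphMass (sbmPairMass n a b μ ν) E / 2 := by
    simp only [ite_eq_add_boolSign_mul_div_two, sbmMass_eq, mul_left_comm (boolSign _), ← mul_add,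
      mul_div_assoc, sum_half_pow_mul_eq_expect]
    rw [← expect_div, expect_add_distrib, expect_boolSign_mul_condMass, add_zero, graphMass]
  have h_num : ∑ σ : Fin n → Bool,
      (if σ ρ = true ∧ σ v = true then sbmMass n a b μ ν (σ, E) else 0) =
        (graphMass (sbmPairMass n a b μ ν) E + corrMass (sbmPairMass n a b μ ν) ρ v E) / 4 := by
    have h_ite (σ : Fin n → Bool) (c : ℝ) : (if σ ρ = true ∧ σ v = true then c else 0) =
        (c + boolSign (σ ρ) * c + boolSign (σ v) * c +
          boolSign (σ ρ) * boolSign (σ v) * c) / 4 := by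
      rw [ite_and, ite_eq_add_boolSign_mul_div_two, ite_eq_add_boolSign_mul_div_two]
      ring
    simp only [h_ite, sbmMass_eq, mul_left_comm _ ((1 / 2 : ℝ) ^ n), ← mul_add, mul_div_assoc,
      sum_half_pow_mul_eq_expect]
    rw [← expect_div, expect_add_distrib, expect_add_distrib, expect_add_distrib,
      expect_boolSign_mul_condMass, expect_boolSign_mul_condMass, add_zero, add_zero, graphMass,
      corrMass]
  rw [condTypeProb, h_num, h_den]
  field_simp
  ring

lemma meanMass_sbmPairMass_none :
    meanMass (sbmPairMass n a b μ ν) none = 1 - (a + b) / (2 * n) := by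
  simp only [meanMass_eq, sbmPairMass, if_true, Bool.false_eq_true, if_false]
  ring

lemma meanMass_sbmPairMass_some (ℓ : L) :
    meanMass (sbmPairMass n a b μ ν) (some ℓ) = (a * μ ℓ + b * ν ℓ) / (2 * n) := by
  simp only [meanMass_eq, sbmPairMass, if_true, Bool.false_eq_true, if_false]
  ring

lemma halfDiff_sbmPairMass_none :
    halfDiff (sbmPairMass n a b μ ν) none = (b - a) / (2 * n) := by
  simp only [halfDiff_eq, sbmPairMass, if_true, Bool.false_eq_true, if_false]
  ring

lemma halfDiff_sbmPairMass_some (ℓ : L) :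
    halfDiff (sbmPairMass n a b μ ν) (some ℓ) = (a * μ ℓ - b * ν ℓ) / (2 * n) := by
  simp only [halfDiff_eq, sbmPairMass, if_true, Bool.false_eq_true, if_false]
  ring

variable [Fintype L]

lemma sbmGraphProb_eq_sum_indicator (A : Set (EdgeConf n L)) :
    sbmGraphProb n a b μ ν A = ∑ E, A.indicator (graphMass (sbmPairMass n a b μ ν)) E := by
  rw [sbmGraphProb, sbmProb, Fintype.sum_prod_type, sum_comm]
  refine sum_congr rfl fun E _ => ?_
  by_cases hE : E ∈ A <;> simp [hE, sbmMass_eq, graphMass, -one_div, sum_half_pow_mul_eq_expect]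

lemma isProbVec_sbmPairMass (ha : 0 ≤ a) (han : a ≤ n) (hb : 0 ≤ b) (hbn : b ≤ n)
    (hμ : IsProbVec μ) (hν : IsProbVec ν) (s : Bool) : IsProbVec (sbmPairMass n a b μ ν s) := by
  have h_edge {c : ℝ} {ξ : L → ℝ} (hc : 0 ≤ c) (hcn : c ≤ n) (hξ : IsProbVec ξ) :
      IsProbVec fun o : Option L => o.elim (1 - c / n) fun ℓ => c / n * ξ ℓ := by
    refine ⟨fun o => ?_, by simp [Fintype.sum_option, ← mul_sum, hξ.2]⟩
    cases o with
    | none => exact sub_nonneg.2 (div_le_one_of_le₀ hcn n.cast_nonneg)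
    | some ℓ => exact mul_nonneg (by positivity) (hξ.1 ℓ)
  cases s
  · convert h_edge hb hbn hν with o
    cases o <;> simp [sbmPairMass]
  · convert h_edge ha han hμ with o
    cases o <;> simp [sbmPairMass]

lemma sbmGraphProb_le_one (hW : ∀ s, IsProbVec (sbmPairMass n a b μ ν s))
    (A : Set (EdgeConf n L)) : sbmGraphProb n a b μ ν A ≤ 1 := by
  rw [sbmGraphProb_eq_sum_indicator, ← (isProbVec_graphMass hW).2]
  exact sum_le_sum fun E _ => Set.indicator_le_self' (fun E _ => (isProbVec_graphMass hW).1 E) E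

theorem one_sub_le_sbmGraphProb (hW : ∀ s, IsProbVec (sbmPairMass n a b μ ν s))
    (hn : n * chiSq (sbmPairMass n a b μ ν) < 1) {ρ v : Fin n} (hv : v ≠ ρ) {ε : ℝ} (hε : 0 < ε) :
    1 - √(4 / (√n * (1 - n * chiSq (sbmPairMass n a b μ ν)))) / (2 * ε) ≤
      sbmGraphProb n a b μ ν {E | |condTypeProb n a b μ ν ρ v E - 1 / 2| ≤ ε} := by
  set P := graphMass (n := n) (sbmPairMass n a b μ ν)
  set Z := corrMass (sbmPairMass n a b μ ν) ρ v
  have hP : IsProbVec P := isProbVec_graphMass hW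
  have h_far (E) (hE : E ∉ {E | |condTypeProb n a b μ ν ρ v E - 1 / 2| ≤ ε}) :
      2 * ε * P E ≤ |Z E| := by
    rcases (hP.1 E).eq_or_lt' with h_zero | h_pos
    · simp [h_zero]
    · have h_cond : condTypeProb n a b μ ν ρ v E - 1 / 2 = Z E / (2 * P E) :=
        condTypeProb_sub_half ρ v h_pos.ne'
      have h_gt : ε < |condTypeProb n a b μ ν ρ v E - 1 / 2| := not_le.1 hE
      rw [h_cond, abs_div, abs_of_pos (mul_pos two_pos h_pos), lt_div_iff₀ (by positivity)] at h_gt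
      linarith
  calc 1 - √(4 / (√n * (1 - n * chiSq (sbmPairMass n a b μ ν)))) / (2 * ε)
      ≤ 1 - (∑ E, |Z E|) / (2 * ε) := by
        gcongr
        exact sum_abs_corrMass_le hW hn hv
    _ ≤ sbmGraphProb n a b μ ν {E | |condTypeProb n a b μ ν ρ v E - 1 / 2| ≤ ε} := by
        rw [sbmGraphProb_eq_sum_indicator]
        exact hP.one_sub_le_sum_indicator (by positivity) h_far

lemma mul_chiSq_sbmPairMass (hn : n ≠ 0) :
    n * chiSq (sbmPairMass n a b μ ν) =
      (a - b) ^ 2 / 4 * (n : ℝ)⁻¹ / (1 - (a + b) / 2 * (n : ℝ)⁻¹) + tau a b μ ν := by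
  rw [chiSq, tau, Fintype.sum_option, mul_add, mul_sum, meanMass_sbmPairMass_none,
    halfDiff_sbmPairMass_none]
  simp only [meanMass_sbmPairMass_some, halfDiff_sbmPairMass_some]
  congr 1
  · rw [← mul_div_assoc]
    congr 1 <;> field_simp
    ring
  · refine sum_congr rfl fun ℓ _ => ?_
    field_simp

lemma tendsto_mul_chiSq_sbmPairMass (a b : ℝ) (μ ν : L → ℝ) :
    Tendsto (fun n : ℕ => n * chiSq (sbmPairMass n a b μ ν)) atTop (nhds (tau a b μ ν)) := by
  have h_inv := tendsto_inv_atTop_nhds_zero_nat (𝕜 := ℝ)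
  have h_lim := ((h_inv.const_mul ((a - b) ^ 2 / 4)).div
    ((h_inv.const_mul ((a + b) / 2)).const_sub 1) (by simp)).add_const (tau a b μ ν)
  simp only [mul_zero, zero_div, zero_add] at h_lim
  refine h_lim.congr' ?_
  filter_upwards [eventually_ne_atTop 0] with n hn
  exact (mul_chiSq_sbmPairMass hn).symm

lemma tendsto_one_sub_sqrt_div {g : ℕ → ℝ} {c : ℝ} (hg : Tendsto g atTop (nhds c)) (hc : 0 < c)
    (K δ : ℝ) : Tendsto (fun n : ℕ => 1 - √(K / (√n * g n)) / δ) atTop (nhds 1) := by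
  have h_atTop : Tendsto (fun n : ℕ => √n * g n) atTop atTop :=
    (tendsto_sqrt_atTop.comp tendsto_natCast_atTop_atTop).atTop_mul_pos hc hg
  simpa using ((h_atTop.const_div_atTop K).sqrt.div_const δ).const_sub 1

end StochasticBlockModel

/-- **Theorem (Non-reconstruction, Theorem 5).**
If `τ < 1`, then for any two fixed distinct vertices `ρ` and `v`, the conditional
probability `ℙ_n(σ_ρ = +1 | G, L, σ_v = +1)`, viewed as a random variable of the
observed labeled graph, converges in probability to `1/2` as `n → ∞`. -/
theorem non_reconstruction
    {L : Type*} [Fintype L] (a b : ℝ) (ha : 0 < a) (hb : 0 < b)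
    (μ ν : L → ℝ) (hμ : IsProbVec μ) (hν : IsProbVec ν)
    (htau : tau a b μ ν < 1) (ρ v : ℕ) (hρv : ρ ≠ v) :
    ∀ ε : ℝ, 0 < ε →
      Filter.Tendsto (fun n : ℕ =>
        sbmGraphProb n a b μ ν
          {E | ∀ (hρ : ρ < n) (hv : v < n),
            |condTypeProb n a b μ ν ⟨ρ, hρ⟩ ⟨v, hv⟩ E - 1 / 2| ≤ ε})
        Filter.atTop (nhds 1) := by
  intro ε hε
  have h_chiSq := tendsto_mul_chiSq_sbmPairMass a b μ ν
  have h_event : ∀ᶠ n : ℕ in atTop,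
      ρ < n ∧ v < n ∧ (∀ s, IsProbVec (sbmPairMass n a b μ ν s)) ∧
        n * chiSq (sbmPairMass n a b μ ν) < 1 := by
    filter_upwards [eventually_gt_atTop ρ, eventually_gt_atTop v,
      tendsto_natCast_atTop_atTop.eventually_ge_atTop a,
      tendsto_natCast_atTop_atTop.eventually_ge_atTop b,
      h_chiSq.eventually_lt_const htau] with n hρ hv han hbn h_lt
    exact ⟨hρ, hv, isProbVec_sbmPairMass ha.le han hb.le hbn hμ hν, h_lt⟩
  refine tendsto_of_tendsto_of_tendsto_of_le_of_le'
    (tendsto_one_sub_sqrt_div (h_chiSq.const_sub 1) (sub_pos.2 htau) 4 (2 * ε))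
    tendsto_const_nhds ?_ ?_
  · filter_upwards [h_event] with n ⟨hρ, hv, hW, h_lt⟩
    have hvρ : (⟨v, hv⟩ : Fin n) ≠ ⟨ρ, hρ⟩ := by simpa using hρv.symm
    simpa only [hρ, hv, forall_true_left] using one_sub_le_sbmGraphProb hW h_lt hvρ hε
  · filter_upwards [h_event] with n ⟨_, _, hW, _⟩
    exact sbmGraphProb_le_one hW _

end LSBM
end
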